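/- arXiv:math/0612591 — 3 statements merged into one kernel-verified Lean document; each statement's English description precedes it below -/
import Mathlib

section
/- Let Π : B → A be an order-preserving map of finite posets such that (1) for every Y ∈ A the geometric realization of the subposet Π^{-1}(Y) = {Ŷ ∈ B : Π(Ŷ) = Y} is contractible, and (2) for every Y ∈ A and every T̂ ∈ B with Y ≥ Π(T̂), the geometric realization of the subposet Π^{-1}(Y | ≥ T̂) = {Ŷ ∈ B : Π(Ŷ) = Y and Ŷ ≥ T̂} is contractible. Then for every point z of the geometric realization |A|, the preimage |Π|^{-1}(z) under the induced continuous map |Π| : |B| → |A| is contractible. (Proposition 3.8 of the paper.) -/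
/-- The geometric realization of a poset `P` (the realization of the nerve of `P`, i.e. of
the order complex of `P`), modelled concretely as the space of finitely supported
"barycentric coordinate" functions: assignments of nonnegative weights summing to `1`
whose support is a chain of `P`.  It is topologized as a subspace of `P → ℝ` with the
product topology. -/
def PosetRealization (P : Type*) [Preorder P] : Set (P → ℝ) :=
  {f | (∀ p, 0 ≤ f p) ∧ (Function.support f).Finite ∧ ∑ᶠ p, f p = 1 ∧
      IsChain (· ≤ ·) (Function.support f)}

/-- The map of geometric realizations induced by a map of posets `g : P → Q`
(the realization of the induced simplicial map of nerves): a point with barycentric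
coordinates `f` is sent to the point whose weight at `q` is the total weight of the
fiber `g ⁻¹ {q}`. -/
noncomputable def inducedChainMap {P Q : Type*} (g : P → Q) (f : P → ℝ) : Q → ℝ :=
  fun q => ∑ᶠ p ∈ {p | g p = q}, f p

/-! The preimage of `z` consists of the weights on chains of `B` that sum to `z Y` over each `Y`.
It is built up along the finite chain `support z`: a point over `z` is a point `y` over the part of
`z` below the greatest element `Y` of `support z`, together with weights on a chain of elements over
`Y` that lie above `support y`. As `support y` has a greatest element (unless it is empty), those
elements have contractible realization, but they change abruptly when weights of `y` tend to zero.

Therefore `y` is first deformed by cutting off small weights, which only enlarges the set of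
elements allowed over `Y`. The set of elements whose weight reaches the cut-off is constant on
strata that can be filled in one after the other, and a contractible realization, being a
neighborhood retract of a Euclidean space, has the Tietze extension property. So weights over `Y`
can be chosen continuously in `y`, and any two choices are homotopic. This deforms the preimage of
`z` into a copy of the space of the points `y`, which is contractible by induction. -/

open Set Function Topology

universe u v

section Extension

variable {X : Type u} [TopologicalSpace X] [NormalSpace X] {S K : Set X}

/-- Near `Vᶜ` the contraction of `C` has been completed, so that it does not matter there that `k`
is not continuous. -/
theorem exists_continuousMap_eqOn_of_contractibleSpace {C : Type*} [TopologicalSpace C]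
    [ContractibleSpace C] {V : Set X} (hS : IsClosed S) (hV : IsOpen V) (hSV : S ⊆ V) {k : X → C}
    (hk : ContinuousOn k V) : ∃ g : C(X, C), EqOn g k S := by
  obtain ⟨c, ⟨H⟩⟩ := id_nullhomotopic C
  obtain ⟨W, hW, hSW, hWV⟩ := normal_exists_closure_subset hS hV hSV
  obtain ⟨φ, hφ0, hφ1, hφ⟩ := exists_continuous_zero_one_of_isClosed hS hW.isClosed_compl
    (disjoint_compl_right_iff_subset.2 hSW)
  let g : X → C := fun x => H (⟨φ x, hφ x⟩, k x)
  have hgV : ContinuousOn g V :=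
    H.continuous.comp_continuousOn ((by fun_prop : Continuous fun x => _).continuousOn.prodMk hk)
  have hgW : EqOn g (fun _ => c) (closure W)ᶜ := fun x hx => by
    have hx1 : (⟨φ x, hφ x⟩ : unitInterval) = 1 :=
      Subtype.ext (hφ1 fun hxW => hx (subset_closure hxW))
    simp [g, hx1]
  have hcover : V ∪ (closure W)ᶜ = univ :=
    univ_subset_iff.1 fun x _ => (em (x ∈ closure W)).imp (@hWV x) id
  refine ⟨⟨g, continuousOn_univ.1 (hcover ▸ hgV.union_of_isOpen
    (continuousOn_const.congr hgW) hV isClosed_closure.isOpen_compl)⟩, fun x hx => ?_⟩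
  have hx0 : (⟨φ x, hφ x⟩ : unitInterval) = 0 := Subtype.ext (hφ0 hx)
  simp [g, hx0]

theorem tietzeExtension_of_contractibleSpace_of_neighborhood_retract {E : Type v}
    [TopologicalSpace E] [TietzeExtension.{u} E] {C U : Set E} [ContractibleSpace C]
    (hU : IsOpen U) (hCU : C ⊆ U) {r : E → E} (hr : ContinuousOn r U) (hrC : MapsTo r U C)
    (hr_id : EqOn r id C) : TietzeExtension.{u} C where
  exists_restrict_eq' {X} _ _ S hS f := by
    obtain ⟨g, hg⟩ := ContinuousMap.exists_restrict_eq hS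
      ((ContinuousMap.mk Subtype.val continuous_subtype_val).comp f)
    have hgf (x : S) : g x = f x := DFunLike.congr_fun hg x
    have hr' (y : E) : ∃ c : C, y ∈ U → c = r y := by
      by_cases hy : y ∈ U
      · exact ⟨⟨r y, hrC hy⟩, fun _ => rfl⟩
      · exact ⟨Classical.arbitrary C, fun h => absurd h hy⟩
    choose r' hr' using hr'
    have hr'_cont : ContinuousOn r' U :=
      IsInducing.subtypeVal.continuousOn_iff.2 (hr.congr fun y hy => hr' y hy)
    obtain ⟨k, hk⟩ := exists_continuousMap_eqOn_of_contractibleSpace hS (hU.preimage g.continuous)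
      (fun x hx => hCU (by simp [hgf ⟨x, hx⟩]))
      (hr'_cont.comp g.continuous.continuousOn (mapsTo_preimage g U))
    refine ⟨k, ContinuousMap.ext fun x => (hk x.2).trans (Subtype.ext ?_)⟩
    have hxC : g x ∈ C := by simp [hgf x]
    rw [comp_apply, hr' _ (hCU hxC), hr_id hxC, id, hgf x]

theorem exists_continuousOn_union_eqOn_mapsTo {E : Type*} [TopologicalSpace E] {C : Set E}
    [TietzeExtension.{u} C] (hS : IsClosed S) (hK : IsClosed K) {f : X → E}
    (hf : ContinuousOn f S) (hfC : MapsTo f (S ∩ K) C) :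
    ∃ g : X → E, ContinuousOn g (S ∪ K) ∧ EqOn g f S ∧ MapsTo g K C := by
  classical
  obtain ⟨k, hkC, hk⟩ := ContinuousMap.exists_forall_mem_restrict_eq (hS.inter hK)
    (f := ⟨_, (hf.mono inter_subset_left).domRestrict⟩) (t := C) fun x => hfC x.2
  have hkf : EqOn k f (S ∩ K) := fun x hx => DFunLike.congr_fun hk ⟨x, hx⟩
  have hgS : EqOn (S.piecewise f k) f S := S.piecewise_eqOn f k
  have hgK : EqOn (S.piecewise f k) k K := fun x hx => by
    by_cases hxS : x ∈ S <;> simp [hxS, hkf ⟨_, hx⟩]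
  exact ⟨S.piecewise f k, (hf.congr hgS).union_of_isClosed
    (k.continuous.continuousOn.congr hgK) hS hK, hgS, fun x hx => hgK hx ▸ hkC x⟩

end Extension

section Selection

variable {Z : Type u} {E P : Type*} [TopologicalSpace Z] [TopologicalSpace E] [PartialOrder P]
  [Finite P] {π : Z → P} {C : P → Set E}

/-- The strata are treated from the top down: the part of a maximal remaining stratum is closed
together with what has been done, and the values over it lie in a single `C p`. -/
theorem exists_continuous_selection_eqOn [NormalSpace Z] (hπ : ∀ p, IsClosed {z | p ≤ π z})
    (hC : Antitone C) (hT : ∀ z, TietzeExtension.{u} (C (π z))) {S : Set Z} (hS : IsClosed S)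
    {f : Z → E} (hf : ContinuousOn f S) (hfC : ∀ z ∈ S, f z ∈ C (π z)) :
    ∃ g : C(Z, E), EqOn g f S ∧ ∀ z, g z ∈ C (π z) := by
  induction hR : π '' Sᶜ using WellFoundedLT.induction generalizing S f with
  | _ R ih =>
    obtain hempty | hne := R.eq_empty_or_nonempty
    · obtain rfl : S = univ := by simpa [hempty] using hR
      exact ⟨⟨f, continuousOn_univ.1 hf⟩, fun _ _ => rfl, fun z => hfC z trivial⟩
    obtain ⟨p, hp⟩ := R.toFinite.exists_maximal hne
    obtain ⟨z₀, hz₀, rfl⟩ := hR ▸ hp.prop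
    have hmax (z) (hz : π z₀ ≤ π z) (hzS : z ∉ S) : π z = π z₀ :=
      (hp.eq_of_le (hR ▸ mem_image_of_mem π hzS) hz).symm
    have := hT z₀
    obtain ⟨f', hf', hf'S, hf'K⟩ := exists_continuousOn_union_eqOn_mapsTo hS (hπ (π z₀)) hf
      fun z hz => hC hz.2 (hfC z hz.1)
    have hlt : π '' (S ∪ {z | π z₀ ≤ π z})ᶜ < R := by
      rw [← hR]
      refine (ssubset_iff_of_subset (image_mono (by grind))).2 ⟨π z₀, mem_image_of_mem π hz₀, ?_⟩
      rintro ⟨z, hz, hzz₀⟩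
      exact hz (Or.inr hzz₀.ge)
    obtain ⟨g, hg, hgC⟩ := ih _ hlt (hS.union (hπ (π z₀))) hf' (fun z hz => by
      by_cases hzS : z ∈ S
      · exact hf'S hzS ▸ hfC z hzS
      · have hzK := hz.resolve_left hzS
        exact hmax z hzK hzS ▸ hf'K hzK) rfl
    exact ⟨g, (hg.mono subset_union_left).trans hf'S, hgC⟩

theorem homotopicWith_of_forall_mem [NormalSpace (unitInterval × Z)]
    (hπ : ∀ p, IsClosed {z | p ≤ π z}) (hC : Antitone C)
    (hT : ∀ z, TietzeExtension.{u} (C (π z))) {g₀ g₁ : C(Z, E)} (hg₀ : ∀ z, g₀ z ∈ C (π z))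
    (hg₁ : ∀ z, g₁ z ∈ C (π z)) : g₀.HomotopicWith g₁ fun g => ∀ z, g z ∈ C (π z) := by
  classical
  let f : unitInterval × Z → E := fun x => if x.1 = 0 then g₀ x.2 else g₁ x.2
  have hf₀ : EqOn f (g₀ ∘ Prod.snd) {x | x.1 = 0} := fun x hx => if_pos hx
  have hf₁ : EqOn f (g₁ ∘ Prod.snd) {x | x.1 = 1} := fun x hx =>
    if_neg (hx.symm ▸ one_ne_zero : x.1 ≠ 0)
  have hclosed (t : unitInterval) : IsClosed {x : unitInterval × Z | x.1 = t} :=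
    isClosed_eq continuous_fst continuous_const
  obtain ⟨G, hGf, hGC⟩ := exists_continuous_selection_eqOn (π := fun x : unitInterval × Z => π x.2)
    (fun p => (hπ p).preimage continuous_snd) hC (fun x => hT x.2)
    ((hclosed 0).union (hclosed 1))
    (((by fun_prop : Continuous (g₀ ∘ Prod.snd)).continuousOn.congr hf₀).union_of_isClosed
      ((by fun_prop : Continuous (g₁ ∘ Prod.snd)).continuousOn.congr hf₁) (hclosed 0) (hclosed 1))
    (by
      rintro x (hx | hx)
      · exact hf₀ hx ▸ hg₀ x.2
      · exact hf₁ hx ▸ hg₁ x.2)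
  exact ⟨{  toContinuousMap := G
            map_zero_left := fun z => (hGf (Or.inl rfl)).trans (hf₀ rfl)
            map_one_left := fun z => (hGf (Or.inr rfl)).trans (hf₁ rfl)
            prop' := fun t z => hGC (t, z) }⟩

end Selection

section Contractible

theorem contractibleSpace_of_comp_homotopic_id {X Y : Type*} [TopologicalSpace X]
    [TopologicalSpace Y] [ContractibleSpace Y] {f : C(X, Y)} {g : C(Y, X)}
    (h : (g.comp f).Homotopic (.id X)) : ContractibleSpace X := by
  obtain ⟨x, hx⟩ := ((id_nullhomotopic Y).comp_right g).comp_left f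
  exact (contractible_iff_id_nullhomotopic X).2 ⟨x, h.symm.trans hx⟩

variable {X E : Type u} {P : Type*} [TopologicalSpace X] [TopologicalSpace E] [PartialOrder P]
  [Finite P] {D : X → Set E} {φ : C(X, X)} {π : X → P} {C : P → Set E}

/-- The fibers `D x` need not vary well with `x`, but after deforming the base by `φ` they may be
replaced by the sets `C (π x)`, among which continuous selections exist and are homotopic. -/
theorem contractibleSpace_total_of_homotopy_id [ContractibleSpace X] [Nonempty E] [NormalSpace X]
    [NormalSpace (unitInterval × {x : X × E // x.2 ∈ D x.1})]
    (H : (ContinuousMap.id X).Homotopy φ) (hH : ∀ t x, D x ⊆ D (H (t, x)))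
    (hπ : ∀ p, IsClosed {x | p ≤ π x}) (hC : Antitone C)
    (hT : ∀ x, TietzeExtension.{u} (C (π x))) (hDC : ∀ x, D x ⊆ C (π x))
    (hCD : ∀ x, C (π x) ⊆ D (φ x)) : ContractibleSpace {x : X × E // x.2 ∈ D x.1} := by
  obtain ⟨g, -, hg⟩ := exists_continuous_selection_eqOn hπ hC hT isClosed_empty
    (continuousOn_empty fun _ => Classical.arbitrary E) (by simp)
  let p : C({x : X × E // x.2 ∈ D x.1}, X) := ⟨fun x => x.1.1, by fun_prop⟩
  let q : C({x : X × E // x.2 ∈ D x.1}, E) := ⟨fun x => x.1.2, by fun_prop⟩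
  let r : C({x : X × E // x.2 ∈ D x.1}, {x : X × E // x.2 ∈ D x.1}) :=
    ⟨fun x => ⟨(φ (p x), q x), hCD _ (hDC _ x.2)⟩, by fun_prop⟩
  let s : C(X, {x : X × E // x.2 ∈ D x.1}) := ⟨fun x => ⟨(φ x, g x), hCD x (hg x)⟩, by fun_prop⟩
  obtain ⟨G⟩ := homotopicWith_of_forall_mem (g₀ := q) (g₁ := g.comp p)
    (fun K => (hπ K).preimage p.continuous) hC (fun x => hT (p x)) (fun x => hDC _ x.2)
    fun x => hg (p x)
  have base_deformed : (ContinuousMap.id _).Homotopic r :=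
    ⟨{  toFun x := ⟨(H (x.1, p x.2), q x.2), hH _ _ x.2.2⟩
        map_zero_left x := by simp [p, q]
        map_one_left x := by simp [r] }⟩
  have fiber_deformed : r.Homotopic (s.comp p) :=
    ⟨{  toFun x := ⟨(φ (p x.2), G x), hCD _ (G.prop x.1 x.2)⟩
        map_zero_left x := by simp [r]
        map_one_left x := by simp [s] }⟩
  exact contractibleSpace_of_comp_homotopic_id (base_deformed.trans fiber_deformed).symm

end Contractible

section ChainPart

variable {P : Type v} [Preorder P]

theorem mem_posetRealization_iff [Fintype P] {f : P → ℝ} :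
    f ∈ PosetRealization P ↔ 0 ≤ f ∧ ∑ p, f p = 1 ∧ IsChain (· ≤ ·) (support f) := by
  simp [PosetRealization, Pi.le_def, finsum_eq_sum_of_fintype, toFinite]

open Classical in
/-- The amount by which the weight of an element exceeds the total weight of the elements
incomparable with it, or zero. Up to normalization, this is the retraction of a neighborhood onto
`PosetRealization P`: of two incomparable elements only one can win. -/
noncomputable def chainPart [Fintype P] (f : P → ℝ) (p : P) : ℝ :=
  max 0 (f p - ∑ q with IncompRel (· ≤ ·) p q, |f q|)

variable [Fintype P]

theorem continuous_chainPart : Continuous (chainPart : (P → ℝ) → P → ℝ) := by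
  unfold chainPart
  fun_prop

theorem chainPart_nonneg (f : P → ℝ) : 0 ≤ chainPart f := fun _ => le_max_left _ _

theorem abs_lt_of_chainPart_ne_zero {f : P → ℝ} {p q : P} (hp : chainPart f p ≠ 0)
    (hpq : IncompRel (· ≤ ·) p q) : |f q| < f p := by
  classical
  have hpos : ∑ q with IncompRel (· ≤ ·) p q, |f q| < f p := by
    by_contra! h
    exact hp (max_eq_left (sub_nonpos.2 h))
  exact (Finset.single_le_sum (f := fun q => |f q|) (fun _ _ => abs_nonneg _)
    (Finset.mem_filter_univ q |>.2 hpq)).trans_lt hpos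

theorem isChain_support_chainPart (f : P → ℝ) : IsChain (· ≤ ·) (support (chainPart f)) := by
  intro p hp q hq _
  by_contra! h
  have hqp := abs_lt_of_chainPart_ne_zero hp ⟨h.1, h.2⟩
  have hpq := abs_lt_of_chainPart_ne_zero hq ⟨h.2, h.1⟩
  linarith [le_abs_self (f p), le_abs_self (f q)]

theorem chainPart_eq_self {f : P → ℝ} (hf : 0 ≤ f) (hch : IsChain (· ≤ ·) (support f)) :
    chainPart f = f := by
  classical
  ext p
  obtain hp | hp := eq_or_ne (f p) 0
  · simpa [chainPart, hp] using Finset.sum_nonneg fun _ _ => abs_nonneg _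
  · have hsum : ∑ q with IncompRel (· ≤ ·) p q, |f q| = 0 :=
      Finset.sum_eq_zero fun q hq => by
        obtain ⟨hpq, hqp⟩ := (Finset.mem_filter.1 hq).2
        by_contra h
        exact (hch.total hp (abs_ne_zero.1 h)).elim hpq hqp
    simpa [chainPart, hsum] using hf p

theorem tietzeExtension_posetRealization (P : Type v) [Preorder P] [Finite P]
    [ContractibleSpace (PosetRealization P)] : TietzeExtension.{u} (PosetRealization P) := by
  have := Fintype.ofFinite P
  have hcont : Continuous (chainPart : (P → ℝ) → P → ℝ) := continuous_chainPart
  refine tietzeExtension_of_contractibleSpace_of_neighborhood_retract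
    (U := {f | 0 < ∑ p, chainPart f p}) (r := fun f => (∑ p, chainPart f p)⁻¹ • chainPart f)
    (isOpen_lt continuous_const (by fun_prop)) (fun f hf => ?_) ?_ (fun f hf => ?_)
    fun f hf => ?_
  · obtain ⟨h0, hsum, hch⟩ := mem_posetRealization_iff.1 hf
    simp [chainPart_eq_self h0 hch, hsum]
  · have hne : ∀ f ∈ {f : P → ℝ | 0 < ∑ p, chainPart f p}, ∑ p, chainPart f p ≠ 0 :=
      fun f hf => hf.ne'
    fun_prop (disch := assumption)
  · have hpos : 0 < ∑ p, chainPart f p := hf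
    refine mem_posetRealization_iff.2 ⟨smul_nonneg (inv_nonneg.2 hpos.le) (chainPart_nonneg f), ?_,
      (isChain_support_chainPart f).mono (support_const_smul_subset _ _)⟩
    simp_rw [Pi.smul_apply, smul_eq_mul, ← Finset.mul_sum]
    exact inv_mul_cancel₀ hpos.ne'
  · obtain ⟨h0, hsum, hch⟩ := mem_posetRealization_iff.1 hf
    simp [chainPart_eq_self h0 hch, hsum]

end ChainPart

section ChainWeights

variable {B : Type v} [Preorder B]

/-- Nonnegative weights of total mass `c` on the elements of a chain contained in `S`: for finite
`B` and `c > 0`, a rescaled copy of the realization of `S`, inside the coordinate space of `B`. -/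
def chainWeights (S : Set B) (c : ℝ) : Set (B → ℝ) :=
  {g | 0 ≤ g ∧ IsChain (· ≤ ·) (support g) ∧ support g ⊆ S ∧ ∑ᶠ b, g b = c}

theorem antitone_chainWeights_inter_upperBounds (S : Set B) (c : ℝ) :
    Antitone fun K => chainWeights (S ∩ upperBounds K) c :=
  fun _ _ hK _ ⟨h0, hch, hS, hsum⟩ =>
    ⟨h0, hch, hS.trans (inter_subset_inter_right S (upperBounds_mono_set hK)), hsum⟩

variable [Finite B] {S : Set B} {c : ℝ}

theorem smul_extend_mem_chainWeights_iff (hc : 0 < c) {h : S → ℝ} :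
    c • extend Subtype.val h 0 ∈ chainWeights S c ↔ h ∈ PosetRealization S := by
  have hval (b : S) : extend Subtype.val h 0 (b : B) = h b := Subtype.val_injective.extend_apply ..
  have hsupp : support (c • extend Subtype.val h (0 : B → ℝ)) = Subtype.val '' support h := by
    rw [support_const_smul_of_ne_zero _ _ hc.ne', support_extend_zero Subtype.val_injective]
  have hnonneg : 0 ≤ c • extend Subtype.val h (0 : B → ℝ) ↔ ∀ b, 0 ≤ h b := by
    refine ⟨fun h0 b => ?_, fun h0 => smul_nonneg hc.le fun b => ?_⟩
    · simpa [hc] using h0 b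
    by_cases hb : b ∈ S
    · exact (h0 ⟨b, hb⟩).trans_eq (hval ⟨b, hb⟩).symm
    · simp [hb]
  have hsum : ∑ᶠ b, (c • extend Subtype.val h (0 : B → ℝ)) b = c * ∑ᶠ b, h b := by
    simp_rw [Pi.smul_apply, smul_eq_mul, ← mul_finsum, ← hval]
    rw [finsum_set_coe_eq_finsum_mem, finsum_mem_def, indicator_eq_self.2]
    rw [support_extend_zero Subtype.val_injective]
    exact Subtype.coe_image_subset _ _
  have hchain : IsChain (· ≤ ·) (Subtype.val '' support h) ↔ IsChain (· ≤ ·) (support h) :=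
    IsChain.image_relEmbedding_iff (φ := Subtype.relEmbedding (· ≤ ·) (· ∈ S))
  simp only [chainWeights, PosetRealization, mem_ofPred_eq, hsupp, hnonneg, hsum, hchain,
    mul_eq_left₀ hc.ne', Subtype.coe_image_subset, toFinite]
  tauto

theorem tietzeExtension_chainWeights (hc : 0 < c) [ContractibleSpace (PosetRealization S)] :
    TietzeExtension.{u} (chainWeights S c) := by
  have := tietzeExtension_posetRealization.{u} S
  have hinv {g : B → ℝ} (hg : g ∈ chainWeights S c) :
      c • extend Subtype.val (c⁻¹ • (g ∘ Subtype.val : S → ℝ)) 0 = g := by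
    ext b
    by_cases hb : b ∈ S
    · lift b to S using hb
      simp [hc.ne']
    · simp [hb, notMem_support.1 fun h => hb (hg.2.2.1 h)]
  have hext : Continuous fun h : S → ℝ => c • extend Subtype.val h (0 : B → ℝ) := by
    refine (continuous_pi fun b => ?_).const_smul c
    by_cases hb : b ∈ S
    · lift b to S using hb
      simpa only [Subtype.val_injective.extend_apply] using continuous_apply b
    · simpa [hb] using continuous_const
  let ι : C(chainWeights S c, PosetRealization S) :=
    { toFun g := ⟨_, (smul_extend_mem_chainWeights_iff hc).1 ((hinv g.2).symm ▸ g.2)⟩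
      continuous_toFun := by
        refine Continuous.subtype_mk (continuous_pi fun b => ?_) _
        exact ((continuous_apply (b : B)).comp continuous_subtype_val).const_smul c⁻¹ }
  let r : C(PosetRealization S, chainWeights S c) :=
    { toFun h := ⟨_, (smul_extend_mem_chainWeights_iff hc).2 h.2⟩
      continuous_toFun := (hext.comp continuous_subtype_val).subtype_mk _ }
  exact TietzeExtension.of_retract ι r (ContinuousMap.ext fun g => Subtype.ext (hinv g.2))

end ChainWeights

section InducedChainMap

variable {P Q : Type*} {g : P → Q} {f : P → ℝ}

theorem support_inducedChainMap_subset (g : P → Q) (f : P → ℝ) :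
    support (inducedChainMap g f) ⊆ g '' support f := fun q hq => by
  obtain ⟨p, hp, hfp⟩ := exists_ne_zero_of_finsum_mem_ne_zero hq
  exact ⟨p, hfp, hp⟩

theorem finsum_inducedChainMap (g : P → Q) (hf : (support f).Finite) :
    ∑ᶠ q, inducedChainMap g f q = ∑ᶠ p, f p := by
  classical
  have happly (q : Q) : inducedChainMap g f q = ∑ p ∈ hf.toFinset with g p = q, f p :=
    finsum_mem_eq_sum_filter f _ hf
  have hsupp : support (inducedChainMap g f) ⊆ hf.toFinset.image g := by
    simpa using support_inducedChainMap_subset g f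
  rw [finsum_eq_sum_of_support_subset _ hsupp, finsum_eq_sum f hf]
  simp_rw [happly]
  exact Finset.sum_fiberwise_of_maps_to (fun p => Finset.mem_image_of_mem g) f

theorem mapsTo_inducedChainMap [Preorder P] [Preorder Q] (hg : Monotone g) :
    MapsTo (inducedChainMap g) (PosetRealization P) (PosetRealization Q) :=
  fun f ⟨h0, hfin, hsum, hch⟩ =>
    ⟨fun _ => finsum_nonneg fun p => finsum_nonneg fun _ => h0 p,
      (hfin.image g).subset (support_inducedChainMap_subset g f),
      (finsum_inducedChainMap g hfin).trans hsum,
      (hch.image_of_map_rel _ _ g hg).mono (support_inducedChainMap_subset g f)⟩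

theorem inducedChainMap_comp_mul (g : P → Q) (u : Q → ℝ) (f : P → ℝ) :
    inducedChainMap g (u ∘ g * f) = u * inducedChainMap g f := by
  ext q
  calc inducedChainMap g (u ∘ g * f) q
    _ = ∑ᶠ p ∈ {p | g p = q}, u q * f p := finsum_mem_congr rfl fun p (hp : g p = q) => by simp [hp]
    _ = u q * inducedChainMap g f q := (mul_finsum_mem ..).symm

theorem inducedChainMap_indicator_preimage (g : P → Q) (T : Set Q) (f : P → ℝ) :
    inducedChainMap g (indicator (g ⁻¹' T) f) = indicator T (inducedChainMap g f) := by
  have hmul : indicator (g ⁻¹' T) f = indicator T 1 ∘ g * f := by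
    ext p
    by_cases hp : g p ∈ T <;> simp [hp]
  rw [hmul, inducedChainMap_comp_mul]
  ext q
  by_cases hq : q ∈ T <;> simp [hq]

theorem inducedChainMap_eq_indicator {q : Q} (hf : support f ⊆ g ⁻¹' {q}) :
    inducedChainMap g f = indicator {q} fun _ => ∑ᶠ p, f p := by
  have hind : indicator (g ⁻¹' {q}) f = f := indicator_eq_self.2 hf
  calc inducedChainMap g f
    _ = indicator {q} (inducedChainMap g f) := by
      rw [← inducedChainMap_indicator_preimage, hind]
    _ = indicator {q} fun _ => ∑ᶠ p, f p := indicator_congr fun a (ha : a = q) =>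
      ha ▸ (finsum_mem_def _ _).trans (finsum_congr (congrFun hind))

theorem inducedChainMap_smul (g : P → Q) (c : ℝ) (f : P → ℝ) :
    inducedChainMap g (c • f) = c • inducedChainMap g f :=
  inducedChainMap_comp_mul g (Function.const Q c) f

variable [Finite P]

theorem inducedChainMap_add (g : P → Q) (f₁ f₂ : P → ℝ) :
    inducedChainMap g (f₁ + f₂) = inducedChainMap g f₁ + inducedChainMap g f₂ :=
  funext fun _ => finsum_mem_add_distrib (toFinite _)

theorem continuous_inducedChainMap (g : P → Q) : Continuous (inducedChainMap g) := by
  refine continuous_pi fun q => ?_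
  simp_rw [inducedChainMap, finsum_mem_eq_finite_toFinset_sum _ (toFinite _)]
  fun_prop

theorem le_inducedChainMap_apply (hf : 0 ≤ f) (p : P) : f p ≤ inducedChainMap g f (g p) := by
  rw [inducedChainMap, finsum_mem_eq_finite_toFinset_sum _ (toFinite _)]
  exact Finset.single_le_sum (fun p _ => hf p) (by simp)

end InducedChainMap

section WeightedFiber

variable {A : Type*} {B : Type v} [Preorder B] {F : B → A} {w : A → ℝ} {f : B → ℝ}

/-- Nonnegative weights on the elements of a chain of `B` which have total weight `w Y` over every
`Y`. For `w ∈ PosetRealization A` and finite `B`, this is the fiber over `w` of the map of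
realizations induced by `F`. -/
def weightedFiber (F : B → A) (w : A → ℝ) : Set (B → ℝ) :=
  {f | 0 ≤ f ∧ IsChain (· ≤ ·) (support f) ∧ inducedChainMap F f = w}

theorem indicator_preimage_mem_weightedFiber (hf : f ∈ weightedFiber F w) (T : Set A) :
    indicator (F ⁻¹' T) f ∈ weightedFiber F (indicator T w) := by
  obtain ⟨h0, hch, hw⟩ := hf
  exact ⟨indicator_nonneg fun b _ => h0 b, hch.mono (by simp [support_indicator]),
    hw ▸ inducedChainMap_indicator_preimage F T f⟩

variable [Finite B]

theorem apply_ne_zero_of_mem_weightedFiber (hf : f ∈ weightedFiber F w) {b : B}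
    (hb : b ∈ support f) : F b ∈ support w := by
  obtain ⟨h0, -, rfl⟩ := hf
  exact (((h0 b).lt_of_ne' hb).trans_le (le_inducedChainMap_apply h0 b)).ne'

theorem convex_weightedFiber_inter (w : A → ℝ) {K : Set B} (hK : IsChain (· ≤ ·) K) :
    Convex ℝ (weightedFiber F w ∩ {f | support f ⊆ K}) := by
  rintro f ⟨⟨hf0, -, hfw⟩, hfK⟩ g ⟨⟨hg0, -, hgw⟩, hgK⟩ a b ha hb hab
  have hsupp : support (a • f + b • g) ⊆ K := (support_add _ _).trans <|
    union_subset ((support_const_smul_subset a f).trans hfK)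
      ((support_const_smul_subset b g).trans hgK)
  refine ⟨⟨add_nonneg (smul_nonneg ha hf0) (smul_nonneg hb hg0), hK.mono hsupp, ?_⟩, hsupp⟩
  rw [inducedChainMap_add, inducedChainMap_smul, inducedChainMap_smul, hfw, hgw, ← add_smul, hab,
    one_smul]

theorem add_mem_weightedFiber {Y : A} {y g : B → ℝ}
    (hy : y ∈ weightedFiber F (indicator {Y}ᶜ w))
    (hg : g ∈ chainWeights (F ⁻¹' {Y} ∩ upperBounds (support y)) (w Y)) :
    y + g ∈ weightedFiber F w := by
  obtain ⟨hy0, hych, hyw⟩ := hy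
  obtain ⟨hg0, hgch, hgsupp, hgsum⟩ := hg
  refine ⟨add_nonneg hy0 hg0, ?_, ?_⟩
  · refine (isChain_union.2 ⟨hych, hgch, fun a ha b hb _ => Or.inl ?_⟩).mono (support_add y g)
    exact (hgsupp hb).2 ha
  · have hw : indicator {Y} (fun _ => w Y) = indicator {Y} w :=
      indicator_congr fun a (ha : a = Y) => ha ▸ rfl
    rw [inducedChainMap_add, hyw, inducedChainMap_eq_indicator (hgsupp.trans inter_subset_left),
      hgsum, hw, indicator_compl_add_self]

end WeightedFiber

section Truncation

variable {A : Type*} {B : Type v} {F : B → A} {w : A → ℝ} {f : B → ℝ}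

/-- The elements whose weight is at least a fixed share of the total weight `w` prescribed over
their image. In contrast to the support, this set depends upper semicontinuously on `f`; the share
is so small that the set meets every fiber of `F` that carries weight. -/
def heavyPart (F : B → A) (w : A → ℝ) (f : B → ℝ) : Set B :=
  {b | w (F b) ≠ 0 ∧ w (F b) / (Nat.card B + 1) ≤ f b}

/-- The amount by which each weight exceeds the threshold of `heavyPart`, or zero. -/
noncomputable def excess (F : B → A) (w : A → ℝ) (f : B → ℝ) (b : B) : ℝ :=
  max 0 (f b - w (F b) / (Nat.card B + 1))

/-- The excess, rescaled over each `Y` to have total weight `w Y`. -/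
noncomputable def truncation (F : B → A) (w : A → ℝ) (f : B → ℝ) : B → ℝ :=
  (w / inducedChainMap F (excess F w f)) ∘ F * excess F w f

theorem isClosed_setOf_subset_heavyPart (F : B → A) (w : A → ℝ) (K : Set B) :
    IsClosed {f | K ⊆ heavyPart F w f} := by
  simp only [heavyPart, subset_def, mem_ofPred_eq, ofPred_forall]
  exact isClosed_biInter fun b _ =>
    isClosed_const.inter (isClosed_le continuous_const (continuous_apply b))

theorem excess_nonneg (F : B → A) (w : A → ℝ) (f : B → ℝ) : 0 ≤ excess F w f :=
  fun _ => le_max_left _ _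

theorem continuous_excess (F : B → A) (w : A → ℝ) : Continuous (excess F w) := by
  unfold excess
  fun_prop

theorem support_truncation_subset_heavyPart (F : B → A) (w : A → ℝ) (f : B → ℝ) :
    support (truncation F w f) ⊆ heavyPart F w f := by
  intro b hb
  have hw : w (F b) ≠ 0 := fun h => hb (by simp [truncation, h])
  have he : excess F w f b ≠ 0 := fun h => hb (by simp [truncation, h])
  refine ⟨hw, ?_⟩
  by_contra! hlt
  exact he (max_eq_left (sub_nonpos.2 hlt.le))

variable [Preorder B]

theorem nonneg_of_mem_weightedFiber (hf : f ∈ weightedFiber F w) : 0 ≤ w := by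
  obtain ⟨h0, -, rfl⟩ := hf
  exact fun Y => finsum_nonneg fun b => finsum_nonneg fun _ => h0 b

theorem heavyPart_subset_support (hf : f ∈ weightedFiber F w) : heavyPart F w f ⊆ support f := by
  rintro b ⟨hne, hle⟩
  have hpos : 0 < w (F b) := (nonneg_of_mem_weightedFiber hf _).lt_of_ne' hne
  exact ((by positivity : 0 < w (F b) / (Nat.card B + 1)).trans_le hle).ne'

variable [Finite B]

theorem exists_lt_apply_of_mem_weightedFiber (hf : f ∈ weightedFiber F w) {Y : A} (hY : 0 < w Y) :
    ∃ b, F b = Y ∧ w Y / (Nat.card B + 1) < f b := by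
  have := Fintype.ofFinite B
  by_contra! h
  let s := (toFinite {b | F b = Y}).toFinset
  have hcard : (s.card : ℝ) < Nat.card B + 1 := by
    rw [Nat.card_eq_fintype_card]
    exact_mod_cast Nat.lt_succ_of_le s.card_le_univ
  have : w Y < w Y := calc w Y
    _ = ∑ b ∈ s, f b := by
      rw [← hf.2.2]
      exact finsum_mem_eq_finite_toFinset_sum f _
    _ ≤ s.card * (w Y / (Nat.card B + 1)) := by
      rw [← nsmul_eq_mul]
      exact Finset.sum_le_card_nsmul _ _ _ fun b hb => h b (by simpa [s] using hb)
    _ < (Nat.card B + 1) * (w Y / (Nat.card B + 1)) := by gcongr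
    _ = w Y := by field_simp
  exact this.false

theorem inducedChainMap_excess_pos (hf : f ∈ weightedFiber F w) {Y : A} (hY : w Y ≠ 0) :
    0 < inducedChainMap F (excess F w f) Y := by
  obtain ⟨b, rfl, hb⟩ := exists_lt_apply_of_mem_weightedFiber hf
    ((nonneg_of_mem_weightedFiber hf Y).lt_of_ne' hY)
  exact (lt_max_of_lt_right (sub_pos.2 hb)).trans_le
    (le_inducedChainMap_apply (excess_nonneg F w f) b)

theorem truncation_mem_weightedFiber (hf : f ∈ weightedFiber F w) :
    truncation F w f ∈ weightedFiber F w := by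
  have hN : 0 ≤ inducedChainMap F (excess F w f) :=
    fun Y => finsum_nonneg fun b => finsum_nonneg fun _ => excess_nonneg F w f b
  refine ⟨fun b => mul_nonneg (div_nonneg (nonneg_of_mem_weightedFiber hf _) (hN _))
    (excess_nonneg F w f b), hf.2.1.mono ((support_truncation_subset_heavyPart F w f).trans
      (heavyPart_subset_support hf)), ?_⟩
  ext Y
  rw [truncation, inducedChainMap_comp_mul]
  exact div_mul_cancel_of_imp fun hY => by_contra fun h => (inducedChainMap_excess_pos hf h).ne' hY

theorem continuousOn_truncation (F : B → A) (w : A → ℝ) :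
    ContinuousOn (truncation F w) (weightedFiber F w) := by
  have hN : Continuous fun f => inducedChainMap F (excess F w f) :=
    (continuous_inducedChainMap F).comp (continuous_excess F w)
  refine continuousOn_pi.2 fun b => ?_
  obtain hb | hb := eq_or_ne (w (F b)) 0
  · exact (continuousOn_const (c := 0)).congr fun f _ => by simp [truncation, hb]
  · exact (continuousOn_const.div ((continuous_apply (F b)).comp hN).continuousOn
      fun f hf => (inducedChainMap_excess_pos hf hb).ne').mul
      ((continuous_apply b).comp (continuous_excess F w)).continuousOn

theorem exists_homotopy_id_support_subset_heavyPart (F : B → A) (w : A → ℝ) :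
    ∃ (φ : C(weightedFiber F w, weightedFiber F w)) (H : (ContinuousMap.id _).Homotopy φ),
      (∀ f, support (φ f).1 ⊆ heavyPart F w f) ∧ ∀ t f, support (H (t, f)).1 ⊆ support f.1 := by
  let φ : C(weightedFiber F w, weightedFiber F w) :=
    ⟨fun f => ⟨truncation F w f, truncation_mem_weightedFiber f.2⟩,
      (continuousOn_iff_continuous_domRestrict.1 (continuousOn_truncation F w)).subtype_mk _⟩
  have hφ (f) : support (φ f).1 ⊆ heavyPart F w f := support_truncation_subset_heavyPart F w f
  have hmem (t : unitInterval) (f : weightedFiber F w) : AffineMap.lineMap f.1 (φ f).1 (t : ℝ) ∈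
      weightedFiber F w ∩ {g | support g ⊆ support f.1} :=
    (convex_weightedFiber_inter w f.2.2.1).lineMap_mem ⟨f.2, Subset.rfl⟩
      ⟨(φ f).2, (hφ f).trans (heavyPart_subset_support f.2)⟩ t.2
  let H : (ContinuousMap.id _).Homotopy φ :=
    { toFun x := ⟨_, (hmem x.1 x.2).1⟩
      continuous_toFun := by
        simp only [AffineMap.lineMap_apply_module]
        fun_prop
      map_zero_left f := by simp
      map_one_left f := by simp }
  exact ⟨φ, H, hφ, fun t f => (hmem t f).2⟩

end Truncation

section Join

variable {A : Type*} {B : Type u} [Preorder B] [Finite B] {F : B → A} {w : A → ℝ}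

theorem indicator_mem_chainWeights [PartialOrder A] (hF : Monotone F) {Y : A}
    (hY : Y ∈ upperBounds (support w)) {x : B → ℝ} (hx : x ∈ weightedFiber F w) :
    indicator (F ⁻¹' {Y}) x ∈
      chainWeights (F ⁻¹' {Y} ∩ upperBounds (support (indicator (F ⁻¹' {Y}ᶜ) x))) (w Y) := by
  obtain ⟨h0, hch, hw⟩ := id hx
  refine ⟨indicator_nonneg fun b _ => h0 b, hch.mono (by simp [support_indicator]), ?_, ?_⟩
  · rw [support_indicator, support_indicator]
    rintro b ⟨rfl, hb⟩
    refine ⟨rfl, fun a ⟨haY, ha⟩ => (hch.total ha hb).resolve_right fun hba => haY ?_⟩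
    exact (hY (apply_ne_zero_of_mem_weightedFiber hx ha)).antisymm (hF hba)
  · rw [← finsum_mem_def, ← hw]
    rfl

theorem contractibleSpace_total_chainWeights {S : Set B} {c : ℝ} (hc : 0 < c)
    [ContractibleSpace (weightedFiber F w)]
    (hlink : ∀ K : Set B, IsChain (· ≤ ·) K → MapsTo F K (support w) →
      ContractibleSpace (PosetRealization ↥(S ∩ upperBounds K))) :
    ContractibleSpace {x : weightedFiber F w × (B → ℝ) //
      x.2 ∈ chainWeights (S ∩ upperBounds (support x.1.1)) c} := by
  have := Fintype.ofFinite B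
  have hantitone := antitone_chainWeights_inter_upperBounds S c
  obtain ⟨φ, H, hφ, hH⟩ := exists_homotopy_id_support_subset_heavyPart F w
  have hT (y : weightedFiber F w) :
      TietzeExtension.{u} (chainWeights (S ∩ upperBounds (heavyPart F w y)) c) := by
    have hsupp := heavyPart_subset_support y.2
    have := hlink _ (y.2.2.1.mono hsupp) fun b hb =>
      apply_ne_zero_of_mem_weightedFiber y.2 (hsupp hb)
    exact tietzeExtension_chainWeights hc
  exact contractibleSpace_total_of_homotopy_id H (fun t y => hantitone (hH t y))
    (fun K => (isClosed_setOf_subset_heavyPart F w K).preimage continuous_subtype_val)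
    hantitone hT (fun y => hantitone (heavyPart_subset_support y.2)) fun y => hantitone (hφ y)

theorem contractibleSpace_weightedFiber_of_indicator_compl [PartialOrder A] (hF : Monotone F)
    {Y : A} (hY : 0 < w Y) (hwY : Y ∈ upperBounds (support w))
    (hlink : ∀ K : Set B, IsChain (· ≤ ·) K → MapsTo F K (support (indicator {Y}ᶜ w)) →
      ContractibleSpace (PosetRealization ↥(F ⁻¹' {Y} ∩ upperBounds K)))
    [ContractibleSpace (weightedFiber F (indicator {Y}ᶜ w))] :
    ContractibleSpace (weightedFiber F w) := by
  have := contractibleSpace_total_chainWeights hY hlink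
  have hcont (T : Set B) : Continuous (indicator T : (B → ℝ) → B → ℝ) :=
    continuous_pi fun b => by
      by_cases hb : b ∈ T
      · simpa [hb] using continuous_apply b
      · simpa [hb] using continuous_const
  let split : C(weightedFiber F w, {x : weightedFiber F (indicator {Y}ᶜ w) × (B → ℝ) //
      x.2 ∈ chainWeights (F ⁻¹' {Y} ∩ upperBounds (support x.1.1)) (w Y)}) :=
    { toFun x := ⟨(⟨indicator (F ⁻¹' {Y}ᶜ) x, indicator_preimage_mem_weightedFiber x.2 {Y}ᶜ⟩,
        indicator (F ⁻¹' {Y}) x), indicator_mem_chainWeights hF hwY x.2⟩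
      continuous_toFun :=
        ((((hcont _).comp continuous_subtype_val).subtype_mk _).prodMk
          ((hcont _).comp continuous_subtype_val)).subtype_mk _ }
  let join : C({x : weightedFiber F (indicator {Y}ᶜ w) × (B → ℝ) //
      x.2 ∈ chainWeights (F ⁻¹' {Y} ∩ upperBounds (support x.1.1)) (w Y)}, weightedFiber F w) :=
    { toFun x := ⟨x.1.1 + x.1.2, add_mem_weightedFiber x.1.1.2 x.2⟩ }
  have hjoin : join.comp split = .id _ :=
    ContinuousMap.ext fun x => Subtype.ext (indicator_compl_add_self (F ⁻¹' {Y}) x.1)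
  exact contractibleSpace_of_comp_homotopic_id (f := split) (g := join) (by rw [hjoin])

end Join

theorem exists_isGreatest_of_isChain {P : Type*} [Preorder P] {K : Set P}
    (hK : IsChain (· ≤ ·) K) (hfin : K.Finite) (hne : K.Nonempty) : ∃ T, IsGreatest K T := by
  obtain ⟨T, hT⟩ := hfin.exists_maximal hne
  exact ⟨T, hT.prop, fun a ha => (hK.total ha hT.prop).elim id fun h => hT.le_of_ge ha h⟩

section Main

variable {A B : Type*} [Preorder B] {F : B → A} {w : A → ℝ}

theorem contractibleSpace_posetRealization_fiber_inter_upperBounds [Finite B] {Y : A} {K : Set B}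
    (hK : IsChain (· ≤ ·) K) (h1 : ContractibleSpace (PosetRealization {Z : B // F Z = Y}))
    (h2 : ∀ T ∈ K, ContractibleSpace (PosetRealization {Z : B // F Z = Y ∧ T ≤ Z})) :
    ContractibleSpace (PosetRealization ↥(F ⁻¹' {Y} ∩ upperBounds K)) := by
  obtain rfl | hne := K.eq_empty_or_nonempty
  · rw [upperBounds_empty, inter_univ]
    exact h1
  · obtain ⟨T, hT⟩ := exists_isGreatest_of_isChain hK K.toFinite hne
    rw [hT.upperBounds_eq]
    exact h2 T hT.1

theorem weightedFiber_zero [Finite B] (F : B → A) : weightedFiber F 0 = {0} := by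
  refine eq_singleton_iff_unique_mem.2 ⟨⟨le_rfl, by simp, ?_⟩, fun f ⟨h0, _, hf⟩ => ?_⟩
  · exact funext fun Y => by simp [inducedChainMap]
  · ext b
    exact ((le_inducedChainMap_apply h0 b).trans_eq (congrFun hf (F b))).antisymm (h0 b)

theorem contractibleSpace_weightedFiber [PartialOrder A] [Finite B] (hF : Monotone F)
    (hw : 0 ≤ w) (hfin : (support w).Finite) (hch : IsChain (· ≤ ·) (support w))
    (h1 : ∀ Y ∈ support w, ContractibleSpace (PosetRealization {Z : B // F Z = Y}))
    (h2 : ∀ Y ∈ support w, ∀ T, F T ∈ support w → F T < Y →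
      ContractibleSpace (PosetRealization {Z : B // F Z = Y ∧ T ≤ Z})) :
    ContractibleSpace (weightedFiber F w) := by
  induction hs : hfin.toFinset using Finset.strongInduction generalizing w with
  | H s ih =>
    obtain hempty | hne := (support w).eq_empty_or_nonempty
    · rw [support_eq_empty_iff.1 hempty, weightedFiber_zero]
      infer_instance
    obtain ⟨Y, hY, hwY⟩ := exists_isGreatest_of_isChain hch hfin hne
    have hsupp : support (indicator {Y}ᶜ w) = {Y}ᶜ ∩ support w := support_indicator
    have hsub : support (indicator {Y}ᶜ w) ⊆ support w := hsupp ▸ inter_subset_right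
    have hssub : support (indicator {Y}ᶜ w) ⊂ support w := hsub.ssubset_of_mem_notMem hY (by simp)
    have := ih (hfin.subset hsub).toFinset (hs ▸ Finite.toFinset_ssubset_toFinset.2 hssub)
      (indicator_nonneg fun a _ => hw a) (hfin.subset hsub) (hch.mono hsub)
      (fun X hX => h1 X (hsub hX)) (fun X hX T hT => h2 X (hsub hX) T (hsub hT)) rfl
    refine contractibleSpace_weightedFiber_of_indicator_compl hF ((hw Y).lt_of_ne' hY) hwY
      fun K hK hKw => contractibleSpace_posetRealization_fiber_inter_upperBounds hK (h1 Y hY)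
        fun T hT => ?_
    have hTw := hsupp ▸ hKw hT
    exact h2 Y hY T hTw.2 ((hwY hTw.2).lt_of_ne hTw.1)

theorem weightedFiber_eq_inter_preimage [Preorder A] [Finite B] (z : PosetRealization A) :
    weightedFiber F z = PosetRealization B ∩ inducedChainMap F ⁻¹' {z.1} := by
  ext f
  refine ⟨fun ⟨h0, hch, hf⟩ => ⟨⟨h0, toFinite _, ?_, hch⟩, hf⟩, fun ⟨⟨h0, _, _, hch⟩, hf⟩ =>
    ⟨h0, hch, hf⟩⟩
  rw [← finsum_inducedChainMap F (toFinite _), hf, z.2.2.2.1]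

theorem contractible_fibers_realization_of_contractible_poset_fibers_general
    [PartialOrder A] [Finite B] (hF : Monotone F) (z : PosetRealization A)
    (h1 : ∀ Y ∈ support z.1, ContractibleSpace (PosetRealization {Z : B // F Z = Y}))
    (h2 : ∀ Y ∈ support z.1, ∀ T, F T ∈ support z.1 → F T < Y →
      ContractibleSpace (PosetRealization {Z : B // F Z = Y ∧ T ≤ Z})) :
    ContractibleSpace ↥((mapsTo_inducedChainMap hF).restrict ⁻¹' {z}) := by
  obtain ⟨h0, hfin, -, hch⟩ := z.2
  have := contractibleSpace_weightedFiber hF h0 hfin hch h1 h2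
  have himage : Subtype.val '' ((mapsTo_inducedChainMap hF).restrict ⁻¹' {z}) =
      weightedFiber F z := by
    rw [weightedFiber_eq_inter_preimage, ← Subtype.image_preimage_coe]
    exact congrArg _ (ext fun f => Subtype.ext_iff)
  exact ((IsEmbedding.subtypeVal.homeomorphImage _).trans (.setCongr himage)).contractibleSpace

end Main

/-- **Proposition 3.8.** Let `F : B → A` be an order-preserving map of finite posets such
that (1) every fiber `F⁻¹(Y)` has contractible realization, and (2) every subposet
`F⁻¹(Y | ≥ T) = {Z : F Z = Y and Z ≥ T}` (for `Y ≥ F T`) has contractible realization.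
Then the preimage of every point under the induced continuous map `|F| : |B| → |A|` of
geometric realizations is contractible. -/
theorem contractible_fibers_realization_of_contractible_poset_fibers
    (A B : Type) [PartialOrder A] [PartialOrder B] [Fintype A] [Fintype B]
    (F : B → A) (hF : Monotone F)
    (h1 : ∀ Y : A, ContractibleSpace ↥(PosetRealization {Z : B // F Z = Y}))
    (h2 : ∀ (Y : A) (T : B), F T ≤ Y →
      ContractibleSpace ↥(PosetRealization {Z : B // F Z = Y ∧ T ≤ Z})) :
    ∃ h : Set.MapsTo (inducedChainMap F) (PosetRealization B) (PosetRealization A),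
      Continuous h.restrict ∧
        ∀ z : ↥(PosetRealization A), ContractibleSpace ↥(h.restrict ⁻¹' {z}) :=
  ⟨mapsTo_inducedChainMap hF, (continuous_inducedChainMap F).restrict _, fun z =>
    contractible_fibers_realization_of_contractible_poset_fibers_general hF z (fun Y _ => h1 Y)
      fun Y _ T _ hT => h2 Y T hT.le⟩
end

section
/- For every n ≥ 1 there exists a continuous map π_n : Cycl_n → Assoc_n satisfying π_n ∘ β_n = α_n on Δ^n; such a map is unique, and the preimage π_n^{-1}(x) of every point x ∈ Assoc_n is contractible. (Theorem 2 of the paper.) -/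
open scoped ENNReal

/-- The open configuration space `Δ^n = {0 < t 1 < … < t n < 1}` of `n` points in `(0,1)`. -/
def openSimplex (n : ℕ) : Set (Fin n → ℝ) :=
  {t | (∀ i j : Fin n, i < j → t i < t j) ∧ (∀ i, 0 < t i) ∧ ∀ i, t i < 1}

/-- Extension of a configuration `t : Fin n → ℝ` by the boundary conventions
`t 0 = 0` and `t (n+1) = 1`, giving a function on `Fin (n+2)`. -/
def ext01 {n : ℕ} (t : Fin n → ℝ) : Fin (n + 2) → ℝ :=
  Fin.cons 0 (Fin.snoc t 1)

/-- Extension of a configuration `t : Fin n → ℝ` by the convention `t 0 = 0` only,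
giving a function on `Fin (n+1)`. -/
def ext0 {n : ℕ} (t : Fin n → ℝ) : Fin (n + 1) → ℝ :=
  Fin.cons 0 t

/-- The index set `T_n` of triples `0 ≤ i < j < k ≤ n+1`. -/
abbrev TriIdx (n : ℕ) : Type :=
  {p : Fin (n + 2) × Fin (n + 2) × Fin (n + 2) // p.1 < p.2.1 ∧ p.2.1 < p.2.2}

/-- The map `α_n : Δ^n → [0,1]^{T_n}`, `s_{ijk} = (t_j − t_i)/(t_k − t_i)`
(with `t_0 = 0`, `t_{n+1} = 1`), whose image's closure is the associahedron. -/
noncomputable def alphaMap (n : ℕ) (t : Fin n → ℝ) : TriIdx n → ℝ := fun q =>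
  (ext01 t q.1.2.1 - ext01 t q.1.1) / (ext01 t q.1.2.2 - ext01 t q.1.1)

/-- The `n`-dimensional associahedron: the closure of `α_n(Δ^n)`. -/
noncomputable def Assoc (n : ℕ) : Set (TriIdx n → ℝ) :=
  closure (alphaMap n '' openSimplex n)

/-- The index set `S_n` of triples of pairwise distinct elements of `{0, 1, …, n}`. -/
abbrev TripleIdx (n : ℕ) : Type :=
  {p : Fin (n + 1) × Fin (n + 1) × Fin (n + 1) // p.1 ≠ p.2.1 ∧ p.1 ≠ p.2.2 ∧ p.2.1 ≠ p.2.2}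

/-- `s̃_{kℓm}(t) = |sin π(t_ℓ − t_k)| / |sin π(t_m − t_k)| ∈ [0, +∞]`
(with the convention `t_0 = 0`). -/
noncomputable def sTilde (n : ℕ) (t : Fin n → ℝ) : TripleIdx n → ℝ≥0∞ := fun q =>
  ENNReal.ofReal |Real.sin (Real.pi * (ext0 t q.1.2.1 - ext0 t q.1.1))| /
    ENNReal.ofReal |Real.sin (Real.pi * (ext0 t q.1.2.2 - ext0 t q.1.1))|

/-- The map `β_n : Δ^n → Δ̄^n × [0,+∞]^{S_n}`. -/
noncomputable def betaMap (n : ℕ) (t : Fin n → ℝ) : (Fin n → ℝ) × (TripleIdx n → ℝ≥0∞) :=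
  (t, sTilde n t)

/-- The `n`-dimensional cyclohedron: the closure of `β_n(Δ^n)`. -/
noncomputable def Cycl (n : ℕ) : Set ((Fin n → ℝ) × (TripleIdx n → ℝ≥0∞)) :=
  closure (betaMap n '' openSimplex n)

/-
Adjoin to `α_n` the shares `d / (d + d')` of the distances `d` of the points to the left end of
`[0, 1]` against their distances `d'` to the right end, and call the result `γ_n`. For three arcs
`x + y + z = 1` of the circle, the pairwise shares of the arcs converge if and only if those of the
chords `sin πx`, `sin πy`, `sin πz` do. Hence `γ_n` and `β_n` converge along the same filters on
`Δ^n`, the closure of the image of `γ_n` is homeomorphic to `Cycl_n`, and `π_n` becomes the first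
projection.

A point `x` of `Assoc_n` determines the shares among the distances to the left end and those among
the distances to the right end. The fiber over `x` consists of all ways to glue these two matrices
of shares: to realize a gluing, rescale the distances of a configuration near `x` at both ends, with
one factor for each order of magnitude. The set of gluings is closed under pointwise suprema and
contains a path from its least to its greatest element, so it is contractible.
-/

open Filter Topology

section Share

/-- The share of `x` in the total of the two quantities `x` and `y`. -/
noncomputable def share (x y : ℝ) : ℝ := x / (x + y)

theorem share_nonneg {x y : ℝ} (hx : 0 ≤ x) (hy : 0 ≤ y) : 0 ≤ share x y :=
  div_nonneg hx (add_nonneg hx hy)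

theorem share_pos {x y : ℝ} (hx : 0 < x) (hy : 0 < y) : 0 < share x y :=
  div_pos hx (add_pos hx hy)

theorem share_self {x : ℝ} (hx : x ≠ 0) : share x x = 1 / 2 := by
  rw [share, ← two_mul, div_mul_cancel_right₀ hx, one_div]

theorem share_add_share_comm {x y : ℝ} (h : x + y ≠ 0) : share x y + share y x = 1 := by
  rw [share, share, add_comm y x, ← add_div, div_self h]

theorem eq_share_of_mul_eq {x y u v : ℝ} (h : x + y ≠ 0) (huv : u + v = 1)
    (hmul : u * y = v * x) : u = share x y := by
  rw [share, eq_div_iff h]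
  linear_combination hmul + x * huv

theorem tendsto_share {T : Type*} {F : Filter T} {A B : T → ℝ} {a b : ℝ}
    (hA : Tendsto A F (𝓝 a)) (hB : Tendsto B F (𝓝 b)) (h : a + b ≠ 0) :
    Tendsto (fun t => share (A t) (B t)) F (𝓝 (share a b)) :=
  hA.div (hA.add hB) h

end Share

section ShareMatrix

variable {I : Type*} {M : I → I → ℝ}

/-- The relations satisfied by the shares `share (d a) (d b)` of a family of positive quantities,
and by limits of such matrices of shares. -/
structure IsShareMatrix (M : I → I → ℝ) : Prop where
  nonneg : ∀ a b, 0 ≤ M a b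
  add_comm_eq_one : ∀ a b, M a b + M b a = 1
  cycle : ∀ a b c, M a b * M b c * M c a = M b a * M c b * M a c

theorem isShareMatrix_share {d : I → ℝ} (hd : ∀ a, 0 < d a) :
    IsShareMatrix fun a b => share (d a) (d b) where
  nonneg a b := share_nonneg (hd a).le (hd b).le
  add_comm_eq_one a b := share_add_share_comm (add_pos (hd a) (hd b)).ne'
  cycle a b c := by
    simp only [share, add_comm (d b) (d a), add_comm (d c) (d b), add_comm (d c) (d a)]
    ring

/-- The entries of a share matrix come from quantities of the size `c a * ε ^ e a`, `ε → 0`. -/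
structure IsMagnitude (M : I → I → ℝ) (c : I → ℝ) (e : I → ℕ) : Prop where
  pos : ∀ a, 0 < c a
  eq_share : ∀ a b, e a = e b → M a b = share (c a) (c b)
  eq_one : ∀ a b, e a < e b → M a b = 1

namespace IsShareMatrix

theorem apply_self (h : IsShareMatrix M) (a : I) : M a a = 1 / 2 := by
  linarith [h.add_comm_eq_one a a]

theorem of_tendsto {T : Type*} {F : Filter T} [NeBot F] {N : T → I → I → ℝ}
    (hN : ∀ t, IsShareMatrix (N t)) (h : ∀ a b, Tendsto (fun t => N t a b) F (𝓝 (M a b))) :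
    IsShareMatrix M where
  nonneg a b := ge_of_tendsto' (h a b) fun t => (hN t).nonneg a b
  add_comm_eq_one a b := tendsto_nhds_unique ((h a b).add (h b a)) <| by
    simp only [(hN _).add_comm_eq_one a b, tendsto_const_nhds]
  cycle a b c := tendsto_nhds_unique (((h a b).mul (h b c)).mul (h c a)) <| by
    simpa only [(hN _).cycle a b c] using ((h b a).mul (h c b)).mul (h a c)

theorem eq_zero_of_ne_one_of_eq_zero (h : IsShareMatrix M) {a b c : I} (hab : M a b ≠ 1)
    (hbc : M b c = 0) : M a c = 0 := by
  have hba : M b a ≠ 0 := fun h0 => hab (by linarith [h.add_comm_eq_one a b])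
  have hcb : M c b = 1 := by linarith [h.add_comm_eq_one b c]
  have hcycle := h.cycle a b c
  rw [hbc, hcb, mul_zero, zero_mul, mul_one, eq_comm] at hcycle
  exact (mul_eq_zero.1 hcycle).resolve_left hba

theorem ncard_zeros_lt [Finite I] (h : IsShareMatrix M) {a b : I} (hab : M a b = 0) :
    {x | M b x = 0}.ncard < {x | M a x = 0}.ncard := by
  refine Set.ncard_lt_ncard (ssubset_of_subset_of_ne (fun x hx => ?_) fun heq => ?_)
  · exact h.eq_zero_of_ne_one_of_eq_zero (by simp [hab]) hx
  · have hb : b ∈ {x | M b x = 0} := heq ▸ hab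
    rw [Set.mem_ofPred_eq, h.apply_self] at hb
    norm_num at hb

theorem zeros_subset (h : IsShareMatrix M) {a b : I} (hab : M a b ≠ 0) :
    {x | M a x = 0} ⊆ {x | M b x = 0} := fun _ hx =>
  h.eq_zero_of_ne_one_of_eq_zero (fun hba => hab (by linarith [h.add_comm_eq_one a b])) hx

end IsShareMatrix

theorem exists_representative (e : I → ℕ) (o : I) :
    ∃ r : ℕ → I, r (e o) = o ∧ ∀ a, e (r (e a)) = e a := by
  classical
  have : Nonempty I := ⟨o⟩
  refine ⟨Function.update (Function.invFun e) (e o) o, Function.update_self .., fun a => ?_⟩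
  rcases eq_or_ne (e a) (e o) with h | h
  · rw [h, Function.update_self]
  · rw [Function.update_of_ne h, Function.invFun_eq (f := e) ⟨a, rfl⟩]

theorem IsShareMatrix.exists_isMagnitude [Finite I] (h : IsShareMatrix M) (o : I)
    (ho : ∀ a, 0 < M o a) :
    ∃ (c : I → ℝ) (e : I → ℕ), IsMagnitude M c e ∧ c o = 1 ∧ e o = 0 := by
  -- `M a x = 0` says that `a` is negligible against `x`, so `e a` grows as `a` gets smaller.
  let e : I → ℕ := fun a => {x | M a x = 0}.ncard
  have pos_of_eq {a b : I} (hab : e a = e b) : 0 < M a b :=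
    (h.nonneg a b).lt_of_ne fun h0 => (h.ncard_zeros_lt h0.symm).ne hab.symm
  obtain ⟨r, hro, hr⟩ := exists_representative e o
  let c : I → ℝ := fun a => M a (r (e a)) / M (r (e a)) a
  have hc (a : I) : 0 < c a := div_pos (pos_of_eq (hr a).symm) (pos_of_eq (hr a))
  refine ⟨c, e, ⟨hc, fun a b hab => ?_, fun a b hab => ?_⟩, ?_, ?_⟩
  · refine eq_share_of_mul_eq (add_pos (hc a) (hc b)).ne' (h.add_comm_eq_one a b) ?_
    have hra := pos_of_eq (hr a)
    have hrb := pos_of_eq ((hr a).trans hab)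
    have hcycle := h.cycle a b (r (e a))
    simp only [c, ← hab]
    field_simp
    linarith
  · have hba : M b a = 0 := by
      by_contra hne
      exact hab.not_ge (Set.ncard_le_ncard (h.zeros_subset hne))
    linarith [h.add_comm_eq_one a b]
  · simp only [c, hro, h.apply_self, ne_eq, one_div, inv_eq_zero, OfNat.ofNat_ne_zero,
      not_false_eq_true, div_self]
  · simp [e, (ho _).ne']

end ShareMatrix

section OddsRel

/-- The odds `u / (1 - u)` are `q / q'` times the odds `u' / (1 - u')`. -/
def OddsRel (q q' u u' : ℝ) : Prop := q * u' * (1 - u) = q' * (1 - u') * u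

variable {q q' u u' v v' : ℝ}

theorem OddsRel.symm (h : OddsRel q q' u u') : OddsRel q' q u' u := by
  unfold OddsRel at h ⊢
  linear_combination -h

theorem OddsRel.one_sub (h : OddsRel q q' u u') : OddsRel q q' (1 - u') (1 - u) := by
  unfold OddsRel at h ⊢
  linear_combination h

theorem OddsRel.of_le_of_ge (hq : 0 ≤ q) (hq' : 0 ≤ q') (hu : u ∈ Set.Icc 0 1)
    (hv' : v' ∈ Set.Icc 0 1) (h : OddsRel q q' u u') (k : OddsRel q q' v v') (hvu : v ≤ u)
    (huv' : u' ≤ v') : OddsRel q q' u v' := by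
  have hu0 := hu.1
  have hu1 : 0 ≤ 1 - u := sub_nonneg.2 hu.2
  have hv0 := hv'.1
  have hv1 : 0 ≤ 1 - v' := sub_nonneg.2 hv'.2
  apply le_antisymm
  · calc q * v' * (1 - u) ≤ q * v' * (1 - v) := by gcongr
      _ = q' * (1 - v') * v := k
      _ ≤ q' * (1 - v') * u := by gcongr
  · calc q' * (1 - v') * u ≤ q' * (1 - u') * u := by gcongr
      _ = q * u' * (1 - u) := Eq.symm h
      _ ≤ q * v' * (1 - u) := by gcongr

theorem OddsRel.max (hq : 0 ≤ q) (hq' : 0 ≤ q') (hu : u ∈ Set.Icc 0 1) (hu' : u' ∈ Set.Icc 0 1)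
    (hv : v ∈ Set.Icc 0 1) (hv' : v' ∈ Set.Icc 0 1) (h : OddsRel q q' u u')
    (k : OddsRel q q' v v') : OddsRel q q' (max u v) (max u' v') := by
  rcases le_total u v with huv | hvu <;> rcases le_total u' v' with huv' | hvu'
  · rwa [max_eq_right huv, max_eq_right huv']
  · rw [max_eq_right huv, max_eq_left hvu']
    exact k.of_le_of_ge hq hq' hv hu' h huv hvu'
  · rw [max_eq_left hvu, max_eq_right huv']
    exact h.of_le_of_ge hq hq' hu hv' k hvu huv'
  · rwa [max_eq_left hvu, max_eq_left hvu']

end OddsRel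

section Gluing

variable {L R : Type*} {A : L → L → ℝ} {B : R → R → ℝ} {o' : R} {o : L}

/-- `f l r` is the share of `l` against `r`, compatible with the share matrix `A` of the
quantities on the left and the share matrix `B` of the quantities on the right. -/
structure IsGluing (A : L → L → ℝ) (B : R → R → ℝ) (f : L → R → ℝ) : Prop where
  mem_Icc : ∀ l r, f l r ∈ Set.Icc 0 1
  left : ∀ l l' r, OddsRel (A l l') (A l' l) (f l r) (f l' r)
  right : ∀ l r r', OddsRel (B r r') (B r' r) (f l r') (f l r)

/-- The gluings of two share matrices that give the base points `o` and `o'` equal shares. -/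
def gluings (A : L → L → ℝ) (B : R → R → ℝ) (o : L) (o' : R) : Set (L → R → ℝ) :=
  {f | IsGluing A B f ∧ f o o' = 1 / 2}

/-- The matrix with diagonal blocks `A` and `B` and off-diagonal block `f`. -/
def glue (A : L → L → ℝ) (B : R → R → ℝ) (f : L → R → ℝ) : L ⊕ R → L ⊕ R → ℝ
  | .inl l, .inl l' => A l l'
  | .inl l, .inr r => f l r
  | .inr r, .inl l => 1 - f l r
  | .inr r, .inr r' => B r r'

namespace IsGluing

variable {f g : L → R → ℝ}

theorem sup (hA : IsShareMatrix A) (hB : IsShareMatrix B) (hf : IsGluing A B f)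
    (hg : IsGluing A B g) : IsGluing A B (f ⊔ g) where
  mem_Icc l r :=
    ⟨(hf.mem_Icc l r).1.trans le_sup_left, sup_le (hf.mem_Icc l r).2 (hg.mem_Icc l r).2⟩
  left l l' r := (hf.left l l' r).max (hA.nonneg _ _) (hA.nonneg _ _) (hf.mem_Icc _ _)
    (hf.mem_Icc _ _) (hg.mem_Icc _ _) (hg.mem_Icc _ _) (hg.left l l' r)
  right l r r' := (hf.right l r r').max (hB.nonneg _ _) (hB.nonneg _ _) (hf.mem_Icc _ _)
    (hf.mem_Icc _ _) (hg.mem_Icc _ _) (hg.mem_Icc _ _) (hg.right l r r')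

theorem of_tendsto {T : Type*} {F : Filter T} [NeBot F] {A' : T → L → L → ℝ}
    {B' : T → R → R → ℝ} {f' : T → L → R → ℝ} (h : ∀ t, IsGluing (A' t) (B' t) (f' t))
    (hA : ∀ l l', Tendsto (fun t => A' t l l') F (𝓝 (A l l')))
    (hB : ∀ r r', Tendsto (fun t => B' t r r') F (𝓝 (B r r')))
    (hf : ∀ l r, Tendsto (fun t => f' t l r) F (𝓝 (f l r))) : IsGluing A B f where
  mem_Icc l r := isClosed_Icc.mem_of_tendsto (hf l r) (.of_forall fun t => (h t).mem_Icc l r)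
  left l l' r := tendsto_nhds_unique_of_eventuallyEq
    (((hA l l').mul (hf l' r)).mul ((hf l r).const_sub 1))
    (((hA l' l).mul ((hf l' r).const_sub 1)).mul (hf l r)) (.of_forall fun t => (h t).left l l' r)
  right l r r' := tendsto_nhds_unique_of_eventuallyEq
    (((hB r r').mul (hf l r)).mul ((hf l r').const_sub 1))
    (((hB r' r).mul ((hf l r).const_sub 1)).mul (hf l r')) (.of_forall fun t => (h t).right l r r')

theorem isShareMatrix_glue (hA : IsShareMatrix A) (hB : IsShareMatrix B) (hf : IsGluing A B f) :
    IsShareMatrix (glue A B f) where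
  nonneg := by
    rintro (l | r) (l' | r')
    exacts [hA.nonneg l l', (hf.mem_Icc l r').1, sub_nonneg.2 (hf.mem_Icc l' r).2, hB.nonneg r r']
  add_comm_eq_one := by
    rintro (l | r) (l' | r')
    exacts [hA.add_comm_eq_one l l', add_sub_cancel _ _, sub_add_cancel _ _,
      hB.add_comm_eq_one r r']
  cycle := by
    have left (l l' r) : A l l' * f l' r * (1 - f l r) = A l' l * (1 - f l' r) * f l r :=
      hf.left l l' r
    have right (l r r') : B r r' * f l r * (1 - f l r') = B r' r * (1 - f l r) * f l r' :=
      hf.right l r r'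
    rintro (a | a) (b | b) (c | c)
    · exact hA.cycle a b c
    · exact left a b c
    · linear_combination (norm := (simp only [glue]; ring)) left c a b
    · linear_combination (norm := (simp only [glue]; ring)) right a b c
    · linear_combination (norm := (simp only [glue]; ring)) left b c a
    · linear_combination (norm := (simp only [glue]; ring)) right b c a
    · linear_combination (norm := (simp only [glue]; ring)) right c a b
    · exact hB.cycle a b c

end IsGluing

theorem apply_base_of_mem_gluings (hB : IsShareMatrix B) {f : L → R → ℝ}
    (hf : f ∈ gluings A B o o') (r : R) : f o r = B o' r := by
  have h := hf.1.right o r o'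
  unfold OddsRel at h
  rw [hf.2] at h
  linear_combination 2 * h - f o r * hB.add_comm_eq_one r o'

theorem mul_eq_of_mem_gluings (hB : IsShareMatrix B) {f : L → R → ℝ} (hf : f ∈ gluings A B o o')
    (l : L) (r : R) :
    f l r * (A o l * B r o' + A l o * B o' r) = A l o * B o' r := by
  have h := hf.1.left o l r
  unfold OddsRel at h
  rw [apply_base_of_mem_gluings hB hf] at h
  linear_combination f l r * A o l * hB.add_comm_eq_one r o' + h

theorem supClosed_gluings (hA : IsShareMatrix A) (hB : IsShareMatrix B) :
    SupClosed (gluings A B o o') := fun f hf g hg =>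
  ⟨hf.1.sup hA hB hg.1, by rw [Pi.sup_apply, Pi.sup_apply, hf.2, hg.2, sup_idem]⟩

end Gluing

section LevelGluing

/-- The piecewise linear step from `0` to `1`, constant outside `[-1/2, 1/2]`. -/
noncomputable def ramp (x : ℝ) : ℝ := max 0 (min 1 (1 / 2 + x))

theorem ramp_nonneg (x : ℝ) : 0 ≤ ramp x := le_max_left _ _

theorem continuous_ramp : Continuous ramp := by
  unfold ramp
  fun_prop

theorem ramp_of_ge {x : ℝ} (hx : 1 / 2 ≤ x) : ramp x = 1 := by
  rw [ramp, min_eq_left (by linarith), max_eq_right zero_le_one]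

theorem ramp_of_le {x : ℝ} (hx : x ≤ -(1 / 2)) : ramp x = 0 := by
  rw [ramp, min_eq_right (by linarith), max_eq_left (by linarith)]

theorem ramp_pos_or_ramp_neg_pos (x : ℝ) : 0 < ramp x ∨ 0 < ramp (-x) := by
  simp only [ramp, lt_max_iff, lt_min_iff, lt_irrefl, false_or, zero_lt_one, true_and]
  by_contra! h
  linarith

/-- The share of a quantity with coefficient `a` against one with coefficient `b` whose order of
magnitude is `ε ^ x` times smaller, `ε → 0`, interpolated over real values of `x`. -/
noncomputable def levelShare (a b x : ℝ) : ℝ := share (a * ramp x) (b * ramp (-x))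

variable {a b a' b' x : ℝ}

theorem levelShare_denom_pos (ha : 0 < a) (hb : 0 < b) (x : ℝ) :
    0 < a * ramp x + b * ramp (-x) := by
  have h1 := ramp_nonneg x
  have h2 := ramp_nonneg (-x)
  rcases ramp_pos_or_ramp_neg_pos x with h | h <;> positivity

theorem continuous_levelShare (ha : 0 < a) (hb : 0 < b) : Continuous (levelShare a b) := by
  have := continuous_ramp
  exact Continuous.div (by fun_prop) (by fun_prop) fun x => (levelShare_denom_pos ha hb x).ne'

theorem levelShare_nonneg (ha : 0 < a) (hb : 0 < b) (x : ℝ) : 0 ≤ levelShare a b x :=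
  share_nonneg (mul_nonneg ha.le (ramp_nonneg x)) (mul_nonneg hb.le (ramp_nonneg (-x)))

theorem one_sub_levelShare (ha : 0 < a) (hb : 0 < b) (x : ℝ) :
    1 - levelShare a b x = levelShare b a (-x) := by
  rw [levelShare, levelShare, neg_neg, sub_eq_iff_eq_add',
    share_add_share_comm (levelShare_denom_pos ha hb x).ne']

theorem levelShare_mem_Icc (ha : 0 < a) (hb : 0 < b) (x : ℝ) : levelShare a b x ∈ Set.Icc 0 1 :=
  ⟨levelShare_nonneg ha hb x, sub_nonneg.1 <| by
    rw [one_sub_levelShare ha hb]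
    exact levelShare_nonneg hb ha (-x)⟩

theorem levelShare_zero (ha : 0 < a) : levelShare a a 0 = 1 / 2 := by
  have h := levelShare_denom_pos ha ha 0
  rw [neg_zero] at h
  rw [levelShare, neg_zero, share_self (by linarith)]

theorem levelShare_of_le (hx : x ≤ -(1 / 2)) : levelShare a b x = 0 := by
  rw [levelShare, share, ramp_of_le hx, mul_zero, zero_div]

theorem levelShare_of_ge (ha : 0 < a) (hx : 1 / 2 ≤ x) : levelShare a b x = 1 := by
  rw [levelShare, share, ramp_of_ge hx, ramp_of_le (neg_le_neg hx), mul_zero, add_zero,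
    mul_one, div_self ha.ne']

theorem levelShare_oddsRel (ha : 0 < a) (ha' : 0 < a') (hb : 0 < b) (x : ℝ) :
    OddsRel (share a a') (share a' a) (levelShare a b x) (levelShare a' b x) := by
  have h := levelShare_denom_pos ha hb x
  have h' := levelShare_denom_pos ha' hb x
  simp only [OddsRel, levelShare, share, add_comm a' a]
  field_simp
  ring

/-- The levels `e`, with all nonzero levels raised by `s`. -/
noncomputable def shiftedLevel {I : Type*} (e : I → ℕ) (s : ℝ) (a : I) : ℝ :=
  if e a = 0 then 0 else e a + s

theorem shiftedLevel_add_one_le {I : Type*} {e : I → ℕ} {s : ℝ} (hs : 0 ≤ s) {a b : I}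
    (hab : e a < e b) : shiftedLevel e s a + 1 ≤ shiftedLevel e s b := by
  have hcast : (e a : ℝ) + 1 ≤ e b := by exact_mod_cast hab
  have hb : e b ≠ 0 := (Nat.zero_le _).trans_lt hab |>.ne'
  simp only [shiftedLevel, hb, if_false]
  split_ifs with ha
  · simp only [ha, Nat.cast_zero] at hcast
    linarith
  · linarith

variable {L R : Type*} {A : L → L → ℝ} {B : R → R → ℝ} {o : L} {o' : R} {c : L → ℝ}
  {d : R → ℝ} {s s' : ℝ} {e' : R → ℕ} {e : L → ℕ}

/-- The gluing obtained from magnitudes on both sides, when all nonzero levels on the left and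
on the right are raised by `s` and `s'`, respectively. -/
noncomputable def levelGluing (c : L → ℝ) (e : L → ℕ) (s : ℝ) (d : R → ℝ) (e' : R → ℕ) (s' : ℝ)
    (l : L) (r : R) : ℝ :=
  levelShare (c l) (d r) (shiftedLevel e' s' r - shiftedLevel e s l)

theorem IsMagnitude.oddsRel_levelGluing (hA : IsShareMatrix A) (hc : IsMagnitude A c e)
    (hd : ∀ r, 0 < d r) (hs : 0 ≤ s) (l l' : L) (r : R) :
    OddsRel (A l l') (A l' l) (levelGluing c e s d e' s' l r) (levelGluing c e s d e' s' l' r) := by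
  wlog h : e l ≤ e l' generalizing l l'
  · exact (this l' l (le_of_not_ge h)).symm
  rcases h.eq_or_lt with h | h
  · rw [hc.eq_share l l' h, hc.eq_share l' l h.symm]
    simp only [levelGluing, shiftedLevel, h]
    exact levelShare_oddsRel (hc.pos l) (hc.pos l') (hd r) _
  · have hlevel := shiftedLevel_add_one_le hs h
    have hA1 := hc.eq_one l l' h
    have hA0 : A l' l = 0 := by linarith [hA.add_comm_eq_one l l']
    rw [OddsRel, hA1, hA0]
    rcases le_total (shiftedLevel e' s' r - shiftedLevel e s l') (-(1 / 2)) with hx | hx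
    · simp only [levelGluing, levelShare_of_le hx]
      ring
    · have hl : levelGluing c e s d e' s' l r = 1 := levelShare_of_ge (hc.pos l) (by linarith)
      rw [hl]
      ring

theorem one_sub_levelGluing (hc : ∀ l, 0 < c l) (hd : ∀ r, 0 < d r) (l : L) (r : R) :
    1 - levelGluing c e s d e' s' l r = levelGluing d e' s' c e s r l := by
  rw [levelGluing, one_sub_levelShare (hc l) (hd r), neg_sub, levelGluing]

theorem isGluing_levelGluing (hA : IsShareMatrix A) (hB : IsShareMatrix B)
    (hc : IsMagnitude A c e) (hd : IsMagnitude B d e') (hs : 0 ≤ s) (hs' : 0 ≤ s') :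
    IsGluing A B (levelGluing c e s d e' s') where
  mem_Icc l r := levelShare_mem_Icc (hc.pos l) (hd.pos r) _
  left := hc.oddsRel_levelGluing hA hd.pos hs
  right l r r' := by
    have h := (hd.oddsRel_levelGluing (e' := e) (s' := s) hB hc.pos hs' r r' l).one_sub
    rwa [one_sub_levelGluing hd.pos hc.pos, one_sub_levelGluing hd.pos hc.pos] at h

theorem levelGluing_mem_gluings (hA : IsShareMatrix A) (hB : IsShareMatrix B)
    (hc : IsMagnitude A c e) (hd : IsMagnitude B d e') (hs : 0 ≤ s) (hs' : 0 ≤ s')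
    (hco : c o = 1) (hdo : d o' = 1) (heo : e o = 0) (heo' : e' o' = 0) :
    levelGluing c e s d e' s' ∈ gluings A B o o' := by
  refine ⟨isGluing_levelGluing hA hB hc hd hs hs', ?_⟩
  simp only [levelGluing, shiftedLevel, hco, hdo, heo, heo', if_true, sub_zero,
    levelShare_zero one_pos]

theorem eq_of_mem_gluings (hB : IsShareMatrix B) {f g : L → R → ℝ} (hf : f ∈ gluings A B o o')
    (hg : g ∈ gluings A B o o') {l : L} {r : R} (h : A o l * B r o' + A l o * B o' r ≠ 0) :
    f l r = g l r :=
  mul_right_cancel₀ h <|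
    (mul_eq_of_mem_gluings hB hf l r).trans (mul_eq_of_mem_gluings hB hg l r).symm

theorem eq_or_level_ne_zero_of_mem_gluings (hA : IsShareMatrix A) (hB : IsShareMatrix B)
    (hc : IsMagnitude A c e) (hd : IsMagnitude B d e') (heo : e o = 0) (heo' : e' o' = 0)
    (ho : ∀ l, 0 < A o l) (ho' : ∀ r, 0 < B o' r) {f g : L → R → ℝ}
    (hf : f ∈ gluings A B o o') (hg : g ∈ gluings A B o o') (l : L) (r : R) :
    f l r = g l r ∨ e l ≠ 0 ∧ e' r ≠ 0 := by
  by_contra! h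
  refine h.1 (eq_of_mem_gluings hB hf hg (ne_of_gt ?_))
  by_cases hl : e l = 0
  · rw [hc.eq_share l o (hl.trans heo.symm)]
    exact add_pos_of_nonneg_of_pos (mul_nonneg (ho l).le (hB.nonneg r o'))
      (mul_pos (share_pos (hc.pos l) (hc.pos o)) (ho' r))
  · rw [hd.eq_share r o' ((h.2 hl).trans heo'.symm)]
    exact add_pos_of_pos_of_nonneg (mul_pos (ho l) (share_pos (hd.pos r) (hd.pos o')))
      (mul_nonneg (hA.nonneg l o) (ho' r).le)

theorem continuous_levelGluing (hc : ∀ l, 0 < c l) (hd : ∀ r, 0 < d r) :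
    Continuous (levelGluing c e s d e') := by
  refine continuous_pi fun l => continuous_pi fun r =>
    (continuous_levelShare (hc l) (hd r)).comp (Continuous.sub ?_ continuous_const)
  unfold shiftedLevel
  split_ifs <;> fun_prop

instance continuousSup_pi {ι : Type*} {X : ι → Type*} [∀ i, TopologicalSpace (X i)]
    [∀ i, Max (X i)] [∀ i, ContinuousSup (X i)] : ContinuousSup (∀ i, X i) where
  continuous_sup := continuous_pi fun i =>
    ((continuous_apply i).comp continuous_fst).sup ((continuous_apply i).comp continuous_snd)

-- `f ↦ f ⊔ γ s` contracts `S` onto its greatest element.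
theorem contractibleSpace_of_supClosed {X : Type*} [TopologicalSpace X] [SemilatticeSup X]
    [ContinuousSup X] {S : Set X} (hS : SupClosed S) {γ : ℝ → X} (hγ : Continuous γ)
    (hmem : ∀ s, 0 ≤ s → γ s ∈ S) (h0 : γ 0 ∈ lowerBounds S) (h1 : γ 1 ∈ upperBounds S) :
    ContractibleSpace S := by
  let H : ContinuousMap.Homotopy (ContinuousMap.id S)
      (ContinuousMap.const S ⟨γ 1, hmem 1 zero_le_one⟩) :=
    { toFun := fun p => ⟨p.2.1 ⊔ γ p.1, hS p.2.2 (hmem _ p.1.2.1)⟩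
      continuous_toFun := by fun_prop
      map_zero_left := fun f => Subtype.ext (sup_eq_left.2 (h0 f.2))
      map_one_left := fun f => Subtype.ext (sup_eq_right.2 (h1 f.2)) }
  exact contractible_iff_id_nullhomotopic S |>.2 ⟨_, ⟨H⟩⟩

theorem contractibleSpace_gluings [Finite L] [Finite R] (hA : IsShareMatrix A)
    (hB : IsShareMatrix B) (ho : ∀ l, 0 < A o l) (ho' : ∀ r, 0 < B o' r) :
    ContractibleSpace (gluings A B o o') := by
  obtain ⟨c, e, hc, hco, heo⟩ := hA.exists_isMagnitude o ho
  obtain ⟨d, e', hd, hdo, heo'⟩ := hB.exists_isMagnitude o' ho'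
  obtain ⟨N, hN⟩ := Finite.exists_le (Sum.elim e e')
  have hNe (l : L) : (e l : ℝ) ≤ N := by exact_mod_cast hN (.inl l)
  have hNe' (r : R) : (e' r : ℝ) ≤ N := by exact_mod_cast hN (.inr r)
  -- Gluings differ only at entries where both levels are nonzero; the path `γ` raises such entries
  -- from `0` to `1` by shifting the levels of the right side past those of the left side.
  let γ (s : ℝ) : L → R → ℝ := levelGluing c e N d e' (s * (2 * N))
  have hγ (s : ℝ) (hs : 0 ≤ s) : γ s ∈ gluings A B o o' :=
    levelGluing_mem_gluings hA hB hc hd (by positivity) (by positivity) hco hdo heo heo'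
  have hfree {f g : L → R → ℝ} := eq_or_level_ne_zero_of_mem_gluings (f := f) (g := g)
    hA hB hc hd heo heo' ho ho'
  refine contractibleSpace_of_supClosed (supClosed_gluings hA hB) (γ := γ)
    ((continuous_levelGluing hc.pos hd.pos).comp (by fun_prop)) hγ ?_ ?_
  · intro f hf l r
    obtain h | ⟨hl, hr⟩ := hfree (hγ 0 le_rfl) hf l r
    · exact h.le
    · have hl1 : (1 : ℝ) ≤ e l := by exact_mod_cast Nat.one_le_iff_ne_zero.2 hl
      have hγ0 : γ 0 l r = 0 := levelShare_of_le <| by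
        simp only [shiftedLevel, hl, hr, if_false]
        linarith [hNe' r]
      exact hγ0.trans_le (hf.1.mem_Icc l r).1
  · intro f hf l r
    obtain h | ⟨hl, hr⟩ := hfree hf (hγ 1 zero_le_one) l r
    · exact h.le
    · have hr1 : (1 : ℝ) ≤ e' r := by exact_mod_cast Nat.one_le_iff_ne_zero.2 hr
      have hγ1 : γ 1 l r = 1 := levelShare_of_ge (hc.pos l) <| by
        simp only [shiftedLevel, hl, hr, if_false]
        linarith [hNe l]
      exact (hf.1.mem_Icc l r).2.trans_eq hγ1.symm

end LevelGluing

section Converges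

variable {T Y Z : Type*} {F : Filter T}

/-- Convergence of a function to some limit along a filter. -/
def Converges [TopologicalSpace Y] (F : Filter T) (f : T → Y) : Prop :=
  ∃ y, Tendsto f F (𝓝 y)

namespace Converges

theorem congr' [TopologicalSpace Y] {f g : T → Y} (hf : Converges F f) (h : f =ᶠ[F] g) :
    Converges F g :=
  hf.imp fun _ hy => hy.congr' h

theorem pi {ι : Type*} {Y : ι → Type*} [∀ i, TopologicalSpace (Y i)] {f : T → ∀ i, Y i}
    (h : ∀ i, Converges F fun t => f t i) : Converges F f := by
  choose y hy using h
  exact ⟨y, tendsto_pi_nhds.2 hy⟩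

theorem prodMk [TopologicalSpace Y] [TopologicalSpace Z] {f : T → Y} {g : T → Z}
    (hf : Converges F f) (hg : Converges F g) : Converges F fun t => (f t, g t) := by
  obtain ⟨y, hy⟩ := hf
  obtain ⟨z, hz⟩ := hg
  exact ⟨(y, z), hy.prodMk_nhds hz⟩

theorem one_sub {f : T → ℝ} (hf : Converges F f) : Converges F fun t => 1 - f t :=
  let ⟨y, hy⟩ := hf
  ⟨1 - y, hy.const_sub 1⟩

variable {A B P Q : T → ℝ} {p q : ℝ}

theorem share_comm (hA : ∀ᶠ t in F, 0 < A t) (hB : ∀ᶠ t in F, 0 < B t)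
    (h : Converges F fun t => share (A t) (B t)) : Converges F fun t => share (B t) (A t) := by
  refine h.one_sub.congr' ?_
  filter_upwards [hA, hB] with t hA hB
  rw [sub_eq_iff_eq_add', share_add_share_comm (add_pos hA hB).ne']

theorem share_mul [NeBot F] (hA : ∀ᶠ t in F, 0 < A t) (hB : ∀ᶠ t in F, 0 < B t)
    (hP : Tendsto P F (𝓝 p)) (hQ : Tendsto Q F (𝓝 q)) (hp : 0 < p) (hq : 0 < q)
    (h : Converges F fun t => share (A t) (B t)) :
    Converges F fun t => share (A t * P t) (B t * Q t) := by
  obtain ⟨u, hu⟩ := h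
  have hu' : u ∈ Set.Icc 0 1 := by
    refine isClosed_Icc.mem_of_tendsto hu ?_
    filter_upwards [hA, hB] with t hA hB
    exact ⟨share_nonneg hA.le hB.le, div_le_one_of_le₀ (by linarith) (by linarith)⟩
  have hne : u * p + (1 - u) * q ≠ 0 := by
    have := sub_nonneg.2 hu'.2
    rcases hu'.1.eq_or_lt with rfl | h0
    · simpa using hq.ne'
    · have := hu'.1
      positivity
  refine ⟨_, (tendsto_share (hu.mul hP) ((hu.const_sub 1).mul hQ) hne).congr' ?_⟩
  filter_upwards [hA, hB] with t hA hB
  have hAB : A t + B t ≠ 0 := (add_pos hA hB).ne'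
  rw [share, share, share, one_sub_div hAB, add_sub_cancel_left, div_mul_eq_mul_div,
    div_mul_eq_mul_div, ← add_div, div_div_div_cancel_right₀ hAB]

theorem of_share_mul [NeBot F] (hA : ∀ᶠ t in F, 0 < A t) (hB : ∀ᶠ t in F, 0 < B t)
    (hP : Tendsto P F (𝓝 p)) (hQ : Tendsto Q F (𝓝 q)) (hp : 0 < p) (hq : 0 < q)
    (h : Converges F fun t => share (A t * P t) (B t * Q t)) :
    Converges F fun t => share (A t) (B t) := by
  have hP' := hP.eventually_const_lt hp
  have hQ' := hQ.eventually_const_lt hq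
  refine (h.share_mul (hA.and hP' |>.mono fun t ht => mul_pos ht.1 ht.2)
    (hB.and hQ' |>.mono fun t ht => mul_pos ht.1 ht.2) (hP.inv₀ hp.ne') (hQ.inv₀ hq.ne')
    (inv_pos.2 hp) (inv_pos.2 hq)).congr' ?_
  filter_upwards [hP', hQ'] with t hP hQ
  rw [mul_inv_cancel_right₀ hP.ne', mul_inv_cancel_right₀ hQ.ne']

end Converges

theorem one_add_ofReal_div_ofReal_inv {a b : ℝ} (ha : 0 < a) (hb : 0 < b) :
    (1 + ENNReal.ofReal a / ENNReal.ofReal b)⁻¹ = ENNReal.ofReal (share b a) := by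
  rw [← ENNReal.ofReal_div_of_pos hb, ← ENNReal.ofReal_one,
    ← ENNReal.ofReal_add zero_le_one (div_nonneg ha.le hb.le),
    ← ENNReal.ofReal_inv_of_pos (by positivity), share, one_add_div hb.ne', inv_div]

theorem converges_ofReal_div_ofReal_iff {A B : T → ℝ} (hA : ∀ᶠ t in F, 0 < A t)
    (hB : ∀ᶠ t in F, 0 < B t) :
    (Converges F fun t => ENNReal.ofReal (A t) / ENNReal.ofReal (B t)) ↔
      Converges F fun t => share (A t) (B t) := by
  have hinv : ∀ᶠ t in F, (1 + ENNReal.ofReal (A t) / ENNReal.ofReal (B t))⁻¹ =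
      ENNReal.ofReal (share (B t) (A t)) := by
    filter_upwards [hA, hB] with t hA hB using one_add_ofReal_div_ofReal_inv hA hB
  constructor
  · rintro ⟨r, hr⟩
    have hfin : (1 + r)⁻¹ ≠ ⊤ := by simp
    refine Converges.share_comm hB hA ⟨_, ((ENNReal.tendsto_toReal hfin).comp
      (hr.const_add 1).inv).congr' ?_⟩
    filter_upwards [hA, hB, hinv] with t hA hB ht
    rw [Function.comp_apply, ht,
      ENNReal.toReal_ofReal (share_nonneg hB.le hA.le)]
  · intro h
    obtain ⟨s, hs⟩ := h.share_comm hA hB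
    refine ⟨_, (ENNReal.Tendsto.sub (ENNReal.tendsto_ofReal hs).inv tendsto_const_nhds
      (.inr ENNReal.one_ne_top)).congr' ?_⟩
    filter_upwards [hinv] with t ht
    rw [← ht, inv_inv, ENNReal.add_sub_cancel_left ENNReal.one_ne_top]

end Converges

section ClosureImage

variable {T Y Z : Type*} [TopologicalSpace Y] [TopologicalSpace Z] {D : Set T} {f : T → Y}
  {g : T → Z} {p : Y → T} {q : Z → T}

theorem exists_continuousOn_extension [T3Space Z] (hp : Set.LeftInvOn p f D)
    (hconv : ∀ (F : Filter T) (c : Y), NeBot F → D ∈ F → Tendsto f F (𝓝 c) → Converges F g) :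
    ∃ Φ : Y → Z, ContinuousOn Φ (closure (f '' D)) ∧ (∀ t ∈ D, Φ (f t) = g t) ∧
      Set.MapsTo Φ (closure (f '' D)) (closure (g '' D)) := by
  have hlim : ∀ c ∈ closure (f '' D), Converges (𝓝[f '' D] c) (g ∘ p) := by
    intro c hc
    have : NeBot (𝓝[f '' D] c) := mem_closure_iff_nhdsWithin_neBot.1 hc
    refine hconv (map p (𝓝[f '' D] c)) c inferInstance ?_ ?_
    · refine mem_map.2 (mem_of_superset self_mem_nhdsWithin ?_)
      rintro _ ⟨t, ht, rfl⟩
      rwa [Set.mem_preimage, hp ht]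
    · refine tendsto_map'_iff.2 ((tendsto_nhdsWithin_of_tendsto_nhds tendsto_id).congr' ?_)
      filter_upwards [self_mem_nhdsWithin]
      rintro _ ⟨t, ht, rfl⟩
      rw [Function.comp_apply, hp ht, id]
  have hΦ := continuousOn_extendFrom subset_rfl hlim
  have heq (t) (ht : t ∈ D) : extendFrom (f '' D) (g ∘ p) (f t) = g t := by
    have hmem : f t ∈ f '' D := ⟨t, ht, rfl⟩
    obtain ⟨y, hy⟩ := hlim _ (subset_closure hmem)
    have hval := tendsto_nhds_unique (hy.mono_left (pure_le_nhdsWithin hmem))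
      (tendsto_pure_nhds (g ∘ p) (f t))
    rw [extendFrom_eq (subset_closure hmem) hy, hval, Function.comp_apply, hp ht]
  refine ⟨_, hΦ, heq, Set.MapsTo.closure_of_continuousOn ?_ hΦ⟩
  rintro _ ⟨t, ht, rfl⟩
  exact ⟨t, ht, (heq t ht).symm⟩

theorem exists_homeomorph_closure_image [T3Space Y] [T3Space Z] (hp : Set.LeftInvOn p f D)
    (hq : Set.LeftInvOn q g D)
    (hfg : ∀ (F : Filter T) (c : Y), NeBot F → D ∈ F → Tendsto f F (𝓝 c) → Converges F g)
    (hgf : ∀ (F : Filter T) (c : Z), NeBot F → D ∈ F → Tendsto g F (𝓝 c) → Converges F f) :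
    ∃ e : closure (f '' D) ≃ₜ closure (g '' D), ∀ t ∈ D, ∀ h, (e ⟨f t, h⟩ : Z) = g t := by
  obtain ⟨Φ, hΦ, hΦf, hΦmaps⟩ := exists_continuousOn_extension hp hfg
  obtain ⟨Ψ, hΨ, hΨg, hΨmaps⟩ := exists_continuousOn_extension hq hgf
  have left : Set.EqOn (Ψ ∘ Φ) id (closure (f '' D)) := by
    refine Set.EqOn.of_subset_closure (s := f '' D) ?_ (hΨ.comp hΦ hΦmaps) continuousOn_id
      subset_closure subset_rfl
    rintro _ ⟨t, ht, rfl⟩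
    rw [Function.comp_apply, hΦf t ht, hΨg t ht, id]
  have right : Set.EqOn (Φ ∘ Ψ) id (closure (g '' D)) := by
    refine Set.EqOn.of_subset_closure (s := g '' D) ?_ (hΦ.comp hΨ hΨmaps) continuousOn_id
      subset_closure subset_rfl
    rintro _ ⟨t, ht, rfl⟩
    rw [Function.comp_apply, hΨg t ht, hΦf t ht, id]
  exact ⟨{ toFun := hΦmaps.restrict
           invFun := hΨmaps.restrict
           left_inv := fun y => Subtype.ext (left y.2)
           right_inv := fun z => Subtype.ext (right z.2)
           continuous_toFun := hΦ.mapsToRestrict hΦmaps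
           continuous_invFun := hΨ.mapsToRestrict hΨmaps }, fun t ht _ => hΦf t ht⟩

end ClosureImage

section Chords

/-- The function `h` with `sin (π d) = d (1 - d) h d`, positive on `[0, 1]`. -/
noncomputable def sinFactor (d : ℝ) : ℝ :=
  Real.pi * (Real.sinc (Real.pi * d) + Real.sinc (Real.pi * (1 - d)))

theorem continuous_sinFactor : Continuous sinFactor := by
  have := Real.continuous_sinc
  unfold sinFactor
  fun_prop

theorem sin_pi_mul_eq_sinFactor (d : ℝ) :
    Real.sin (Real.pi * d) = d * (1 - d) * sinFactor d := by
  have mul_sinc (x : ℝ) : x * Real.sinc x = Real.sin x := by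
    rcases eq_or_ne x 0 with rfl | hx
    · simp
    · rw [Real.sinc_of_ne_zero hx, mul_div_cancel₀ _ hx]
  have hsin : Real.sin (Real.pi * (1 - d)) = Real.sin (Real.pi * d) := by
    rw [mul_sub, mul_one, Real.sin_pi_sub]
  have h := mul_sinc (Real.pi * d)
  have h' := mul_sinc (Real.pi * (1 - d))
  rw [sinFactor]
  linear_combination -d * hsin - (1 - d) * h - d * h'

theorem sin_pi_mul_pos {d : ℝ} (h0 : 0 < d) (h1 : d < 1) : 0 < Real.sin (Real.pi * d) :=
  Real.sin_pos_of_pos_of_lt_pi (mul_pos Real.pi_pos h0) (mul_lt_of_lt_one_right Real.pi_pos h1)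

theorem sinFactor_pos {d : ℝ} (hd : d ∈ Set.Icc 0 1) : 0 < sinFactor d := by
  have hπ := Real.pi_pos
  rcases hd.1.eq_or_lt with rfl | h0
  · simp [sinFactor, Real.sinc_of_ne_zero hπ.ne', hπ]
  rcases hd.2.eq_or_lt with rfl | h1
  · simp [sinFactor, Real.sinc_of_ne_zero hπ.ne', hπ]
  have hsin := sin_pi_mul_pos h0 h1
  rw [sin_pi_mul_eq_sinFactor] at hsin
  exact pos_of_mul_pos_right hsin (mul_nonneg hd.1 (sub_nonneg.2 hd.2))

variable {T : Type*} {F : Filter T} {x y z : T → ℝ} {x₀ y₀ : ℝ}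

/-- The shares of each pair among three quantities converge. -/
structure PairSharesConverge (F : Filter T) (x y z : T → ℝ) : Prop where
  fst_snd : Converges F fun t => share (x t) (y t)
  snd_thd : Converges F fun t => share (y t) (z t)
  fst_thd : Converges F fun t => share (x t) (z t)

theorem PairSharesConverge.congr' {x' y' z' : T → ℝ} (h : PairSharesConverge F x y z)
    (hx : x =ᶠ[F] x') (hy : y =ᶠ[F] y') (hz : z =ᶠ[F] z') : PairSharesConverge F x' y' z' where
  fst_snd := h.fst_snd.congr' (hx.comp₂ share hy)
  snd_thd := h.snd_thd.congr' (hy.comp₂ share hz)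
  fst_thd := h.fst_thd.congr' (hx.comp₂ share hz)

variable [NeBot F]

theorem converges_share_sin_of_tendsto_one (hy : ∀ᶠ t in F, 0 < y t)
    (hz : ∀ᶠ t in F, 0 < z t) (hsum : ∀ᶠ t in F, x t + y t + z t = 1)
    (hx₀ : Tendsto x F (𝓝 1)) (hyz : Converges F fun t => share (y t) (z t)) :
    Converges F fun t => share (Real.sin (Real.pi * x t)) (Real.sin (Real.pi * y t)) := by
  obtain ⟨s, hs⟩ := hyz
  have hs0 : 0 ≤ s := ge_of_tendsto hs <| by
    filter_upwards [hy, hz] with t hy hz using share_nonneg hy.le hz.le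
  have hy₀ : Tendsto y F (𝓝 0) := by
    refine tendsto_of_tendsto_of_tendsto_of_le_of_le' tendsto_const_nhds
      (by simpa using hx₀.const_sub 1) (hy.mono fun t ht => ht.le) ?_
    filter_upwards [hz, hsum] with t hz hsum
    linarith
  have hshare : Converges F fun t => share (y t + z t) (y t) := by
    refine ⟨_, ((hs.const_add 1).inv₀ (by positivity)).congr' ?_⟩
    filter_upwards [hy, hz] with t hy hz
    simp only [share]
    field_simp
  refine (hshare.share_mul (hy.and hz |>.mono fun t ht => add_pos ht.1 ht.2) hy
    (hx₀.mul ((continuous_sinFactor.tendsto _).comp hx₀))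
    ((hy₀.const_sub 1).mul ((continuous_sinFactor.tendsto _).comp hy₀))
    (mul_pos one_pos (sinFactor_pos (by simp)))
    (mul_pos (by norm_num) (sinFactor_pos (by simp)))).congr' ?_
  filter_upwards [hsum] with t hsum
  have hyz : y t + z t = 1 - x t := by linarith
  rw [sin_pi_mul_eq_sinFactor, sin_pi_mul_eq_sinFactor, hyz, Function.comp_apply,
    Function.comp_apply]
  congr 1 <;> ring

theorem converges_share_sin (hx : ∀ᶠ t in F, 0 < x t) (hy : ∀ᶠ t in F, 0 < y t)
    (hz : ∀ᶠ t in F, 0 < z t) (hsum : ∀ᶠ t in F, x t + y t + z t = 1)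
    (hx₀ : Tendsto x F (𝓝 x₀)) (hy₀ : Tendsto y F (𝓝 y₀))
    (hxy : Converges F fun t => share (x t) (y t)) (hyz : Converges F fun t => share (y t) (z t))
    (hxz : Converges F fun t => share (x t) (z t)) :
    Converges F fun t => share (Real.sin (Real.pi * x t)) (Real.sin (Real.pi * y t)) := by
  have lt_one : ∀ᶠ t in F, x t < 1 ∧ y t < 1 := by
    filter_upwards [hx, hy, hz, hsum] with t hx hy hz hsum
    constructor <;> linarith
  have mem_Icc {u : T → ℝ} {u₀ : ℝ} (h : Tendsto u F (𝓝 u₀)) (h0 : ∀ᶠ t in F, 0 < u t)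
      (h1 : ∀ᶠ t in F, u t < 1) : u₀ ∈ Set.Icc 0 1 :=
    isClosed_Icc.mem_of_tendsto h (h0.and h1 |>.mono fun t ht => ⟨ht.1.le, ht.2.le⟩)
  have hxI := mem_Icc hx₀ hx (lt_one.mono fun _ ht => ht.1)
  have hyI := mem_Icc hy₀ hy (lt_one.mono fun _ ht => ht.2)
  rcases hxI.2.eq_or_lt with rfl | hx1
  · exact converges_share_sin_of_tendsto_one hy hz hsum hx₀ hyz
  rcases hyI.2.eq_or_lt with rfl | hy1
  · refine Converges.share_comm ?_ ?_ (converges_share_sin_of_tendsto_one hx hz ?_ hy₀ hxz)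
    · filter_upwards [hy, lt_one] with t h0 h1 using sin_pi_mul_pos h0 h1.2
    · filter_upwards [hx, lt_one] with t h0 h1 using sin_pi_mul_pos h0 h1.1
    · simpa only [add_comm (y _) (x _)] using hsum
  · simp only [sin_pi_mul_eq_sinFactor, mul_assoc]
    exact hxy.share_mul hx hy ((hx₀.const_sub 1).mul ((continuous_sinFactor.tendsto _).comp hx₀))
      ((hy₀.const_sub 1).mul ((continuous_sinFactor.tendsto _).comp hy₀))
      (mul_pos (sub_pos.2 hx1) (sinFactor_pos hxI)) (mul_pos (sub_pos.2 hy1) (sinFactor_pos hyI))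

theorem converges_share_of_sin (hx : ∀ᶠ t in F, 0 < x t) (hy : ∀ᶠ t in F, 0 < y t)
    (hx₀ : Tendsto x F (𝓝 x₀)) (hy₀ : Tendsto y F (𝓝 y₀))
    (h : Converges F fun t => share (Real.sin (Real.pi * x t)) (Real.sin (Real.pi * y t))) :
    Converges F fun t => share (x t) (y t) := by
  by_cases hsum : x₀ + y₀ = 0
  · have hx0 : 0 ≤ x₀ := ge_of_tendsto hx₀ (hx.mono fun t ht => ht.le)
    have hy0 : 0 ≤ y₀ := ge_of_tendsto hy₀ (hy.mono fun t ht => ht.le)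
    obtain rfl : x₀ = 0 := by linarith
    obtain rfl : y₀ = 0 := by linarith
    have hfac {u : T → ℝ} (hu : Tendsto u F (𝓝 0)) :
        Tendsto (fun t => (1 - u t) * sinFactor (u t)) F (𝓝 ((1 - 0) * sinFactor 0)) :=
      (hu.const_sub 1).mul ((continuous_sinFactor.tendsto _).comp hu)
    have hpos : 0 < (1 - 0) * sinFactor 0 := mul_pos (by norm_num) (sinFactor_pos (by simp))
    simp only [sin_pi_mul_eq_sinFactor, mul_assoc] at h
    exact h.of_share_mul hx hy (hfac hx₀) (hfac hy₀) hpos hpos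
  · exact ⟨_, tendsto_share hx₀ hy₀ hsum⟩

theorem pairSharesConverge_sin_iff (hx : ∀ᶠ t in F, 0 < x t) (hy : ∀ᶠ t in F, 0 < y t)
    (hz : ∀ᶠ t in F, 0 < z t) (hsum : ∀ᶠ t in F, x t + y t + z t = 1)
    (hx₀ : Tendsto x F (𝓝 x₀)) (hy₀ : Tendsto y F (𝓝 y₀)) :
    PairSharesConverge F (fun t => Real.sin (Real.pi * x t)) (fun t => Real.sin (Real.pi * y t))
      (fun t => Real.sin (Real.pi * z t)) ↔ PairSharesConverge F x y z := by
  have hz₀ : Tendsto z F (𝓝 (1 - x₀ - y₀)) := by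
    refine ((hx₀.const_sub 1).sub hy₀).congr' ?_
    filter_upwards [hsum] with t ht
    linarith
  have hsum' : ∀ᶠ t in F, y t + z t + x t = 1 := hsum.mono fun t ht => by linarith
  have hsum'' : ∀ᶠ t in F, x t + z t + y t = 1 := hsum.mono fun t ht => by linarith
  refine ⟨fun h => ⟨converges_share_of_sin hx hy hx₀ hy₀ h.fst_snd,
    converges_share_of_sin hy hz hy₀ hz₀ h.snd_thd,
    converges_share_of_sin hx hz hx₀ hz₀ h.fst_thd⟩, fun h => ⟨?_, ?_, ?_⟩⟩
  · exact converges_share_sin hx hy hz hsum hx₀ hy₀ h.fst_snd h.snd_thd h.fst_thd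
  · exact converges_share_sin hy hz hx hsum' hy₀ hz₀ h.snd_thd (h.fst_thd.share_comm hx hz)
      (h.fst_snd.share_comm hx hy)
  · exact converges_share_sin hx hz hy hsum'' hx₀ hz₀ h.fst_thd (h.snd_thd.share_comm hy hz)
      h.fst_snd

end Chords

section Configuration

variable {n : ℕ} {t : Fin n → ℝ}

theorem ext01_zero (t : Fin n → ℝ) : ext01 t 0 = 0 := rfl

theorem ext01_last (t : Fin n → ℝ) : ext01 t (Fin.last (n + 1)) = 1 := by
  rw [← Fin.succ_last, ext01, Fin.cons_succ, Fin.snoc_last]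

theorem ext01_castSucc_succ (t : Fin n → ℝ) (i : Fin n) : ext01 t i.castSucc.succ = t i := by
  rw [ext01, Fin.cons_succ, Fin.snoc_castSucc]

theorem ext0_eq_ext01_castSucc (t : Fin n → ℝ) (i : Fin (n + 1)) :
    ext0 t i = ext01 t i.castSucc := by
  cases i using Fin.cases with
  | zero => rfl
  | succ i => rw [← Fin.succ_castSucc, ext01_castSucc_succ, ext0, Fin.cons_succ]

theorem eq_zero_or_interior_or_eq_last (i : Fin (n + 2)) :
    i = 0 ∨ (∃ j : Fin n, i = j.castSucc.succ) ∨ i = Fin.last (n + 1) := by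
  cases i using Fin.cases with
  | zero => exact .inl rfl
  | succ i =>
    cases i using Fin.lastCases with
    | last => exact .inr (.inr rfl)
    | cast j => exact .inr (.inl ⟨j, rfl⟩)

theorem eq_ext01 {y : Fin (n + 2) → ℝ} (h0 : y 0 = 0) (h1 : y (Fin.last _) = 1)
    (h : ∀ i : Fin n, y i.castSucc.succ = t i) : y = ext01 t := by
  funext i
  rcases eq_zero_or_interior_or_eq_last i with rfl | ⟨j, rfl⟩ | rfl
  · exact h0
  · rw [h, ext01_castSucc_succ]
  · rw [h1, ext01_last]

theorem mem_openSimplex_iff : t ∈ openSimplex n ↔ StrictMono (ext01 t) := by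
  constructor
  · rintro ⟨hmono, hpos, hlt⟩
    refine Fin.strictMono_iff_lt_succ.2 fun i => ?_
    cases i using Fin.cases with
    | zero =>
      rw [Fin.castSucc_zero, ext01_zero]
      rcases eq_zero_or_interior_or_eq_last (Fin.succ 0 : Fin (n + 2)) with h | ⟨j, h⟩ | h
      · exact absurd h (Fin.succ_ne_zero 0)
      · rw [h, ext01_castSucc_succ]
        exact hpos j
      · rw [h, ext01_last]
        exact one_pos
    | succ i =>
      rw [← Fin.succ_castSucc, ext01_castSucc_succ]
      rcases eq_zero_or_interior_or_eq_last i.succ.succ with h | ⟨j, h⟩ | h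
      · exact absurd h (Fin.succ_ne_zero _)
      · rw [h, ext01_castSucc_succ]
        refine hmono i j (Fin.castSucc_lt_castSucc_iff.1 ?_)
        rw [← Fin.succ_inj.1 h]
        exact Fin.castSucc_lt_succ
      · rw [h, ext01_last]
        exact hlt i
  · intro h
    refine ⟨fun i j hij => ?_, fun i => ?_, fun i => ?_⟩
    · rw [← ext01_castSucc_succ t i, ← ext01_castSucc_succ t j]
      exact h (Fin.succ_lt_succ_iff.2 (Fin.castSucc_lt_castSucc_iff.2 hij))
    · rw [← ext01_castSucc_succ t i, ← ext01_zero t]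
      exact h (Fin.succ_pos _)
    · rw [← ext01_castSucc_succ t i, ← ext01_last t]
      exact h (Fin.succ_lt_succ_iff.2 (Fin.castSucc_lt_last i))

theorem ext01_pos (h : t ∈ openSimplex n) {i : Fin (n + 2)} (hi : i ≠ 0) : 0 < ext01 t i := by
  rw [← ext01_zero t]
  exact mem_openSimplex_iff.1 h (Fin.pos_iff_ne_zero.2 hi)

theorem ext01_lt_one (h : t ∈ openSimplex n) {i : Fin (n + 2)} (hi : i ≠ Fin.last _) :
    ext01 t i < 1 := by
  rw [← ext01_last t]
  exact mem_openSimplex_iff.1 h (Fin.lt_last_iff_ne_last.2 hi)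

theorem continuous_ext01 (i : Fin (n + 2)) : Continuous fun t : Fin n → ℝ => ext01 t i := by
  rcases eq_zero_or_interior_or_eq_last i with rfl | ⟨i, rfl⟩ | rfl
  · exact continuous_const
  · simpa only [ext01_castSucc_succ] using continuous_apply i
  · simpa only [ext01_last] using continuous_const

theorem alphaMap_mem_Ioo (ht : t ∈ openSimplex n) (q : TriIdx n) :
    alphaMap n t q ∈ Set.Ioo 0 1 := by
  have h := mem_openSimplex_iff.1 ht
  have hij := h q.2.1
  have hjk := h q.2.2
  exact ⟨div_pos (by linarith) (by linarith), (div_lt_one (by linarith)).2 (by linarith)⟩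

/-- The mirror image of a configuration in `(0, 1)`. -/
def reflect (t : Fin n → ℝ) : Fin n → ℝ := fun i => 1 - t i.rev

theorem ext01_reflect (t : Fin n → ℝ) (i : Fin (n + 2)) :
    ext01 (reflect t) i = 1 - ext01 t i.rev := by
  refine congrFun (eq_ext01 (y := fun i => 1 - ext01 t i.rev) ?_ ?_ fun i => ?_).symm i
  · rw [Fin.rev_zero, ext01_last, sub_self]
  · rw [Fin.rev_last, ext01_zero, sub_zero]
  · rw [Fin.rev_succ, Fin.rev_castSucc, ← Fin.succ_castSucc, ext01_castSucc_succ, reflect]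

theorem reflect_mem_openSimplex (ht : t ∈ openSimplex n) : reflect t ∈ openSimplex n := by
  refine mem_openSimplex_iff.2 fun i j hij => ?_
  rw [ext01_reflect, ext01_reflect]
  exact sub_lt_sub_left (mem_openSimplex_iff.1 ht (Fin.rev_lt_rev.2 hij)) 1

/-- The action of the reflection of configurations on the coordinates of `α_n`. -/
def reflectAlpha (x : TriIdx n → ℝ) : TriIdx n → ℝ := fun q =>
  1 - x ⟨(q.1.2.2.rev, q.1.2.1.rev, q.1.1.rev), Fin.rev_lt_rev.2 q.2.2, Fin.rev_lt_rev.2 q.2.1⟩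

theorem continuous_reflectAlpha : Continuous (reflectAlpha (n := n)) := by
  unfold reflectAlpha
  fun_prop

theorem alphaMap_reflect (ht : t ∈ openSimplex n) :
    alphaMap n (reflect t) = reflectAlpha (alphaMap n t) := by
  funext ⟨⟨i, j, k⟩, hij, hjk⟩
  have hki := mem_openSimplex_iff.1 ht (Fin.rev_lt_rev.2 (hij.trans hjk))
  simp only [alphaMap, reflectAlpha, ext01_reflect]
  rw [one_sub_div (sub_pos.2 hki).ne']
  congr 1 <;> ring

theorem alphaMap_zero (t : Fin n → ℝ) {j k : Fin (n + 2)} (h : 0 < j ∧ j < k) :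
    alphaMap n t ⟨(0, j, k), h⟩ = ext01 t j / ext01 t k := by
  rw [alphaMap, ext01_zero, sub_zero, sub_zero]

/-- The distances of the points `t 1, …, t n` and `1` from the left end `0`. -/
def leftDist (t : Fin n → ℝ) (l : Fin (n + 1)) : ℝ := ext01 t l.succ

theorem leftDist_pos (ht : t ∈ openSimplex n) (l : Fin (n + 1)) : 0 < leftDist t l :=
  ext01_pos ht (Fin.succ_ne_zero l)

theorem leftDist_last (t : Fin n → ℝ) : leftDist t (Fin.last n) = 1 := ext01_last t

/-- The shares of the distances from the left end against the distances from the right end,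
the latter being indexed from right to left. -/
noncomputable def crossShare (t : Fin n → ℝ) (l r : Fin (n + 1)) : ℝ :=
  share (leftDist t l) (leftDist (reflect t) r)

/-- The map `α_n` together with the comparison of distances to both ends. -/
noncomputable def gammaMap (n : ℕ) (t : Fin n → ℝ) :
    (TriIdx n → ℝ) × (Fin (n + 1) → Fin (n + 1) → ℝ) :=
  (alphaMap n t, crossShare t)

end Configuration

section Arcs

variable {n : ℕ} {F : Filter (Fin n → ℝ)} {v : Fin n → ℝ}

/-- On the circle `ℝ / ℤ`, the shares among the three arcs cut out by the points with indices
`a < b < c` converge. -/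
def ArcSharesConverge (F : Filter (Fin n → ℝ)) (a b c : Fin (n + 2)) : Prop :=
  PairSharesConverge F (fun t => ext01 t b - ext01 t a) (fun t => ext01 t c - ext01 t b)
    (fun t => 1 - (ext01 t c - ext01 t a))

theorem zero_lt_and_lt_last (j : Fin n) :
    (0 : Fin (n + 2)) < j.castSucc.succ ∧ j.castSucc.succ < Fin.last (n + 1) :=
  ⟨Fin.succ_pos _, Fin.succ_last n ▸ Fin.succ_lt_succ_iff.2 (Fin.castSucc_lt_last j)⟩

theorem alphaMap_zero_last (t : Fin n → ℝ) (j : Fin (n + 2)) (h) :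
    alphaMap n t ⟨(0, j, Fin.last _), h⟩ = ext01 t j := by
  rw [alphaMap_zero, ext01_last, div_one]

theorem tendsto_ext01 (hv : Tendsto id F (𝓝 v)) (i : Fin (n + 2)) :
    Tendsto (fun t => ext01 t i) F (𝓝 (ext01 v i)) :=
  ((continuous_ext01 i).tendsto v).comp hv

theorem monotone_ext01_of_tendsto [NeBot F] (hD : openSimplex n ∈ F) (hv : Tendsto id F (𝓝 v)) :
    Monotone (ext01 v) := fun i j hij => by
  refine le_of_tendsto_of_tendsto (tendsto_ext01 hv i) (tendsto_ext01 hv j) ?_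
  filter_upwards [hD] with t ht using (mem_openSimplex_iff.1 ht).monotone hij

theorem converges_share_ext01 (hcross : ∀ l r, Converges F fun t => crossShare t l r)
    (i : Fin (n + 2)) {j : Fin (n + 2)} (hj : j ≠ Fin.last _) :
    Converges F fun t => share (ext01 t i) (1 - ext01 t j) := by
  rcases eq_or_ne i 0 with rfl | hi
  · exact ⟨0, by simpa only [ext01_zero, share, zero_div] using tendsto_const_nhds⟩
  · obtain ⟨l, rfl⟩ := Fin.exists_succ_eq.2 hi
    obtain ⟨r, hr⟩ := Fin.exists_succ_eq.2 (Fin.rev_ne_iff.2 (Fin.rev_zero (n + 1) ▸ hj))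
    simpa only [crossShare, leftDist, ext01_reflect, hr, Fin.rev_rev] using hcross l r

theorem converges_ext01_div (halpha : ∀ q, Converges F fun t => alphaMap n t q)
    {a b : Fin (n + 2)} (hab : a < b) : Converges F fun t => ext01 t a / ext01 t b := by
  rcases eq_or_ne a 0 with rfl | ha
  · exact ⟨0, by simpa only [ext01_zero, zero_div] using tendsto_const_nhds⟩
  · simpa only [alphaMap_zero] using halpha ⟨(0, a, b), Fin.pos_iff_ne_zero.2 ha, hab⟩

theorem arcSharesConverge_of_gammaMap (hD : openSimplex n ∈ F)
    (halpha : ∀ q, Converges F fun t => alphaMap n t q)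
    (hcross : ∀ l r, Converges F fun t => crossShare t l r) {a b c : Fin (n + 2)} (hab : a < b)
    (hbc : b < c) (hc : c ≠ Fin.last _) : ArcSharesConverge F a b c where
  fst_snd := by
    refine (halpha ⟨(a, b, c), hab, hbc⟩).congr' (Eventually.of_forall fun t => ?_)
    simp only [alphaMap, share, sub_add_sub_cancel']
  snd_thd := by
    have hb : b < Fin.last _ := hbc.trans_le (Fin.le_last c)
    obtain ⟨x, hx⟩ := halpha ⟨(b, c, Fin.last _), hbc, Fin.lt_last_iff_ne_last.2 hc⟩
    obtain ⟨y, hy⟩ := (converges_share_ext01 hcross a hb.ne).one_sub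
    refine ⟨x * y, (hx.mul hy).congr' ?_⟩
    filter_upwards [hD] with t ht
    have hbpos : 1 - ext01 t b ≠ 0 := (sub_pos.2 (ext01_lt_one ht hb.ne)).ne'
    have hsum : ext01 t a + (1 - ext01 t b) ≠ 0 := by
      have hlast := mem_openSimplex_iff.1 ht hb
      have hzero := (mem_openSimplex_iff.1 ht).monotone (Fin.zero_le a)
      rw [ext01_last] at hlast
      rw [ext01_zero] at hzero
      linarith
    simp only [alphaMap, share, ext01_last]
    rw [one_sub_div hsum, add_sub_cancel_left, div_mul_div_cancel₀ hbpos]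
    congr 1
    ring
  fst_thd := by
    have hb : b ≠ 0 := (Fin.zero_le a).trans_lt hab |>.ne'
    obtain ⟨x, hx⟩ := (converges_ext01_div halpha hab).one_sub
    obtain ⟨y, hy⟩ := converges_share_ext01 hcross b hc
    refine ⟨x * y, (hx.mul hy).congr' ?_⟩
    filter_upwards [hD] with t ht
    have hbpos := ext01_pos ht hb
    rw [share, share, one_sub_div hbpos.ne', div_mul_div_cancel₀ hbpos.ne']
    congr 1
    ring

theorem converges_alphaMap_of_arcs (hv : Tendsto id F (𝓝 v))
    (harc : ∀ a b c, a < b → b < c → c ≠ Fin.last _ → ArcSharesConverge F a b c)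
    (q : TriIdx n) : Converges F fun t => alphaMap n t q := by
  obtain ⟨⟨i, j, k⟩, hij, hjk⟩ := q
  dsimp only at hij hjk
  rcases ne_or_eq k (Fin.last _) with hk | rfl
  · refine (harc i j k hij hjk hk).fst_snd.congr' (Eventually.of_forall fun t => ?_)
    simp only [alphaMap, share, sub_add_sub_cancel']
  rcases eq_or_ne i 0 with rfl | hi
  · exact ⟨ext01 v j, by simpa only [alphaMap_zero_last] using tendsto_ext01 hv j⟩
  · refine (harc 0 i j (Fin.pos_iff_ne_zero.2 hi) hij hjk.ne).snd_thd.congr'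
      (Eventually.of_forall fun t => ?_)
    simp only [alphaMap, share, ext01_last, ext01_zero]
    congr 1
    ring

theorem converges_crossShare_of_arcs [NeBot F] (hD : openSimplex n ∈ F) (hv : Tendsto id F (𝓝 v))
    (harc : ∀ a b c, a < b → b < c → c ≠ Fin.last _ → ArcSharesConverge F a b c)
    (l r : Fin (n + 1)) : Converges F fun t => crossShare t l r := by
  have hmono := monotone_ext01_of_tendsto hD hv
  simp only [crossShare, leftDist, ext01_reflect]
  by_cases hne : ext01 v l.succ + (1 - ext01 v r.succ.rev) = 0
  · have hl : 0 ≤ ext01 v l.succ := hmono (Fin.zero_le _)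
    have hr : ext01 v r.succ.rev ≤ 1 := (hmono (Fin.le_last _)).trans_eq (ext01_last v)
    have hlt : l.succ < r.succ.rev := by
      by_contra! hle
      linarith [hl, hr, hmono hle]
    have hlast : r.succ.rev ≠ Fin.last _ := fun h =>
      Fin.succ_ne_zero r (Fin.rev_injective (h.trans (Fin.rev_zero _).symm))
    simpa only [ext01_zero, sub_zero] using (harc 0 _ _ (Fin.succ_pos l) hlt hlast).fst_thd
  · exact ⟨_, tendsto_share (tendsto_ext01 hv _) ((tendsto_ext01 hv _).const_sub 1) hne⟩

/-- The quantity compared by the coordinates of `β_n`: on the circle of circumference `1`, it is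
proportional to the length of the chord between two of the points. -/
noncomputable def chord (t : Fin n → ℝ) (i j : Fin (n + 1)) : ℝ :=
  |Real.sin (Real.pi * (ext0 t j - ext0 t i))|

theorem chord_comm (t : Fin n → ℝ) (i j : Fin (n + 1)) : chord t i j = chord t j i := by
  rw [chord, chord, ← neg_sub, mul_neg, Real.sin_neg, abs_neg]

theorem chord_eq_sin_and_pos {t : Fin n → ℝ} (ht : t ∈ openSimplex n) {i j : Fin (n + 1)}
    (hij : i < j) :
    chord t i j = Real.sin (Real.pi * (ext01 t j.castSucc - ext01 t i.castSucc)) ∧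
      0 < chord t i j := by
  have hlt := mem_openSimplex_iff.1 ht (Fin.castSucc_lt_castSucc_iff.2 hij)
  have hi := (mem_openSimplex_iff.1 ht).monotone (Fin.zero_le i.castSucc)
  rw [ext01_zero] at hi
  have hpos : 0 < Real.sin (Real.pi * (ext01 t j.castSucc - ext01 t i.castSucc)) :=
    sin_pi_mul_pos (sub_pos.2 hlt) (by linarith [ext01_lt_one ht (Fin.castSucc_ne_last j)])
  rw [chord, ext0_eq_ext01_castSucc, ext0_eq_ext01_castSucc, abs_of_pos hpos]
  exact ⟨rfl, hpos⟩

theorem chord_eq_sin {t : Fin n → ℝ} (ht : t ∈ openSimplex n) {i j : Fin (n + 1)} (hij : i < j) :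
    chord t i j = Real.sin (Real.pi * (ext01 t j.castSucc - ext01 t i.castSucc)) :=
  (chord_eq_sin_and_pos ht hij).1

theorem chord_pos {t : Fin n → ℝ} (ht : t ∈ openSimplex n) {i j : Fin (n + 1)} (hij : i ≠ j) :
    0 < chord t i j := by
  rcases hij.lt_or_gt with h | h
  · exact (chord_eq_sin_and_pos ht h).2
  · rw [chord_comm]
    exact (chord_eq_sin_and_pos ht h).2

theorem pairSharesConverge_chord_iff [NeBot F] (hD : openSimplex n ∈ F) (hv : Tendsto id F (𝓝 v))
    {a b c : Fin (n + 1)} (hab : a < b) (hbc : b < c) :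
    PairSharesConverge F (chord · a b) (chord · b c) (chord · a c) ↔
      ArcSharesConverge F a.castSucc b.castSucc c.castSucc := by
  have hab' := Fin.castSucc_lt_castSucc_iff.2 hab
  have hbc' := Fin.castSucc_lt_castSucc_iff.2 hbc
  have hx : (chord · a b) =ᶠ[F] fun t =>
      Real.sin (Real.pi * (ext01 t b.castSucc - ext01 t a.castSucc)) := by
    filter_upwards [hD] with t ht using chord_eq_sin ht hab
  have hy : (chord · b c) =ᶠ[F] fun t =>
      Real.sin (Real.pi * (ext01 t c.castSucc - ext01 t b.castSucc)) := by
    filter_upwards [hD] with t ht using chord_eq_sin ht hbc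
  have hz : (chord · a c) =ᶠ[F] fun t =>
      Real.sin (Real.pi * (1 - (ext01 t c.castSucc - ext01 t a.castSucc))) := by
    filter_upwards [hD] with t ht
    rw [chord_eq_sin ht (hab.trans hbc), mul_one_sub, Real.sin_pi_sub]
  have hiff := pairSharesConverge_sin_iff (F := F)
    (hD |> mem_of_superset <| fun t ht => sub_pos.2 (mem_openSimplex_iff.1 ht hab'))
    (hD |> mem_of_superset <| fun t ht => sub_pos.2 (mem_openSimplex_iff.1 ht hbc'))
    (z := fun t => 1 - (ext01 t c.castSucc - ext01 t a.castSucc)) ?_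
    (Eventually.of_forall fun t => by ring)
    ((tendsto_ext01 hv b.castSucc).sub (tendsto_ext01 hv a.castSucc))
    ((tendsto_ext01 hv c.castSucc).sub (tendsto_ext01 hv b.castSucc))
  · exact ⟨fun h => hiff.1 (h.congr' hx hy hz),
      fun h => (hiff.2 h).congr' hx.symm hy.symm hz.symm⟩
  · filter_upwards [hD] with t ht
    have ha := (mem_openSimplex_iff.1 ht).monotone (Fin.zero_le a.castSucc)
    rw [ext01_zero] at ha
    linarith [ext01_lt_one ht (Fin.castSucc_ne_last c)]

theorem converges_sTilde_iff (hD : openSimplex n ∈ F) {k l m : Fin (n + 1)}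
    (h : k ≠ l ∧ k ≠ m ∧ l ≠ m) :
    (Converges F fun t => sTilde n t ⟨(k, l, m), h⟩) ↔
      Converges F fun t => share (chord t k l) (chord t k m) :=
  converges_ofReal_div_ofReal_iff (A := (chord · k l)) (B := (chord · k m))
    (mem_of_superset hD fun _ ht => chord_pos ht h.1)
    (mem_of_superset hD fun _ ht => chord_pos ht h.2.1)

theorem pairSharesConverge_chord_of_sTilde (hD : openSimplex n ∈ F)
    (hs : ∀ q, Converges F fun t => sTilde n t q) {a b c : Fin (n + 1)} (hab : a < b)
    (hbc : b < c) : PairSharesConverge F (chord · a b) (chord · b c) (chord · a c) where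
  fst_snd := by
    simpa only [chord_comm _ b a] using
      (converges_sTilde_iff hD ⟨hab.ne', hbc.ne, (hab.trans hbc).ne⟩).1 (hs _)
  snd_thd := by
    simpa only [chord_comm _ c] using
      (converges_sTilde_iff hD ⟨hbc.ne', (hab.trans hbc).ne', hab.ne'⟩).1 (hs _)
  fst_thd := (converges_sTilde_iff hD ⟨hab.ne, (hab.trans hbc).ne, hbc.ne⟩).1 (hs _)

theorem converges_sTilde_of_chord (hD : openSimplex n ∈ F)
    (hchord : ∀ a b c, a < b → b < c →
      PairSharesConverge F (chord · a b) (chord · b c) (chord · a c)) (q : TripleIdx n) :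
    Converges F fun t => sTilde n t q := by
  obtain ⟨⟨k, l, m⟩, hkl, hkm, hlm⟩ := q
  dsimp only at hkl hkm hlm
  rw [converges_sTilde_iff hD]
  have hpos {i : Fin (n + 1)} (hi : k ≠ i) : ∀ᶠ t in F, 0 < chord t k i :=
    mem_of_superset hD fun _ ht => chord_pos ht hi
  wlog hlt : l < m generalizing l m
  · exact (this m l hkm hkl hlm.symm (hlm.lt_or_gt.resolve_left hlt)).share_comm
      (hpos hkm) (hpos hkl)
  rcases hkl.lt_or_gt with hkl' | hlk
  · exact (hchord k l m hkl' hlt).fst_thd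
  rcases hkm.lt_or_gt with hkm' | hmk
  · simpa only [chord_comm _ k l] using (hchord l k m hlk hkm').fst_snd
  · refine Converges.share_comm (hpos hkm) (hpos hkl) ?_
    simpa only [chord_comm _ k] using (hchord l m k hlt hmk).snd_thd

theorem tendsto_id_of_alphaMap {x : TriIdx n → ℝ} (h : Tendsto (alphaMap n) F (𝓝 x)) :
    Tendsto id F (𝓝 fun j => x ⟨(0, j.castSucc.succ, Fin.last _), zero_lt_and_lt_last j⟩) := by
  refine tendsto_pi_nhds.2 fun j => ?_
  simpa only [alphaMap_zero_last, ext01_castSucc_succ, id] using tendsto_pi_nhds.1 h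
    ⟨(0, j.castSucc.succ, Fin.last _), zero_lt_and_lt_last j⟩

theorem exists_homeomorph_gammaMap (n : ℕ) :
    ∃ e : Cycl n ≃ₜ closure (gammaMap n '' openSimplex n),
      ∀ t ∈ openSimplex n, ∀ h, (e ⟨betaMap n t, h⟩ : _ × _) = gammaMap n t := by
  refine exists_homeomorph_closure_image (p := Prod.fst)
    (q := fun z j => z.1 ⟨(0, j.castSucc.succ, Fin.last _), zero_lt_and_lt_last j⟩)
    (fun _ _ => rfl) (fun t _ => ?_) (fun F c hF hD hc => ?_) (fun F c hF hD hc => ?_)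
  · funext j
    exact (alphaMap_zero_last t _ _).trans (ext01_castSucc_succ t j)
  · have hv : Tendsto id F (𝓝 c.1) := (continuous_fst.tendsto c).comp hc
    have hs (q) : Converges F fun t => sTilde n t q :=
      ⟨c.2 q, tendsto_pi_nhds.1 ((continuous_snd.tendsto c).comp hc) q⟩
    have harc (a b c : Fin (n + 2)) (hab : a < b) (hbc : b < c) (hc : c ≠ Fin.last _) :
        ArcSharesConverge F a b c := by
      obtain ⟨c, rfl⟩ := Fin.exists_castSucc_eq.2 hc
      obtain ⟨b, rfl⟩ := Fin.exists_castSucc_eq.2 (Fin.ne_last_of_lt hbc)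
      obtain ⟨a, rfl⟩ := Fin.exists_castSucc_eq.2 (Fin.ne_last_of_lt hab)
      exact (pairSharesConverge_chord_iff hD hv hab hbc).1
        (pairSharesConverge_chord_of_sTilde hD hs hab hbc)
    exact (Converges.pi (converges_alphaMap_of_arcs hv harc)).prodMk
      (.pi fun l => .pi (converges_crossShare_of_arcs hD hv harc l))
  · have halpha : Tendsto (alphaMap n) F (𝓝 c.1) := (continuous_fst.tendsto c).comp hc
    have hcross : Tendsto crossShare F (𝓝 c.2) := (continuous_snd.tendsto c).comp hc
    have hv := tendsto_id_of_alphaMap halpha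
    refine Converges.prodMk ⟨_, hv⟩ (.pi (converges_sTilde_of_chord hD fun a b c hab hbc => ?_))
    exact (pairSharesConverge_chord_iff hD hv hab hbc).2 (arcSharesConverge_of_gammaMap hD
      (fun q => ⟨_, tendsto_pi_nhds.1 halpha q⟩)
      (fun l r => ⟨_, tendsto_pi_nhds.1 (tendsto_pi_nhds.1 hcross l) r⟩)
      (Fin.castSucc_lt_castSucc_iff.2 hab) (Fin.castSucc_lt_castSucc_iff.2 hbc)
      (Fin.castSucc_ne_last c))

end Arcs

section Blocks

variable {n : ℕ} {t : Fin n → ℝ} {x : TriIdx n → ℝ}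

theorem mem_Icc_of_mem_Assoc (hx : x ∈ Assoc n) (q : TriIdx n) : x q ∈ Set.Icc 0 1 := by
  refine closure_minimal (t := {x : TriIdx n → ℝ | x q ∈ Set.Icc 0 1}) ?_
    (isClosed_Icc.preimage (continuous_apply q)) hx
  rintro _ ⟨t, ht, rfl⟩
  exact Set.Ioo_subset_Icc_self (alphaMap_mem_Ioo ht q)

theorem reflectAlpha_mem_Assoc (hx : x ∈ Assoc n) : reflectAlpha x ∈ Assoc n := by
  refine map_mem_closure continuous_reflectAlpha hx ?_
  rintro _ ⟨t, ht, rfl⟩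
  exact ⟨reflect t, reflect_mem_openSimplex ht, alphaMap_reflect ht⟩

/-- The index of the coordinate of `α_n` that is the quotient of two distances from the
left end. -/
def leftTriple {l l' : Fin (n + 1)} (h : l < l') : TriIdx n :=
  ⟨(0, l.succ, l'.succ), Fin.succ_pos l, Fin.succ_lt_succ_iff.2 h⟩

theorem alphaMap_leftTriple (t : Fin n → ℝ) {l l' : Fin (n + 1)} (h : l < l') :
    alphaMap n t (leftTriple h) = leftDist t l / leftDist t l' :=
  alphaMap_zero t _

/-- The shares among the distances from the left end, as a function of the coordinates of `α_n`. -/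
noncomputable def leftBlock (x : TriIdx n → ℝ) (l l' : Fin (n + 1)) : ℝ :=
  if h : l < l' then share (x (leftTriple h)) 1
  else if h : l' < l then share 1 (x (leftTriple h)) else 1 / 2

theorem leftBlock_of_lt {l l' : Fin (n + 1)} (h : l < l') :
    leftBlock x l l' = share (x (leftTriple h)) 1 := dif_pos h

theorem leftBlock_of_gt {l l' : Fin (n + 1)} (h : l' < l) :
    leftBlock x l l' = share 1 (x (leftTriple h)) := by
  rw [leftBlock, dif_neg h.asymm, dif_pos h]

theorem leftBlock_self (l : Fin (n + 1)) : leftBlock x l l = 1 / 2 := by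
  rw [leftBlock, dif_neg (lt_irrefl l), dif_neg (lt_irrefl l)]

theorem leftBlock_alphaMap (ht : t ∈ openSimplex n) (l l' : Fin (n + 1)) :
    leftBlock (alphaMap n t) l l' = share (leftDist t l) (leftDist t l') := by
  have hl := leftDist_pos ht l
  have hl' := leftDist_pos ht l'
  rcases lt_trichotomy l l' with h | rfl | h
  · rw [leftBlock_of_lt h, alphaMap_leftTriple, share, share]
    field_simp
  · rw [leftBlock_self, share_self hl.ne']
  · rw [leftBlock_of_gt h, alphaMap_leftTriple, share, share]
    field_simp

theorem tendsto_leftBlock {T : Type*} {F : Filter T} {y : T → TriIdx n → ℝ} (hx : x ∈ Assoc n)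
    (hy : Tendsto y F (𝓝 x)) (l l' : Fin (n + 1)) :
    Tendsto (fun t => leftBlock (y t) l l') F (𝓝 (leftBlock x l l')) := by
  rw [tendsto_pi_nhds] at hy
  rcases lt_trichotomy l l' with h | rfl | h
  · simp only [leftBlock_of_lt h]
    exact tendsto_share (hy _) tendsto_const_nhds
      (add_pos_of_nonneg_of_pos (mem_Icc_of_mem_Assoc hx _).1 one_pos).ne'
  · simpa only [leftBlock_self] using tendsto_const_nhds
  · simp only [leftBlock_of_gt h]
    exact tendsto_share tendsto_const_nhds (hy _)
      (add_pos_of_pos_of_nonneg one_pos (mem_Icc_of_mem_Assoc hx _).1).ne'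

theorem isShareMatrix_leftBlock (hx : x ∈ Assoc n) : IsShareMatrix (leftBlock x) := by
  obtain ⟨y, hy, hlim⟩ := mem_closure_iff_seq_limit.1 hx
  refine IsShareMatrix.of_tendsto (fun k => ?_) (tendsto_leftBlock hx hlim)
  obtain ⟨t, ht, hty⟩ := hy k
  convert isShareMatrix_share (leftDist_pos ht)
  rw [← hty, leftBlock_alphaMap ht]

theorem leftBlock_last_pos (hx : x ∈ Assoc n) (l : Fin (n + 1)) :
    0 < leftBlock x (Fin.last n) l := by
  rcases (Fin.le_last l).eq_or_lt with rfl | h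
  · rw [leftBlock_self]
    exact one_half_pos
  · rw [leftBlock_of_gt h]
    exact div_pos one_pos (add_pos_of_pos_of_nonneg one_pos (mem_Icc_of_mem_Assoc hx _).1)

theorem eq_zero_of_leftBlock_eq_one (hx : x ∈ Assoc n) {l l' : Fin (n + 1)} (h : l < l')
    (h1 : leftBlock x l' l = 1) : x (leftTriple h) = 0 := by
  have h0 := (mem_Icc_of_mem_Assoc hx (leftTriple h)).1
  rw [leftBlock_of_gt h, share, div_eq_one_iff_eq (by linarith)] at h1
  linarith

/-- The shares among the distances from the right end, as a function of the coordinates of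
`α_n`. -/
noncomputable def rightBlock (x : TriIdx n → ℝ) : Fin (n + 1) → Fin (n + 1) → ℝ :=
  leftBlock (reflectAlpha x)

end Blocks

section Magnitude

variable {I : Type*} {M : I → I → ℝ} {c : I → ℝ} {e : I → ℕ}

theorem IsMagnitude.comp {J : Type*} (hc : IsMagnitude M c e) (φ : J → I) :
    IsMagnitude (fun a b => M (φ a) (φ b)) (c ∘ φ) (e ∘ φ) where
  pos a := hc.pos (φ a)
  eq_share a b := hc.eq_share (φ a) (φ b)
  eq_one a b := hc.eq_one (φ a) (φ b)

theorem IsMagnitude.eq_of_apply_eq_half (hM : IsShareMatrix M) (hc : IsMagnitude M c e) {a b : I}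
    (h : M a b = 1 / 2) : c a = c b ∧ e a = e b := by
  have hsum := hM.add_comm_eq_one a b
  rcases lt_trichotomy (e a) (e b) with he | he | he
  · linarith [hc.eq_one a b he]
  · have ha := hc.pos a
    have hb := hc.pos b
    rw [hc.eq_share a b he, share, div_eq_div_iff (add_pos ha hb).ne' two_ne_zero] at h
    exact ⟨by linarith, he⟩
  · linarith [hc.eq_one b a he]

variable {T : Type*} {F : Filter T} {ε : T → ℝ} {d d' : T → I → ℝ}

/-- The quantities `d t a` are of the size `c a * ε t ^ e a`. -/
def HasMagnitude (F : Filter T) (ε : T → ℝ) (d : T → I → ℝ) (c : I → ℝ) (e : I → ℕ) : Prop :=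
  ∀ a, Tendsto (fun t => d t a / ε t ^ e a) F (𝓝 (c a))

namespace HasMagnitude

theorem of_tendsto_div (hd : HasMagnitude F ε d c e) (hpos : ∀ᶠ t in F, ∀ a, 0 < d t a)
    (h : ∀ a, Tendsto (fun t => d' t a / d t a) F (𝓝 1)) : HasMagnitude F ε d' c e := by
  intro a
  have hmul := (h a).mul (hd a)
  rw [one_mul] at hmul
  refine hmul.congr' ?_
  filter_upwards [hpos] with t ht
  exact div_mul_div_cancel₀ (ht a).ne'

theorem tendsto_div_pow_of_lt (hd : HasMagnitude F ε d c e) (hε : ∀ᶠ t in F, 0 < ε t)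
    (hε₀ : Tendsto ε F (𝓝 0)) {a : I} {m : ℕ} (hm : m < e a) :
    Tendsto (fun t => d t a / ε t ^ m) F (𝓝 0) := by
  have hmul := (hd a).mul (hε₀.pow (e a - m))
  rw [zero_pow (Nat.sub_ne_zero_of_lt hm), mul_zero] at hmul
  refine hmul.congr' ?_
  filter_upwards [hε] with t ht
  rw [div_mul_eq_mul_div, pow_sub₀ _ ht.ne' hm.le, ← mul_assoc, div_eq_mul_inv, div_eq_mul_inv]
  field_simp

theorem tendsto_share (hd : HasMagnitude F ε d c e) (hM : IsShareMatrix M)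
    (hc : IsMagnitude M c e) (hε : ∀ᶠ t in F, 0 < ε t) (hε₀ : Tendsto ε F (𝓝 0)) (a b : I) :
    Tendsto (fun t => share (d t a) (d t b)) F (𝓝 (M a b)) := by
  have ha := (hc.pos a).ne'
  have hb := (hc.pos b).ne'
  have of_div_pow {m : ℕ} {u v : ℝ} (hu : Tendsto (fun t => d t a / ε t ^ m) F (𝓝 u))
      (hv : Tendsto (fun t => d t b / ε t ^ m) F (𝓝 v)) (huv : u + v ≠ 0) :
      Tendsto (fun t => share (d t a) (d t b)) F (𝓝 (share u v)) := by
    refine (_root_.tendsto_share hu hv huv).congr' ?_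
    filter_upwards [hε] with t ht
    rw [share, share, ← add_div, div_div_div_cancel_right₀ (pow_pos ht m).ne']
  rcases lt_trichotomy (e a) (e b) with h | h | h
  · have hlim := of_div_pow (hd a) (hd.tendsto_div_pow_of_lt hε hε₀ h) (by rwa [add_zero])
    rwa [share, add_zero, div_self ha, ← hc.eq_one a b h] at hlim
  · rw [hc.eq_share a b h]
    exact of_div_pow (hd a) (h ▸ hd b) (add_pos (hc.pos a) (hc.pos b)).ne'
  · have hlim := of_div_pow (hd.tendsto_div_pow_of_lt hε hε₀ h) (hd b) (by rwa [zero_add])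
    have hba := hM.add_comm_eq_one a b
    rw [hc.eq_one b a h, add_eq_right] at hba
    rwa [share, zero_div, ← hba] at hlim

end HasMagnitude

-- The factor of level `m` is read off a representative of that level.
theorem exists_level_factors {o : I} (hM : IsMagnitude M c e) (hco : c o = 1) (heo : e o = 0)
    (hε : ∀ᶠ t in F, 0 < ε t) (hd : ∀ᶠ t in F, ∀ a, 0 < d t a) (hdo : ∀ t, d t o = 1)
    (hlim : ∀ a b, Tendsto (fun t => share (d t a) (d t b)) F (𝓝 (M a b))) :
    ∃ s : T → ℕ → ℝ, (∀ᶠ t in F, ∀ m, 0 < s t m) ∧ (∀ t, s t 0 = 1) ∧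
      HasMagnitude F ε (fun t a => s t (e a) * d t a) c e := by
  obtain ⟨r, hro, hr⟩ := exists_representative e o
  refine ⟨fun t m => c (r m) * ε t ^ m / d t (r m), ?_, fun t => ?_, fun a => ?_⟩
  · filter_upwards [hε, hd] with t hε hd m
    exact div_pos (mul_pos (hM.pos _) (pow_pos hε m)) (hd _)
  · have hr0 : r 0 = o := heo ▸ hro
    simp only [hr0, hco, hdo, pow_zero, mul_one, div_one]
  · have ha := hM.pos a
    have hra := hM.pos (r (e a))
    have hne : M (r (e a)) a ≠ 0 := by
      rw [hM.eq_share _ _ (hr a)]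
      exact (share_pos hra ha).ne'
    have hquot := ((hlim a (r (e a))).div (hlim (r (e a)) a) hne).const_mul (c (r (e a)))
    rw [hM.eq_share _ _ (hr a).symm, hM.eq_share _ _ (hr a)] at hquot
    convert hquot.congr' ?_ using 2
    · rw [share, share, add_comm (c a)]
      field_simp
    · filter_upwards [hε, hd] with t hε hd
      have hda := hd a
      have hdr := hd (r (e a))
      simp only [Pi.div_apply, share, add_comm (d t a)]
      field_simp

end Magnitude

section Rescaling

/-- The configuration obtained from `t` by multiplying the distances of level `m` from the left end
by `s m`. -/
def rescale {n : ℕ} (s : ℕ → ℝ) (e : Fin (n + 1) → ℕ) (t : Fin n → ℝ) : Fin n → ℝ :=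
  fun i => s (e i.castSucc) * t i

theorem leftDist_rescale {n : ℕ} {s : ℕ → ℝ} {e : Fin (n + 1) → ℕ} (hs : s 0 = 1)
    (he : e (Fin.last n) = 0) (t : Fin n → ℝ) (l : Fin (n + 1)) :
    leftDist (rescale s e t) l = s (e l) * leftDist t l := by
  cases l using Fin.lastCases with
  | last => rw [leftDist_last, leftDist_last, he, hs, mul_one]
  | cast i => rw [leftDist, leftDist, ext01_castSucc_succ, ext01_castSucc_succ, rescale]

variable {T : Type*} {F : Filter T}

theorem tendsto_sub_div_sub {a b c : T → ℝ} {ρ σ : ℝ} (hb : ∀ᶠ t in F, b t ≠ 0)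
    (hc : ∀ᶠ t in F, c t ≠ 0) (hab : Tendsto (fun t => a t / b t) F (𝓝 ρ))
    (hbc : Tendsto (fun t => b t / c t) F (𝓝 σ)) (h : ρ * σ ≠ 1) :
    Tendsto (fun t => (b t - a t) / (c t - a t)) F (𝓝 ((σ - ρ * σ) / (1 - ρ * σ))) := by
  have hac := hab.mul hbc
  refine ((hbc.sub hac).div (tendsto_const_nhds.sub hac) (sub_ne_zero.2 h.symm)).congr' ?_
  filter_upwards [hb, hc] with t hb hc
  simp only [Pi.div_apply]
  rw [div_mul_div_cancel₀ hb, ← sub_div, one_sub_div hc, div_div_div_cancel_right₀ hc]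

variable {n : ℕ} {x : TriIdx n → ℝ} {c : Fin (n + 1) → ℝ} {e : Fin (n + 1) → ℕ} {ε : T → ℝ}
  {s : T → ℕ → ℝ} {u w : T → Fin n → ℝ}

theorem HasMagnitude.tendsto_leftDist_div
    (hw : HasMagnitude F ε (fun t => leftDist (w t)) c e) (hx : x ∈ Assoc n)
    (hc : IsMagnitude (leftBlock x) c e) (hε : ∀ᶠ t in F, 0 < ε t) (hε₀ : Tendsto ε F (𝓝 0))
    (hpos : ∀ᶠ t in F, ∀ l, 0 < leftDist (w t) l) {i j : Fin (n + 1)} (h : i < j) :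
    Tendsto (fun t => leftDist (w t) i / leftDist (w t) j) F (𝓝 (x (leftTriple h))) := by
  have hlim := hw.tendsto_share (isShareMatrix_leftBlock hx) hc hε hε₀
  have h0 := (mem_Icc_of_mem_Assoc hx (leftTriple h)).1
  have hden : 0 < share 1 (x (leftTriple h)) :=
    div_pos one_pos (add_pos_of_pos_of_nonneg one_pos h0)
  have hij := hlim i j
  have hji := hlim j i
  rw [leftBlock_of_lt h] at hij
  rw [leftBlock_of_gt h] at hji
  convert (hij.div hji hden.ne').congr' ?_ using 2
  · rw [share, share, add_comm 1, div_div_div_cancel_right₀ (by positivity), div_one]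
  · filter_upwards [hpos] with t ht
    have hi := ht i
    have hj := ht j
    simp only [Pi.div_apply]
    rw [share, share, add_comm (leftDist (w t) j), div_div_div_cancel_right₀ (by positivity)]

theorem level_eq_of_leftTriple_eq_one (hx : x ∈ Assoc n) (hc : IsMagnitude (leftBlock x) c e)
    {i j : Fin (n + 1)} (h : i < j) (h1 : x (leftTriple h) = 1) : e i = e j := by
  refine (hc.eq_of_apply_eq_half (isShareMatrix_leftBlock hx) ?_).2
  rw [leftBlock_of_lt h, h1, share_self one_ne_zero]

theorem eventually_mem_openSimplex_of_rescale (hx : x ∈ Assoc n)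
    (hc : IsMagnitude (leftBlock x) c e) (hs : ∀ᶠ t in F, ∀ m, 0 < s t m)
    (hscale : ∀ t l, leftDist (w t) l = s t (e l) * leftDist (u t) l)
    (hu : ∀ᶠ t in F, u t ∈ openSimplex n)
    (hlim : ∀ {i j : Fin (n + 1)} (h : i < j),
      Tendsto (fun t => leftDist (w t) i / leftDist (w t) j) F (𝓝 (x (leftTriple h)))) :
    ∀ᶠ t in F, w t ∈ openSimplex n := by
  have hlt {i j : Fin (n + 1)} (h : i < j) :
      ∀ᶠ t in F, leftDist (w t) i < leftDist (w t) j := by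
    by_cases h1 : x (leftTriple h) = 1
    · have he := level_eq_of_leftTriple_eq_one hx hc h h1
      filter_upwards [hs, hu] with t hs hu
      rw [hscale, hscale, he]
      exact mul_lt_mul_of_pos_left (mem_openSimplex_iff.1 hu (Fin.succ_lt_succ_iff.2 h)) (hs _)
    · have hx1 := lt_of_le_of_ne (mem_Icc_of_mem_Assoc hx (leftTriple h)).2 h1
      filter_upwards [(hlim h).eventually_lt_const hx1, hs, hu] with t hlt hs hu
      refine (div_lt_one ?_).1 hlt
      rw [hscale]
      exact mul_pos (hs _) (leftDist_pos hu j)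
  have hall : ∀ᶠ t in F, ∀ i j : Fin (n + 1), i < j → leftDist (w t) i < leftDist (w t) j :=
    eventually_all.2 fun i => eventually_all.2 fun j => eventually_imp_distrib_left.2 hlt
  filter_upwards [hall, hs, hu] with t hall hs hu
  refine mem_openSimplex_iff.2 fun i j hij => ?_
  obtain ⟨j, rfl⟩ := Fin.exists_succ_eq.2 (Fin.ne_zero_of_lt hij)
  cases i using Fin.cases with
  | zero =>
    change 0 < leftDist (w t) j
    rw [hscale]
    exact mul_pos (hs _) (leftDist_pos hu j)
  | succ i => exact hall i j (Fin.succ_lt_succ_iff.1 hij)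

theorem tendsto_alphaMap_of_rescale [NeBot F] (hx : x ∈ Assoc n)
    (hc : IsMagnitude (leftBlock x) c e) (hs : ∀ᶠ t in F, ∀ m, 0 < s t m)
    (hscale : ∀ t l, leftDist (w t) l = s t (e l) * leftDist (u t) l)
    (hu : ∀ᶠ t in F, u t ∈ openSimplex n) (hw : ∀ᶠ t in F, w t ∈ openSimplex n)
    (hα : Tendsto (fun t => alphaMap n (u t)) F (𝓝 x))
    (hlim : ∀ {i j : Fin (n + 1)} (h : i < j),
      Tendsto (fun t => leftDist (w t) i / leftDist (w t) j) F (𝓝 (x (leftTriple h)))) :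
    Tendsto (fun t => alphaMap n (w t)) F (𝓝 x) := by
  rw [tendsto_pi_nhds] at hα ⊢
  rintro ⟨⟨i, j, k⟩, hij, hjk⟩
  obtain ⟨j, rfl⟩ := Fin.exists_succ_eq.2 (Fin.ne_zero_of_lt hij)
  obtain ⟨k, rfl⟩ := Fin.exists_succ_eq.2 (Fin.ne_zero_of_lt hjk)
  have hjk' := Fin.succ_lt_succ_iff.1 hjk
  cases i using Fin.cases with
  | zero => exact (hlim hjk').congr fun t => (alphaMap_leftTriple (w t) hjk').symm
  | succ i =>
    have hij' := Fin.succ_lt_succ_iff.1 hij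
    -- Either the three distances have the same level and are multiplied by the same factor, or the
    -- limit is determined by quotients of distances from the left end.
    by_cases h1 : x (leftTriple hij') = 1 ∧ x (leftTriple hjk') = 1
    · have hei := level_eq_of_leftTriple_eq_one hx hc hij' h1.1
      have hej := level_eq_of_leftTriple_eq_one hx hc hjk' h1.2
      refine (hα _).congr' ?_
      filter_upwards [hs] with t hs
      change (leftDist (u t) j - leftDist (u t) i) / (leftDist (u t) k - leftDist (u t) i) =
        (leftDist (w t) j - leftDist (w t) i) / (leftDist (w t) k - leftDist (w t) i)
      rw [hscale, hscale, hscale, hei, hej, ← mul_sub, ← mul_sub, mul_div_mul_left _ _ (hs _).ne']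
    · have hρ := mem_Icc_of_mem_Assoc hx (leftTriple hij')
      have hσ := mem_Icc_of_mem_Assoc hx (leftTriple hjk')
      have hρσ : x (leftTriple hij') * x (leftTriple hjk') ≠ 1 := fun h =>
        h1 ⟨by nlinarith [hρ.1, hρ.2, hσ.1, hσ.2], by nlinarith [hρ.1, hρ.2, hσ.1, hσ.2]⟩
      have hne {v : T → Fin n → ℝ} (hv : ∀ᶠ t in F, v t ∈ openSimplex n) (l : Fin (n + 1)) :
          ∀ᶠ t in F, leftDist (v t) l ≠ 0 := hv.mono fun t ht => (leftDist_pos ht l).ne'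
      have hlimu {a b : Fin (n + 1)} (h : a < b) :=
        (hα (leftTriple h)).congr fun t => alphaMap_leftTriple (u t) h
      have hwq := tendsto_sub_div_sub (hne hw j) (hne hw k) (hlim hij') (hlim hjk') hρσ
      have huq := tendsto_sub_div_sub (hne hu j) (hne hu k) (hlimu hij') (hlimu hjk') hρσ
      rw [tendsto_nhds_unique (hα ⟨(i.succ, j.succ, k.succ), hij, hjk⟩) huq]
      exact hwq

theorem tendsto_rightDist_div_of_rescale (hx : x ∈ Assoc n)
    (hc : IsMagnitude (leftBlock x) c e) (he : e (Fin.last n) = 0) (hs : ∀ t, s t 0 = 1)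
    (hscale : ∀ t l, leftDist (w t) l = s t (e l) * leftDist (u t) l)
    (hu : ∀ᶠ t in F, u t ∈ openSimplex n) (hα : Tendsto (fun t => alphaMap n (u t)) F (𝓝 x))
    (hlim : ∀ {i j : Fin (n + 1)} (h : i < j),
      Tendsto (fun t => leftDist (w t) i / leftDist (w t) j) F (𝓝 (x (leftTriple h))))
    (r : Fin (n + 1)) :
    Tendsto (fun t => leftDist (reflect (w t)) r / leftDist (reflect (u t)) r) F (𝓝 1) := by
  rw [tendsto_pi_nhds] at hα
  simp only [leftDist, ext01_reflect, Fin.rev_succ]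
  have hr : r.rev.castSucc ≠ Fin.last (n + 1) := (Fin.castSucc_lt_last _).ne
  rcases eq_zero_or_interior_or_eq_last r.rev.castSucc with h | ⟨i, h⟩ | h
  · simp only [h, ext01_zero, sub_zero, div_one, tendsto_const_nhds]
  · rw [h]
    change Tendsto (fun t => (1 - leftDist (w t) i.castSucc) / (1 - leftDist (u t) i.castSucc))
      F (𝓝 1)
    by_cases hei : e i.castSucc = 0
    · refine tendsto_const_nhds.congr' ?_
      filter_upwards [hu] with t hu
      have hne := (sub_pos.2 (ext01_lt_one hu (h ▸ hr))).ne'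
      rw [hscale, hei, hs, one_mul]
      exact (div_self hne).symm
    · have hlt := Fin.castSucc_lt_last i
      have hzero : x (leftTriple hlt) = 0 := eq_zero_of_leftBlock_eq_one hx hlt
        (hc.eq_one _ _ (he ▸ Nat.pos_of_ne_zero hei))
      have hw0 := hlim hlt
      have hu0 := (hα (leftTriple hlt)).congr fun t => alphaMap_leftTriple (u t) hlt
      simp only [hzero, leftDist_last, div_one] at hw0 hu0
      have hdiv := (hw0.const_sub 1).div (hu0.const_sub 1) (by norm_num)
      rwa [sub_zero, div_one] at hdiv
  · exact absurd h hr

theorem exists_left_rescaling [NeBot F] (hx : x ∈ Assoc n) (hc : IsMagnitude (leftBlock x) c e)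
    (hc₀ : c (Fin.last n) = 1) (he₀ : e (Fin.last n) = 0) (hε : ∀ᶠ t in F, 0 < ε t)
    (hε₀ : Tendsto ε F (𝓝 0)) (hu : ∀ᶠ t in F, u t ∈ openSimplex n)
    (hα : Tendsto (fun t => alphaMap n (u t)) F (𝓝 x)) :
    ∃ w : T → Fin n → ℝ, (∀ᶠ t in F, w t ∈ openSimplex n) ∧
      Tendsto (fun t => alphaMap n (w t)) F (𝓝 x) ∧
      HasMagnitude F ε (fun t => leftDist (w t)) c e ∧
      ∀ r, Tendsto (fun t => leftDist (reflect (w t)) r / leftDist (reflect (u t)) r) F (𝓝 1) := by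
  have hupos : ∀ᶠ t in F, ∀ l, 0 < leftDist (u t) l := hu.mono fun t ht => leftDist_pos ht
  have hushare (l l' : Fin (n + 1)) :
      Tendsto (fun t => share (leftDist (u t) l) (leftDist (u t) l')) F
        (𝓝 (leftBlock x l l')) :=
    (tendsto_leftBlock hx hα l l').congr' (hu.mono fun t ht => leftBlock_alphaMap ht l l')
  obtain ⟨s, hs, hs₀, hmag⟩ :=
    exists_level_factors hc hc₀ he₀ hε hupos (fun t => leftDist_last (u t)) hushare
  let w : T → Fin n → ℝ := fun t => rescale (s t) e (u t)
  have hscale (t : T) (l : Fin (n + 1)) : leftDist (w t) l = s t (e l) * leftDist (u t) l :=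
    leftDist_rescale (hs₀ t) he₀ (u t) l
  have hw : HasMagnitude F ε (fun t => leftDist (w t)) c e := fun l =>
    (hmag l).congr fun t => congrArg (· / ε t ^ e l) (hscale t l).symm
  have hwpos : ∀ᶠ t in F, ∀ l, 0 < leftDist (w t) l := by
    filter_upwards [hs, hupos] with t hs hupos l
    rw [hscale]
    exact mul_pos (hs _) (hupos l)
  have hlim {i j : Fin (n + 1)} (h : i < j) := hw.tendsto_leftDist_div hx hc hε hε₀ hwpos h
  have hmem := eventually_mem_openSimplex_of_rescale hx hc hs hscale hu hlim
  exact ⟨w, hmem, tendsto_alphaMap_of_rescale hx hc hs hscale hu hmem hα hlim, hw,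
    tendsto_rightDist_div_of_rescale hx hc he₀ hs₀ hscale hu hα hlim⟩

end Rescaling

section Fiber

theorem isGluing_share {L R : Type*} {d : L → ℝ} {d' : R → ℝ} (hd : ∀ l, 0 < d l)
    (hd' : ∀ r, 0 < d' r) :
    IsGluing (fun l l' => share (d l) (d l')) (fun r r' => share (d' r) (d' r'))
      (fun l r => share (d l) (d' r)) where
  mem_Icc l r := ⟨share_nonneg (hd l).le (hd' r).le,
    div_le_one_of_le₀ (by linarith [hd' r]) (add_pos (hd l) (hd' r)).le⟩
  left l l' r := by
    have hl := hd l
    have hl' := hd l'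
    have hr := hd' r
    unfold OddsRel share
    field_simp
    ring
  right l r r' := by
    have hl := hd l
    have hr := hd' r
    have hr' := hd' r'
    unfold OddsRel share
    field_simp
    ring

theorem exists_isMagnitude_glue {L R : Type*} [Finite L] [Finite R] {A : L → L → ℝ}
    {B : R → R → ℝ} {o : L} {o' : R} {f : L → R → ℝ} (hA : IsShareMatrix A)
    (hB : IsShareMatrix B) (ho : ∀ l, 0 < A o l) (ho' : ∀ r, 0 < B o' r)
    (hf : f ∈ gluings A B o o') :
    ∃ c e, IsMagnitude (glue A B f) c e ∧ c (.inl o) = 1 ∧ e (.inl o) = 0 ∧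
      c (.inr o') = 1 ∧ e (.inr o') = 0 := by
  have hglue := hf.1.isShareMatrix_glue hA hB
  have hbase : ∀ a, 0 < glue A B f (.inl o) a := by
    rintro (l | r)
    · exact ho l
    · exact (ho' r).trans_eq (apply_base_of_mem_gluings hB hf r).symm
  obtain ⟨c, e, hc, hc₀, he₀⟩ := hglue.exists_isMagnitude (.inl o) hbase
  obtain ⟨hc', he'⟩ := hc.eq_of_apply_eq_half hglue (a := .inl o) (b := .inr o') hf.2
  exact ⟨c, e, hc, hc₀, he₀, hc' ▸ hc₀, he' ▸ he₀⟩

variable {n : ℕ} {x : TriIdx n → ℝ} {f : Fin (n + 1) → Fin (n + 1) → ℝ}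

theorem reflect_reflect (t : Fin n → ℝ) : reflect (reflect t) = t := by
  funext i
  simp only [reflect, Fin.rev_rev, sub_sub_cancel]

theorem reflectAlpha_reflectAlpha (x : TriIdx n → ℝ) : reflectAlpha (reflectAlpha x) = x := by
  funext q
  simp only [reflectAlpha, Fin.rev_rev, sub_sub_cancel]

theorem tendsto_alphaMap_reflect {T : Type*} {F : Filter T} {u : T → Fin n → ℝ}
    (hu : ∀ᶠ t in F, u t ∈ openSimplex n) (hα : Tendsto (fun t => alphaMap n (u t)) F (𝓝 x)) :
    Tendsto (fun t => alphaMap n (reflect (u t))) F (𝓝 (reflectAlpha x)) :=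
  ((continuous_reflectAlpha.tendsto x).comp hα).congr'
    (hu.mono fun _ ht => (alphaMap_reflect ht).symm)

theorem exists_tendsto_alphaMap_of_isMagnitude {c c' : Fin (n + 1) → ℝ} {e e' : Fin (n + 1) → ℕ}
    {ε : ℕ → ℝ} (hx : x ∈ Assoc n) (hc : IsMagnitude (leftBlock x) c e)
    (hc' : IsMagnitude (rightBlock x) c' e') (hc₀ : c (Fin.last n) = 1) (he₀ : e (Fin.last n) = 0)
    (hc₀' : c' (Fin.last n) = 1) (he₀' : e' (Fin.last n) = 0) (hε : ∀ᶠ k in atTop, 0 < ε k)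
    (hε₀ : Tendsto ε atTop (𝓝 0)) :
    ∃ z : ℕ → Fin n → ℝ, (∀ᶠ k in atTop, z k ∈ openSimplex n) ∧
      Tendsto (fun k => alphaMap n (z k)) atTop (𝓝 x) ∧
      HasMagnitude atTop ε (fun k => leftDist (z k)) c e ∧
      HasMagnitude atTop ε (fun k => leftDist (reflect (z k))) c' e' := by
  obtain ⟨y, hy, hyx⟩ := mem_closure_iff_seq_limit.1 hx
  choose u hu huy using hy
  obtain rfl : y = fun k => alphaMap n (u k) := funext fun k => (huy k).symm
  obtain ⟨v, hv, hvα, hvmag, -⟩ :=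
    exists_left_rescaling hx hc hc₀ he₀ hε hε₀ (.of_forall hu) hyx
  obtain ⟨w, hw, hwα, hwmag, hwv⟩ := exists_left_rescaling (reflectAlpha_mem_Assoc hx) hc' hc₀'
    he₀' hε hε₀ (hv.mono fun _ => reflect_mem_openSimplex) (tendsto_alphaMap_reflect hv hvα)
  simp only [reflect_reflect] at hwv
  have hzα := tendsto_alphaMap_reflect hw hwα
  rw [reflectAlpha_reflectAlpha] at hzα
  refine ⟨fun k => reflect (w k), hw.mono fun _ => reflect_mem_openSimplex, hzα,
    hvmag.of_tendsto_div (hv.mono fun _ ht => leftDist_pos ht) hwv, ?_⟩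
  simpa only [reflect_reflect] using hwmag

theorem mem_closure_gammaMap_of_mem_gluings (hx : x ∈ Assoc n)
    (hf : f ∈ gluings (leftBlock x) (rightBlock x) (Fin.last n) (Fin.last n)) :
    (x, f) ∈ closure (gammaMap n '' openSimplex n) := by
  have hA := isShareMatrix_leftBlock hx
  have hB : IsShareMatrix (rightBlock x) := isShareMatrix_leftBlock (reflectAlpha_mem_Assoc hx)
  obtain ⟨c, e, hc, hc₀, he₀, hc₀', he₀'⟩ := exists_isMagnitude_glue hA hB
    (leftBlock_last_pos hx) (leftBlock_last_pos (reflectAlpha_mem_Assoc hx)) hf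
  have hε : ∀ᶠ k : ℕ in atTop, 0 < 1 / ((k : ℝ) + 1) := .of_forall fun _ => Nat.one_div_pos_of_nat
  have hε₀ := tendsto_one_div_add_atTop_nhds_zero_nat (𝕜 := ℝ)
  obtain ⟨z, hz, hzα, hleft, hright⟩ := exists_tendsto_alphaMap_of_isMagnitude hx
    (hc.comp Sum.inl) (hc.comp Sum.inr) hc₀ he₀ hc₀' he₀' hε hε₀
  have hmag : HasMagnitude atTop (fun k : ℕ => 1 / ((k : ℝ) + 1))
      (fun k => Sum.elim (leftDist (z k)) (leftDist (reflect (z k)))) c e :=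
    Sum.rec hleft hright
  have hcross : Tendsto (fun k => crossShare (z k)) atTop (𝓝 f) :=
    tendsto_pi_nhds.2 fun l => tendsto_pi_nhds.2 fun r =>
      hmag.tendsto_share (hf.1.isShareMatrix_glue hA hB) hc hε hε₀ (.inl l) (.inr r)
  exact mem_closure_of_tendsto (hzα.prodMk_nhds hcross) (hz.mono fun k hk => ⟨z k, hk, rfl⟩)

theorem fst_mem_Assoc {z : (TriIdx n → ℝ) × (Fin (n + 1) → Fin (n + 1) → ℝ)}
    (hz : z ∈ closure (gammaMap n '' openSimplex n)) : z.1 ∈ Assoc n := by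
  refine map_mem_closure continuous_fst hz ?_
  rintro _ ⟨t, ht, rfl⟩
  exact ⟨t, ht, rfl⟩

theorem crossShare_mem_gluings {t : Fin n → ℝ} (ht : t ∈ openSimplex n) :
    crossShare t ∈ gluings (leftBlock (alphaMap n t)) (rightBlock (alphaMap n t))
      (Fin.last n) (Fin.last n) := by
  have ht' := reflect_mem_openSimplex ht
  refine ⟨?_, ?_⟩
  · convert isGluing_share (leftDist_pos ht) (leftDist_pos ht') using 1
    · funext l l'
      exact leftBlock_alphaMap ht l l'
    · funext r r'
      rw [rightBlock, ← alphaMap_reflect ht, leftBlock_alphaMap ht']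
    · rfl
  · rw [crossShare, leftDist_last, leftDist_last, share_self one_ne_zero]

theorem mem_closure_gammaMap_iff (hx : x ∈ Assoc n) :
    (x, f) ∈ closure (gammaMap n '' openSimplex n) ↔
      f ∈ gluings (leftBlock x) (rightBlock x) (Fin.last n) (Fin.last n) := by
  refine ⟨fun h => ?_, mem_closure_gammaMap_of_mem_gluings hx⟩
  obtain ⟨y, hy, hlim⟩ := mem_closure_iff_seq_limit.1 h
  have hfst : Tendsto (fun k => (y k).1) atTop (𝓝 x) := hlim.fst_nhds
  have hsnd (l r : Fin (n + 1)) : Tendsto (fun k => (y k).2 l r) atTop (𝓝 (f l r)) :=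
    tendsto_pi_nhds.1 (tendsto_pi_nhds.1 hlim.snd_nhds l) r
  have hmem (k : ℕ) : (y k).2 ∈ gluings (leftBlock (y k).1) (rightBlock (y k).1)
      (Fin.last n) (Fin.last n) := by
    obtain ⟨t, ht, hty⟩ := hy k
    rw [← hty]
    exact crossShare_mem_gluings ht
  refine ⟨.of_tendsto (fun k => (hmem k).1) (tendsto_leftBlock hx hfst)
    (tendsto_leftBlock (reflectAlpha_mem_Assoc hx)
      ((continuous_reflectAlpha.tendsto x).comp hfst)) hsnd, ?_⟩
  exact tendsto_nhds_unique (hsnd _ _) (tendsto_const_nhds.congr fun k => (hmem k).2.symm)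

theorem contractibleSpace_fiber_gammaMap (hx : x ∈ Assoc n) :
    ContractibleSpace {z : closure (gammaMap n '' openSimplex n) // z.1.1 = x} := by
  have hgluings : ContractibleSpace
      (gluings (leftBlock x) (rightBlock x) (Fin.last n) (Fin.last n)) :=
    contractibleSpace_gluings (isShareMatrix_leftBlock hx)
      (isShareMatrix_leftBlock (reflectAlpha_mem_Assoc hx)) (leftBlock_last_pos hx)
      (leftBlock_last_pos (reflectAlpha_mem_Assoc hx))
  have hfst (z : {z : closure (gammaMap n '' openSimplex n) // z.1.1 = x}) :
      z.1.1 = (x, z.1.1.2) := Prod.ext z.2 rfl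
  let E : {z : closure (gammaMap n '' openSimplex n) // z.1.1 = x} ≃ₜ
      gluings (leftBlock x) (rightBlock x) (Fin.last n) (Fin.last n) :=
    { toFun := fun z => ⟨z.1.1.2, (mem_closure_gammaMap_iff hx).1 (hfst z ▸ z.1.2)⟩
      invFun := fun f => ⟨⟨(x, f.1), (mem_closure_gammaMap_iff hx).2 f.2⟩, rfl⟩
      left_inv := fun z => Subtype.ext (Subtype.ext (hfst z).symm)
      right_inv := fun _ => rfl
      continuous_toFun := by fun_prop
      continuous_invFun := by fun_prop }
  exact E.contractibleSpace

end Fiber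

theorem dense_image_betaMap (n : ℕ) : Dense {z : Cycl n | z.1 ∈ betaMap n '' openSimplex n} :=
  Subtype.dense_iff.2 (closure_mono fun z hz => ⟨⟨z, subset_closure hz⟩, hz, rfl⟩)

/-- **Theorem 2.** There is a continuous map `π_n : Cycl_n → Assoc_n` with
`π_n ∘ β_n = α_n` on `Δ^n`; such a map is unique, and the preimage of every point of
`Assoc_n` under `π_n` is contractible. -/
theorem projection_cyclohedron_to_associahedron (n : ℕ) (hn : 1 ≤ n) :
    ∃ piN : ↥(Cycl n) → ↥(Assoc n),
      Continuous piN ∧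
      (∀ t (ht : t ∈ openSimplex n),
        piN ⟨betaMap n t, subset_closure (Set.mem_image_of_mem _ ht)⟩ =
          ⟨alphaMap n t, subset_closure (Set.mem_image_of_mem _ ht)⟩) ∧
      (∀ piN' : ↥(Cycl n) → ↥(Assoc n), Continuous piN' →
        (∀ t (ht : t ∈ openSimplex n),
          piN' ⟨betaMap n t, subset_closure (Set.mem_image_of_mem _ ht)⟩ =
            ⟨alphaMap n t, subset_closure (Set.mem_image_of_mem _ ht)⟩) →
        piN' = piN) ∧
      ∀ x : ↥(Assoc n), ContractibleSpace ↥(piN ⁻¹' {x}) := by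
  obtain ⟨e, he⟩ := exists_homeomorph_gammaMap n
  let piN : Cycl n → Assoc n := fun z => ⟨(e z).1.1, fst_mem_Assoc (e z).2⟩
  have hcont : Continuous piN := by fun_prop
  have hβ (t) (ht : t ∈ openSimplex n) :
      piN ⟨betaMap n t, subset_closure (Set.mem_image_of_mem _ ht)⟩ =
        ⟨alphaMap n t, subset_closure (Set.mem_image_of_mem _ ht)⟩ :=
    Subtype.ext (congrArg Prod.fst (he t ht _))
  refine ⟨piN, hcont, hβ, fun piN' hcont' hβ' => ?_, fun x => ?_⟩
  · refine hcont'.ext_on (dense_image_betaMap n) hcont ?_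
    rintro ⟨_, hz⟩ ⟨t, ht, rfl⟩
    exact (hβ' t ht).trans (hβ t ht).symm
  · have := contractibleSpace_fiber_gammaMap x.2
    exact (e.subtype (q := fun z => z.1.1 = x.1) fun z => Subtype.ext_iff).contractibleSpace
end

section
/- Let T be a finite rooted tree with at least one internal vertex and let (T', L') be a leveled tree such that T ≥ T' (T' is obtained from T by contracting a set of internal edges). Then the subposet of X_T consisting of those levelizations L of T for which (T, L) ≥ (T', L') has contractible geometric realization. (Lemma 7.3 of the paper; in fact this subposet is isomorphic to a product of posets of the form X_{T_i}, one for each level of (T', L'), where each T_i is obtained from T by contracting some edges.) -/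
/-- A levelization of (the internal vertices of) a rooted tree, viewed as a preordered
type `V`: a surjection onto a finite ordinal `Fin m` that is strictly order-preserving. -/
structure Levelization (V : Type) [Preorder V] where
  m : ℕ
  level : V → Fin m
  surj : Function.Surjective level
  strict : ∀ v w : V, v < w → level v < level w

/-- The preorder on levelizations: `L' ≤ L` iff `L'` is obtained from `L` by merging
levels, i.e. `L'.level = φ ∘ L.level` for a weakly monotone surjection `φ`. -/
instance Levelization.instPreorder (V : Type) [Preorder V] : Preorder (Levelization V) where
  le A B := ∃ φ : Fin B.m → Fin A.m, Monotone φ ∧ Function.Surjective φ ∧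
    ∀ v, A.level v = φ (B.level v)
  le_refl A := ⟨id, monotone_id, Function.surjective_id, fun _ => rfl⟩
  le_trans A B C := by
    rintro ⟨φ, hφm, hφs, hφ⟩ ⟨ψ, hψm, hψs, hψ⟩
    exact ⟨φ ∘ ψ, hφm.comp hψm, hφs.comp hψs, fun v => by simp [hφ v, hψ v]⟩

/-!
Choose weights on a chain of levelizations and average the level functions with these weights:
this maps the realization to the convex cone `C` of real-valued functions on `V` that satisfy the
required strict inequalities. In the other direction, `C` is covered by the open sets of those `x`
from which a given levelization `L` arises by sorting the vertices by `x` and separating levels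
only at gaps larger than some scale `t`. Levelizations arising from one `x` at different scales
form a chain, so a partition of unity subordinate to the cover maps `C` to the realization. Across
a set `S` of vertices, the average of a point increases at most by the total weight of the
levelizations having `S` among their cuts, and by at least this weight if there are any in the
support. Hence every levelization in the support arises from the average, so the composite is
homotopic to the identity through straight segments inside simplices, and it factors through the
contractible space `C`.
-/

namespace PosetRealization

variable {P : Type*} [Preorder P]

theorem exists_ne_zero (f : PosetRealization P) : ∃ p, f.1 p ≠ 0 := by
  by_contra! h
  simpa [h] using f.2.2.2.1

theorem le_total_of_ne_zero (f : PosetRealization P) {p q : P} (hp : f.1 p ≠ 0) (hq : f.1 q ≠ 0) :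
    p ≤ q ∨ q ≤ p :=
  f.2.2.2.2.total hp hq

theorem continuous_coord (p : P) : Continuous fun f : PosetRealization P => f.1 p :=
  (continuous_apply p).comp continuous_subtype_val

theorem convexCombination_mem (f g : PosetRealization P)
    (hfg : IsChain (· ≤ ·) (Function.support f.1 ∪ Function.support g.1)) (t : unitInterval) :
    (fun p => (1 - (t : ℝ)) * f.1 p + t * g.1 p) ∈ PosetRealization P := by
  have hsub : Function.support (fun p => (1 - (t : ℝ)) * f.1 p + t * g.1 p) ⊆
      Function.support f.1 ∪ Function.support g.1 :=
    (Function.support_add _ _).trans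
      (Set.union_subset_union (Function.support_mul_subset_right _ _)
        (Function.support_mul_subset_right _ _))
  refine ⟨fun p => ?_, (f.2.2.1.union g.2.2.1).subset hsub, ?_, hfg.mono hsub⟩
  · exact add_nonneg (mul_nonneg (sub_nonneg.2 t.2.2) (f.2.1 p)) (mul_nonneg t.2.1 (g.2.1 p))
  · rw [finsum_add_distrib (f.2.2.1.subset (Function.support_mul_subset_right _ _))
        (g.2.2.1.subset (Function.support_mul_subset_right _ _)), ← mul_finsum,
      ← mul_finsum, f.2.2.2.1, g.2.2.2.1]
    ring

theorem homotopic_of_isChain_union {X : Type*} [TopologicalSpace X]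
    (g h : C(X, PosetRealization P))
    (hgh : ∀ x, IsChain (· ≤ ·) (Function.support (g x).1 ∪ Function.support (h x).1)) :
    g.Homotopic h :=
  ⟨{ toFun := fun tx => ⟨_, convexCombination_mem (g tx.2) (h tx.2) (hgh tx.2) tx.1⟩
     continuous_toFun := by
      refine Continuous.subtype_mk (continuous_pi fun p => ?_) _
      have hg : Continuous fun tx : unitInterval × X => (g tx.2).1 p :=
        (continuous_coord p).comp (g.continuous.comp continuous_snd)
      have hh : Continuous fun tx : unitInterval × X => (h tx.2).1 p :=
        (continuous_coord p).comp (h.continuous.comp continuous_snd)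
      have ht : Continuous fun tx : unitInterval × X => (tx.1 : ℝ) := by fun_prop
      exact ((continuous_const.sub ht).mul hg).add (ht.mul hh)
     map_zero_left := fun x => by ext p; simp
     map_one_left := fun x => by ext p; simp }⟩

theorem contractibleSpace_of_isOpen_cover {Y : Type*} [TopologicalSpace Y] [NormalSpace Y]
    [ParacompactSpace Y] [ContractibleSpace Y] (U : P → Set Y) (hopen : ∀ p, IsOpen (U p))
    (hcover : ∀ y, ∃ p, y ∈ U p) (hchain : ∀ y, IsChain (· ≤ ·) {p | y ∈ U p})
    (i : C(PosetRealization P, Y)) (hi : ∀ f p, f.1 p ≠ 0 → i f ∈ U p) :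
    ContractibleSpace (PosetRealization P) := by
  obtain ⟨ρ, hρ⟩ := PartitionOfUnity.exists_isSubordinate isClosed_univ U hopen
    fun y _ => Set.mem_iUnion.2 (hcover y)
  have hρU : ∀ y p, ρ p y ≠ 0 → y ∈ U p := fun y p h => hρ p (subset_tsupport _ h)
  let r : C(Y, PosetRealization P) :=
    ⟨fun y => ⟨fun p => ρ p y, fun p => ρ.nonneg p y, ρ.locallyFinite.point_finite y,
      ρ.sum_eq_one (Set.mem_univ y), (hchain y).mono (hρU y)⟩, by fun_prop⟩
  have hri : (r.comp i).Homotopic (ContinuousMap.id _) :=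
    homotopic_of_isChain_union _ _ fun f =>
      (hchain (i f)).mono (Set.union_subset (hρU (i f)) (hi f))
  rw [contractible_iff_id_nullhomotopic]
  obtain ⟨f, hf⟩ := ((id_nullhomotopic Y).comp_left i).comp_right r
  exact ⟨f, hri.symm.trans hf⟩

end PosetRealization

theorem convex_setOf_lt_of_rel {V : Type*} (R : V → V → Prop) :
    Convex ℝ {x : V → ℝ | ∀ v w, R v w → x v < x w} := by
  intro x hx y hy a b ha hb hab v w hvw
  have hpos : 0 < a * (x w - x v) + b * (y w - y v) :=
    convex_Ioi 0 (sub_pos.2 (hx v w hvw)) (sub_pos.2 (hy v w hvw)) ha hb hab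
  simp only [Pi.add_apply, Pi.smul_apply, smul_eq_mul]
  linarith

namespace Levelization

variable {V : Type} [Preorder V]

theorem exists_factorization_iff (L : Levelization V) {n : ℕ} {l : V → Fin n}
    (hl : Function.Surjective l) :
    (∃ φ : Fin L.m → Fin n, Monotone φ ∧ Function.Surjective φ ∧ ∀ v, l v = φ (L.level v)) ↔
      ∀ v w, l v < l w → L.level v < L.level w := by
  constructor
  · rintro ⟨φ, hφ, -, hlφ⟩ v w hvw
    rw [hlφ, hlφ] at hvw
    exact hφ.reflect_lt hvw
  · intro h
    have hle : ∀ v w, L.level v ≤ L.level w → l v ≤ l w := fun v w hvw =>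
      not_lt.1 fun hlt => (h w v hlt).not_ge hvw
    let s := Function.surjInv L.surj
    have hs : ∀ i, L.level (s i) = i := Function.surjInv_eq L.surj
    have hls : ∀ v, l v = l (s (L.level v)) := fun v =>
      le_antisymm (hle _ _ (hs _).ge) (hle _ _ (hs _).le)
    refine ⟨l ∘ s, fun i j hij => hle _ _ (by simpa only [hs] using hij), fun i => ?_, hls⟩
    obtain ⟨v, rfl⟩ := hl i
    exact ⟨L.level v, (hls v).symm⟩

theorem le_iff_level_lt {A B : Levelization V} :
    A ≤ B ↔ ∀ v w, A.level v < A.level w → B.level v < B.level w :=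
  B.exists_factorization_iff A.surj

theorem level_le_of_le_total {A B : Levelization V} (hAB : A ≤ B ∨ B ≤ A) {v w : V}
    (h : A.level v < A.level w) : B.level v ≤ B.level w := by
  rcases hAB with hAB | hBA
  · exact (le_iff_level_lt.1 hAB v w h).le
  · exact not_lt.1 fun hlt => h.asymm (le_iff_level_lt.1 hBA w v hlt)

instance [Finite V] : Finite (Levelization V) := by
  have hm : ∀ L : Levelization V, L.m < Nat.card V + 1 := fun L => by
    simpa [Nat.lt_succ_iff] using Nat.card_le_card_of_surjective _ L.surj
  refine Finite.of_injective
    (fun L => (⟨⟨L.m, hm L⟩, L.level⟩ : Σ m : Fin (Nat.card V + 1), (V → Fin m))) ?_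
  rintro ⟨m, l, _, _⟩ ⟨m', l', _, _⟩ h
  simp only [Sigma.mk.injEq, Fin.mk.injEq] at h
  obtain ⟨rfl, h⟩ := h
  cases h
  rfl

theorem exists_level_lt_iff [Finite V] {α : Type*} [LinearOrder α] {x : V → α}
    (hx : StrictMono x) : ∃ L : Levelization V, ∀ v w, L.level v < L.level w ↔ x v < x w := by
  have : Fintype V := Fintype.ofFinite V
  let e := (Finset.univ.image x).orderIsoOfFin rfl
  let l : V → Fin (Finset.univ.image x).card :=
    fun v => e.symm ⟨x v, Finset.mem_image_of_mem x (Finset.mem_univ v)⟩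
  have hl : ∀ v w, l v < l w ↔ x v < x w := fun v w => by
    simp only [l, OrderIso.lt_iff_lt, Subtype.mk_lt_mk]
  refine ⟨⟨_, l, fun i => ?_, fun v w h => (hl v w).2 (hx h)⟩, hl⟩
  obtain ⟨v, -, hv⟩ := Finset.mem_image.1 (e i).2
  exact ⟨v, e.symm_apply_eq.2 (Subtype.ext hv)⟩

theorem exists_level_lt_of_monotone [Finite V] {α : Type*} [LinearOrder α] {l : V → α}
    (hl : Monotone l) : ∃ L : Levelization V, ∀ v w, l v < l w → L.level v < L.level w := by
  let below : V → Set V := fun v => {u | u < v ∨ l u < l v}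
  have hbelow : ∀ v w, v < w ∨ l v < l w → (below v).ncard < (below w).ncard := by
    intro v w hvw
    refine Set.ncard_lt_ncard ⟨fun u hu => ?_, fun h => ?_⟩
    · rcases hu with huv | huv <;> rcases hvw with hvw | hvw
      · exact Or.inl (huv.trans hvw)
      · exact Or.inr ((hl huv.le).trans_lt hvw)
      · exact Or.inr (huv.trans_le (hl hvw.le))
      · exact Or.inr (huv.trans hvw)
    · exact (h hvw).elim (lt_irrefl v) (lt_irrefl (l v))
  obtain ⟨L, hL⟩ := exists_level_lt_iff (x := fun v => (below v).ncard)
    fun v w h => hbelow v w (Or.inl h)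
  exact ⟨L, fun v w h => (hL v w).2 (hbelow v w (Or.inr h))⟩

/-- A cut of `L` is the set of vertices in the first few levels of `L`. The empty set and the whole
of `V` count as cuts. -/
def IsCut (L : Levelization V) (S : Set V) : Prop :=
  ∀ u ∈ S, ∀ z ∉ S, L.level u < L.level z

theorem not_isCut_iff {L : Levelization V} {S : Set V} :
    ¬L.IsCut S ↔ ∃ a ∈ S, ∃ b ∉ S, L.level b ≤ L.level a := by
  simp [IsCut]

theorem isCut_setOf_level_le (L : Levelization V) (v : V) :
    L.IsCut {u | L.level u ≤ L.level v} :=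
  fun _ hu _ hz => hu.trans_lt (not_le.1 hz)

theorem IsCut.mono {A B : Levelization V} (hAB : A ≤ B) {S : Set V} (hS : A.IsCut S) :
    B.IsCut S :=
  fun u hu z hz => le_iff_level_lt.1 hAB u z (hS u hu z hz)

/-- `L` arises from `x` by single-linkage clustering at scale `t`: the cuts of `L` are exactly the
sets across which `x` increases by at least `t`, and it increases by more than `t` across each of
them, which makes the condition open in `x`. -/
def IsClustering (L : Levelization V) (x : V → ℝ) (t : ℝ) : Prop :=
  (∀ u z, L.level u < L.level z → x u + t < x z) ∧
    ∀ S : Set V, (∀ u ∈ S, ∀ z ∉ S, x u + t ≤ x z) → L.IsCut S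

theorem IsClustering.le_of_le {A B : Levelization V} {x : V → ℝ} {s t : ℝ}
    (hA : A.IsClustering x s) (hB : B.IsClustering x t) (hst : s ≤ t) : B ≤ A := by
  refine le_iff_level_lt.2 fun v w hvw => ?_
  have hcut : A.IsCut {u | B.level u ≤ B.level v} := hA.2 _ fun u hu z hz => by
    linarith [hB.1 u z (B.isCut_setOf_level_le v u hu z hz)]
  exact hcut v (le_refl (B.level v)) w hvw.not_ge

theorem isOpen_setOf_exists_isClustering [Finite V] (L : Levelization V) :
    IsOpen {x | ∃ t, L.IsClustering x t} := by
  refine isOpen_iff_eventually.2 fun x ⟨t, hlevel, hcut⟩ => ?_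
  refine (Filter.Eventually.and ?_ ?_).mono fun y hy => (⟨t, hy⟩ : ∃ t, L.IsClustering y t)
  · simp only [Filter.eventually_all]
    exact fun u z huz => (isOpen_lt ((continuous_apply u).add continuous_const)
      (continuous_apply z)).eventually_mem (hlevel u z huz)
  · refine Filter.eventually_all.2 fun S => ?_
    by_cases hS : L.IsCut S
    · exact .of_forall fun _ _ => hS
    · obtain ⟨u, hu, z, hz, huz⟩ : ∃ u ∈ S, ∃ z ∉ S, x z < x u + t := by
        by_contra! h
        exact hS (hcut S h)
      have hopen : IsOpen {y : V → ℝ | y z < y u + t} := isOpen_lt (by fun_prop) (by fun_prop)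
      filter_upwards [hopen.eventually_mem huz] with y (hy : y z < y u + t) hyS
      exact absurd hy (hyS u hu z hz).not_gt

theorem exists_isClustering_of_level_lt_iff [Finite V] {L : Levelization V} {x : V → ℝ}
    (h : ∀ v w, L.level v < L.level w ↔ x v < x w) : ∃ t, L.IsClustering x t := by
  have hsmall : ∀ᶠ t in nhdsWithin (0 : ℝ) (Set.Ioi 0), ∀ u z, x u < x z → x u + t < x z := by
    simp only [Filter.eventually_all]
    intro u z huz
    filter_upwards [nhdsWithin_le_nhds (Iio_mem_nhds (sub_pos.2 huz))] with t ht
    linarith [Set.mem_Iio.1 ht]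
  obtain ⟨t, ht, ht0 : 0 < t⟩ := (hsmall.and self_mem_nhdsWithin).exists
  refine ⟨t, fun u z huz => ht u z ((h u z).1 huz), fun S hS u hu z hz => (h u z).2 ?_⟩
  linarith [hS u hu z hz]

section MeanLevel

variable {Q : Levelization V → Prop} [Fintype {L // Q L}]

/-- The average of the level functions of the levelizations supporting a point of the realization,
weighted by the barycentric coordinates of that point. -/
def meanLevel (f : PosetRealization {L // Q L}) (v : V) : ℝ :=
  ∑ p, f.1 p * (p.1.level v : ℝ)

open Classical in
/-- The total weight, at a point of the realization, of the levelizations that refine `q`. It is the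
scale below which clustering the average of the point retains all cuts of `q`. -/
noncomputable def upperWeight (f : PosetRealization {L // Q L}) (q : {L // Q L}) : ℝ :=
  ∑ p with q ≤ p, f.1 p

variable {f : PosetRealization {L // Q L}} {p q : {L // Q L}}

theorem continuous_meanLevel : Continuous (meanLevel : PosetRealization {L // Q L} → V → ℝ) :=
  continuous_pi fun _ => continuous_finsetSum _ fun p _ =>
    (PosetRealization.continuous_coord p).mul continuous_const

theorem meanLevel_sub (v w : V) :
    meanLevel f w - meanLevel f v = ∑ p, f.1 p * ((p.1.level w : ℝ) - p.1.level v) := by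
  simp only [meanLevel, ← Finset.sum_sub_distrib, mul_sub]

open Classical in
theorem upperWeight_le_meanLevel_sub (hq : f.1 q ≠ 0) {v w : V}
    (h : q.1.level v < q.1.level w) : upperWeight f q ≤ meanLevel f w - meanLevel f v := by
  rw [meanLevel_sub, upperWeight, Finset.sum_filter]
  refine Finset.sum_le_sum fun p _ => ?_
  split_ifs with hqp
  · have hlt : (p.1.level v : ℕ) + 1 ≤ p.1.level w := le_iff_level_lt.1 hqp v w h
    have hlt' : (p.1.level v : ℝ) + 1 ≤ p.1.level w := by exact_mod_cast hlt
    exact le_mul_of_one_le_right (f.2.1 p) (by linarith)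
  · rcases eq_or_ne (f.1 p) 0 with hp | hp
    · simp [hp]
    · have hle : p.1.level v ≤ p.1.level w :=
        level_le_of_le_total (PosetRealization.le_total_of_ne_zero f hq hp) h
      exact mul_nonneg (f.2.1 p) (sub_nonneg.2 (by exact_mod_cast hle))

theorem le_upperWeight : f.1 q ≤ upperWeight f q := by
  classical
  exact Finset.single_le_sum (fun p _ => f.2.1 p) (by simp)

theorem meanLevel_lt (hq : f.1 q ≠ 0) {v w : V} (h : q.1.level v < q.1.level w) :
    meanLevel f v < meanLevel f w :=
  sub_pos.1 <| ((f.2.1 q).lt_of_ne' hq).trans_le <|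
    le_upperWeight.trans (upperWeight_le_meanLevel_sub hq h)

theorem level_le_of_meanLevel_le (hp : f.1 p ≠ 0) {v w : V} (h : meanLevel f v ≤ meanLevel f w) :
    p.1.level v ≤ p.1.level w :=
  not_lt.1 fun hlt => (meanLevel_lt hp hlt).not_ge h

theorem level_le_level_add_one_of_meanLevel (hp : f.1 p ≠ 0) {v w : V}
    (h : ∀ y, meanLevel f y ≤ meanLevel f v ∨ meanLevel f w ≤ meanLevel f y) :
    (p.1.level w : ℕ) ≤ p.1.level v + 1 := by
  by_contra! hlt
  obtain ⟨y, hy⟩ := p.1.surj ⟨p.1.level v + 1, hlt.trans (p.1.level w).2⟩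
  have hvy : p.1.level v < p.1.level y := by simp [Fin.lt_def, hy]
  have hyw : p.1.level y < p.1.level w := by simpa [Fin.lt_def, hy] using hlt
  rcases h y with h | h
  · exact (meanLevel_lt hp hvy).not_ge h
  · exact (meanLevel_lt hp hyw).not_ge h

theorem level_le_level_of_not_isCut (hp : f.1 p ≠ 0) {S : Set V} (hS : ¬p.1.IsCut S) {u z : V}
    (hu : ∀ v ∈ S, meanLevel f v ≤ meanLevel f u) (hz : ∀ v ∉ S, meanLevel f z ≤ meanLevel f v) :
    p.1.level z ≤ p.1.level u := by
  obtain ⟨a, ha, b, hb, hba⟩ := not_isCut_iff.1 hS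
  calc p.1.level z ≤ p.1.level b := level_le_of_meanLevel_le hp (hz b hb)
    _ ≤ p.1.level a := hba
    _ ≤ p.1.level u := level_le_of_meanLevel_le hp (hu a ha)

open Classical in
theorem exists_meanLevel_sub_le_sum_isCut [Finite V] {S : Set V} (hne : S.Nonempty)
    (hne' : Sᶜ.Nonempty) : ∃ u ∈ S, ∃ z ∉ S,
      meanLevel f z - meanLevel f u ≤ ∑ p : {L // Q L} with p.1.IsCut S, f.1 p := by
  obtain ⟨u, hu, hmax⟩ := Set.exists_max_image S (meanLevel f) S.toFinite hne
  obtain ⟨z, hz, hmin⟩ := Set.exists_min_image Sᶜ (meanLevel f) Sᶜ.toFinite hne'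
  have hadj : ∀ y, meanLevel f y ≤ meanLevel f u ∨ meanLevel f z ≤ meanLevel f y := fun y =>
    (Classical.em (y ∈ S)).imp (hmax y) (hmin y)
  refine ⟨u, hu, z, hz, ?_⟩
  rw [meanLevel_sub, Finset.sum_filter]
  refine Finset.sum_le_sum fun p _ => ?_
  rcases eq_or_ne (f.1 p) 0 with hp | hp
  · simp [hp]
  split_ifs with hcut
  · have hle : (p.1.level z : ℝ) ≤ p.1.level u + 1 := by
      exact_mod_cast level_le_level_add_one_of_meanLevel hp hadj
    exact mul_le_of_le_one_right (f.2.1 p) (by linarith)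
  · have hle : p.1.level z ≤ p.1.level u := level_le_level_of_not_isCut hp hcut hmax hmin
    exact mul_nonpos_of_nonneg_of_nonpos (f.2.1 p) (sub_nonpos.2 (by exact_mod_cast hle))

open Classical in
theorem sum_isCut_le_upperWeight_sub (hq : f.1 q ≠ 0) {S : Set V} (hS : ¬q.1.IsCut S) :
    ∑ p : {L // Q L} with p.1.IsCut S, f.1 p ≤ upperWeight f q - f.1 q := by
  rw [upperWeight, ← Finset.sum_erase_eq_sub (Finset.mem_filter.2 ⟨Finset.mem_univ q, le_rfl⟩),
    ← Finset.sum_filter_ne_zero]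
  refine Finset.sum_le_sum_of_subset_of_nonneg (fun p hp => ?_) fun p _ _ => f.2.1 p
  obtain ⟨hcut, hp⟩ : p.1.IsCut S ∧ f.1 p ≠ 0 := by simpa using hp
  have hpq : ¬p ≤ q := fun h => hS (hcut.mono h)
  have hqp : q ≤ p := (PosetRealization.le_total_of_ne_zero f hq hp).resolve_right hpq
  simpa [hqp] using fun h : p = q => hpq h.le

theorem exists_isClustering_meanLevel [Finite V] (hq : f.1 q ≠ 0) :
    ∃ t, q.1.IsClustering (meanLevel f) t := by
  have hpos : 0 < f.1 q := (f.2.1 q).lt_of_ne' hq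
  refine ⟨upperWeight f q - f.1 q / 2, fun u z huz => ?_, fun S hS => ?_⟩
  · linarith [upperWeight_le_meanLevel_sub hq huz]
  · by_contra hcut
    obtain ⟨a, ha, b, hb, -⟩ := not_isCut_iff.1 hcut
    obtain ⟨u, hu, z, hz, hle⟩ := exists_meanLevel_sub_le_sum_isCut (f := f) ⟨a, ha⟩ ⟨b, hb⟩
    linarith [hS u hu z hz, sum_isCut_le_upperWeight_sub hq hcut]

end MeanLevel

theorem contractibleSpace_realization_of_nonempty [Finite V] (R : V → V → Prop)
    [Nonempty {L : Levelization V // ∀ v w, R v w → L.level v < L.level w}] :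
    ContractibleSpace (PosetRealization
      {L : Levelization V // ∀ v w, R v w → L.level v < L.level w}) := by
  have : Fintype V := Fintype.ofFinite V
  have : Fintype {L : Levelization V // ∀ v w, R v w → L.level v < L.level w} :=
    Fintype.ofFinite _
  let C : Set (V → ℝ) := {x | ∀ v w, v < w ∨ R v w → x v < x w}
  have hCne : C.Nonempty := by
    obtain ⟨L, hL⟩ := ‹Nonempty {L : Levelization V // ∀ v w, R v w → L.level v < L.level w}›
    exact ⟨fun v => (L.level v : ℝ), fun v w h =>
      Nat.cast_lt.2 (Fin.lt_def.1 (h.elim (L.strict v w) (hL v w)))⟩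
  have : ContractibleSpace C := (convex_setOf_lt_of_rel _).contractibleSpace hCne
  have hmean : ∀ f : PosetRealization
      {L : Levelization V // ∀ v w, R v w → L.level v < L.level w}, meanLevel f ∈ C := by
    intro f v w h
    obtain ⟨p, hp⟩ := PosetRealization.exists_ne_zero f
    exact meanLevel_lt hp (h.elim (p.1.strict v w) (p.2 v w))
  refine PosetRealization.contractibleSpace_of_isOpen_cover
    (fun p => {x : C | ∃ t, p.1.IsClustering x.1 t})
    (fun p => p.1.isOpen_setOf_exists_isClustering.preimage continuous_subtype_val)
    (fun x => ?_) (fun x p hp q hq _ => ?_)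
    ⟨fun f => ⟨meanLevel f, hmean f⟩, continuous_meanLevel.subtype_mk _⟩
    fun f p hp => exists_isClustering_meanLevel hp
  · obtain ⟨L, hL⟩ := exists_level_lt_iff (x := x.1) fun v w h => x.2 v w (Or.inl h)
    exact ⟨⟨L, fun v w h => (hL v w).2 (x.2 v w (Or.inr h))⟩,
      exists_isClustering_of_level_lt_iff hL⟩
  · obtain ⟨s, hs⟩ := hp
    obtain ⟨t, ht⟩ := hq
    exact (le_total s t).symm.imp (ht.le_of_le hs) (hs.le_of_le ht)

end Levelization

theorem contractible_realization_levelizations_above_general {V : Type} [Preorder V] [Finite V]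
    {n : ℕ} (l : V → Fin n) (hmono : Monotone l) (hsurj : Function.Surjective l) :
    ContractibleSpace ↥(PosetRealization
      {L : Levelization V // ∃ φ : Fin L.m → Fin n, Monotone φ ∧ Function.Surjective φ ∧
        ∀ v, l v = φ (L.level v)}) := by
  have hstrict : (fun L : Levelization V => ∃ φ : Fin L.m → Fin n, Monotone φ ∧
      Function.Surjective φ ∧ ∀ v, l v = φ (L.level v)) =
      fun L => ∀ v w, l v < l w → L.level v < L.level w :=
    funext fun L => propext (L.exists_factorization_iff hsurj)
  rw [hstrict]
  have := nonempty_subtype.2 (Levelization.exists_level_lt_of_monotone hmono)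
  exact Levelization.contractibleSpace_realization_of_nonempty fun v w => l v < l w

/-- **Lemma 7.3.** Let `T` be a finite rooted tree with at least one internal vertex,
with poset of internal vertices `V` (a nonempty finite poset with least element whose
principal down-sets are chains), and let `T'` be obtained from `T` by contracting a set
of internal edges — encoded by the monotone idempotent deflationary map `k : V → V` with
convex fibers sending each internal vertex to the (representative of the) vertex of `T'`
it is merged into, so that the internal vertices of `T'` form the subposet
`Set.range k`.  Then, for any levelization `L'` of `T'`, the subposet of `X_T` of those
levelizations `L` of `T` with `(T, L) ≥ (T', L')` has contractible geometric
realization. -/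
theorem contractible_realization_levelizations_above (V : Type) [PartialOrder V]
    [Finite V] [Nonempty V]
    (hchain : ∀ v : V, IsChain (· ≤ ·) {u | u ≤ v})
    (hroot : ∃ rt : V, ∀ v, rt ≤ v)
    (k : V → V) (hmono : Monotone k) (hidem : ∀ v, k (k v) = k v)
    (hdefl : ∀ v, k v ≤ v)
    (hconvex : ∀ u v : V, k v ≤ u → u ≤ v → k u = k v)
    (L' : Levelization ↥(Set.range k)) :
    ContractibleSpace ↥(PosetRealization
      {L : Levelization V //
        ∃ φ : Fin L.m → Fin L'.m, Monotone φ ∧ Function.Surjective φ ∧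
          ∀ v : V, L'.level ⟨k v, Set.mem_range_self v⟩ = φ (L.level v)}) :=
  contractible_realization_levelizations_above_general
    (fun v => L'.level ⟨k v, Set.mem_range_self v⟩)
    (StrictMono.monotone (fun _ _ => L'.strict _ _) |>.comp fun _ _ h => hmono h)
    (L'.surj.comp Set.rangeFactorization_surjective)
end
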